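/- There exist positive constants c_star, C, c_a, c_b, c_c with the following property. Let n ≥ 2, θ ∈ (0, 1/2), and 0 < μ < c_a · min{θ n^{-1}, n^{-5/4}}. Let X₀ ∈ ℝ^{n×p} be a random matrix with i.i.d. BG(θ) entries, and suppose p ≥ (C/(μ²θ²)) n³ log(n/(μθ)). Then with probability at least 1 − c_b p^{-6}, all of the following hold simultaneously: (i) ∇²g(w; X₀) ⪰ (c_star θ/μ) I for all w with ‖w‖ ≤ μ/(4√2); (ii) wᵀ∇g(w; X₀)/‖w‖ ≥ c_star θ for all w with μ/(4√2) ≤ ‖w‖ ≤ 1/(20√5); (iii) wᵀ∇²g(w; X₀)w/‖w‖² ≤ −c_star θ for all w with 1/(20√5) ≤ ‖w‖ ≤ √((4n−1)/(4n)); and (iv) the function w ↦ g(w; X₀) has exactly one local minimizer w_star over the open set Γ = {w : ‖w‖ < √((4n−1)/(4n))}, and this minimizer satisfies ‖w_star‖ ≤ min{(c_c μ/θ)√(n log p / p), μ/16}. -/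

import Mathlib

open MeasureTheory ProbabilityTheory Real Matrix
open scoped RealInnerProductSpace ENNReal NNReal

noncomputable section

/-- The Bernoulli–Gaussian law `BG(θ)`: with probability `θ` a standard Gaussian,
with probability `1-θ` a point mass at `0`. -/
def bg (θ : ℝ) : Measure ℝ :=
  θ.toNNReal • gaussianReal 0 1 + (1 - θ).toNNReal • Measure.dirac 0

instance bg.instIsFiniteMeasure (θ : ℝ) : IsFiniteMeasure (bg θ) := by
  unfold bg; infer_instance

/-- Law of an `n × p` matrix with i.i.d. `BG(θ)` entries. -/
def bgMatrix (θ : ℝ) (n p : ℕ) : Measure (Fin n → Fin p → ℝ) :=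
  Measure.pi fun _ => Measure.pi fun _ => bg θ

/-- Law of a vector in `ℝ^n` with i.i.d. `BG(θ)` entries. -/
def bgVec (θ : ℝ) (n : ℕ) : Measure (Fin n → ℝ) :=
  Measure.pi fun _ => bg θ

/-- The smooth sparsity surrogate `h_μ(z) = μ log cosh (z/μ)`. -/
def hmu (μ z : ℝ) : ℝ := μ * Real.log (Real.cosh (z / μ))

/-- Reparametrization `q(w) = (w, √(1-‖w‖²))` with `w` in the unit ball of `ℝ^{n-1}`. -/
def qmap (n : ℕ) (w : EuclideanSpace ℝ (Fin (n - 1))) : Fin n → ℝ :=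
  fun i => if h : (i : ℕ) < n - 1 then w ⟨i, h⟩ else Real.sqrt (1 - ‖w‖ ^ 2)

/-- `f(q; Y) = (1/p) ∑ₖ h_μ(qᵀ yₖ)`. -/
def ffun (n p : ℕ) (μ : ℝ) (Y : Matrix (Fin n) (Fin p) ℝ)
    (q : EuclideanSpace ℝ (Fin n)) : ℝ :=
  (p : ℝ)⁻¹ * ∑ k : Fin p, hmu μ (∑ i : Fin n, q i * Y i k)

/-- `g(w; Y) = f(q(w); Y)`. -/
def gfun (n p : ℕ) (μ : ℝ) (Y : Matrix (Fin n) (Fin p) ℝ)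
    (w : EuclideanSpace ℝ (Fin (n - 1))) : ℝ :=
  (p : ℝ)⁻¹ * ∑ k : Fin p, hmu μ (∑ i : Fin n, qmap n w i * Y i k)

/-- Gradient `∇g(w; Y)` in `w`. -/
def gradg (n p : ℕ) (μ : ℝ) (Y : Matrix (Fin n) (Fin p) ℝ)
    (w : EuclideanSpace ℝ (Fin (n - 1))) : EuclideanSpace ℝ (Fin (n - 1)) :=
  gradient (gfun n p μ Y) w

/-- Hessian `∇²g(w; Y)` in `w`, as a continuous linear map. -/
def hessg (n p : ℕ) (μ : ℝ) (Y : Matrix (Fin n) (Fin p) ℝ)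
    (w : EuclideanSpace ℝ (Fin (n - 1))) :
    EuclideanSpace ℝ (Fin (n - 1)) →L[ℝ] EuclideanSpace ℝ (Fin (n - 1)) :=
  fderiv ℝ (gradg n p μ Y) w

/-- The set `Γ = {w : ‖w‖ < √((4n-1)/(4n))}`. -/
def GammaSet (n : ℕ) : Set (EuclideanSpace ℝ (Fin (n - 1))) :=
  {w | ‖w‖ < Real.sqrt ((4 * (n : ℝ) - 1) / (4 * n))}

/-- Spectral (`ℓ²→ℓ²` operator) norm of а matrix. -/
def specNorm {m k : ℕ} (M : Matrix (Fin m) (Fin k) ℝ) : ℝ :=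
  ‖LinearMap.toContinuousLinearMap (Matrix.toEuclideanLin M)‖

/-- Largest magnitude of an entry of a matrix. -/
def Minf {m k : ℕ} (M : Matrix (Fin m) (Fin k) ℝ) : ℝ := ⨆ i, ⨆ j, |M i j|

/-- Condition number: ratio of largest to smallest singular value. -/
def kappa {n : ℕ} (s : Fin n → ℝ) : ℝ := (⨆ i, s i) / (⨅ i, s i)

/-- Signed standard basis vectors `{± e_i}` of `ℝ^n`. -/
def SignedBasis (n : ℕ) : Set (EuclideanSpace ℝ (Fin n)) :=
  {b | ∃ i : Fin n, b = EuclideanSpace.single i (1 : ℝ) ∨ b = -EuclideanSpace.single i (1 : ℝ)}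

/-- Set of local minimizers of `f(·; Y)` over the unit sphere `S^{n-1}`. -/
def LocalMins (n p : ℕ) (μ : ℝ) (Y : Matrix (Fin n) (Fin p) ℝ) :
    Set (EuclideanSpace ℝ (Fin n)) :=
  {q | q ∈ Metric.sphere (0 : EuclideanSpace ℝ (Fin n)) 1 ∧
       IsLocalMinOn (ffun n p μ Y) (Metric.sphere (0 : EuclideanSpace ℝ (Fin n)) 1) q}

/-- Expected objective `E_x[h_μ(q(w)ᵀ x)]` for `x` with i.i.d. `BG(θ)` entries. -/
def Gexp (n : ℕ) (θ μ : ℝ) (w : EuclideanSpace ℝ (Fin (n - 1))) : ℝ :=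
  ∫ x, hmu μ (∑ i : Fin n, qmap n w i * x i) ∂(bgVec θ n)

/-! ### Hyperbolic tangent -/

lemma hasDerivAt_tanh (x : ℝ) : HasDerivAt Real.tanh (1 - Real.tanh x ^ 2) x := by
  have h : Real.tanh = fun y => Real.sinh y / Real.cosh y :=
    funext fun y => Real.tanh_eq_sinh_div_cosh y
  have hc : Real.cosh x ≠ 0 := (Real.cosh_pos x).ne'
  rw [h]
  refine ((Real.hasDerivAt_sinh x).div (Real.hasDerivAt_cosh x) hc).congr_deriv ?_
  field_simp

lemma continuous_tanh : Continuous Real.tanh :=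
  continuous_iff_continuousAt.2 fun x => (hasDerivAt_tanh x).continuousAt

lemma one_sub_tanh_sq_nonneg (x : ℝ) : 0 ≤ 1 - Real.tanh x ^ 2 := by
  linarith [Real.tanh_sq_lt_one x]

lemma monotone_tanh : Monotone Real.tanh := by
  refine monotone_of_deriv_nonneg (fun x => (hasDerivAt_tanh x).differentiableAt) fun x => ?_
  rw [(hasDerivAt_tanh x).deriv]
  exact one_sub_tanh_sq_nonneg x

lemma abs_tanh_le_one (x : ℝ) : |Real.tanh x| ≤ 1 := (Real.abs_tanh_lt_one x).le

lemma abs_tanh_sub_le (a b : ℝ) : |Real.tanh a - Real.tanh b| ≤ |a - b| := by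
  have h := Convex.norm_image_sub_le_of_norm_hasDerivWithin_le (f := Real.tanh)
    (f' := fun x => 1 - Real.tanh x ^ 2) (C := 1) (s := Set.univ) (x := b) (y := a)
    (fun x _ => (hasDerivAt_tanh x).hasDerivWithinAt)
    (fun x _ => by
      rw [Real.norm_eq_abs, abs_of_nonneg (one_sub_tanh_sq_nonneg x)]
      linarith [sq_nonneg (Real.tanh x)]) convex_univ trivial trivial
  simpa using h

lemma tanh_nonneg {x : ℝ} (hx : 0 ≤ x) : 0 ≤ Real.tanh x := by
  simpa using monotone_tanh hx

lemma mul_tanh_nonneg (x : ℝ) : 0 ≤ x * Real.tanh x := by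
  rcases le_total 0 x with h | h
  · exact mul_nonneg h (tanh_nonneg h)
  · have := tanh_nonneg (neg_nonneg.2 h)
    rw [Real.tanh_neg] at this
    nlinarith

lemma tanh_sq_le (x : ℝ) : Real.tanh x ^ 2 ≤ x ^ 2 := by
  have := abs_tanh_sub_le x 0
  simp only [Real.tanh_zero, sub_zero] at this
  exact sq_le_sq.2 this

/-- `s² sech² s ≤ 1`. -/
lemma sq_mul_one_sub_tanh_sq_le (s : ℝ) : s ^ 2 * (1 - Real.tanh s ^ 2) ≤ 1 := by
  have hc : 0 < Real.cosh s := Real.cosh_pos s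
  have h1 : s ^ 2 ≤ Real.cosh s ^ 2 := by
    have h := Real.self_le_sinh_iff.2 (abs_nonneg s)
    have : |s| ≤ Real.cosh s := by
      rcases abs_cases s with ⟨h1, _⟩ | ⟨h1, _⟩ <;> rw [h1] at h ⊢
      · exact h.trans (Real.sinh_lt_cosh s).le
      · rw [← Real.cosh_neg]; exact h.trans (Real.sinh_lt_cosh _).le
    exact sq_le_sq.2 (this.trans (le_abs_self _))
  have h2 : 1 - Real.tanh s ^ 2 = 1 / Real.cosh s ^ 2 := by
    rw [Real.tanh_eq_sinh_div_cosh]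
    field_simp
    linarith [Real.cosh_sq s]
  rw [h2, mul_one_div, div_le_one (by positivity)]
  exact h1

lemma abs_tanh_lower {z : ℝ} : |z| ≤ |Real.tanh z| * Real.sqrt (1 + z ^ 2) := by
  have hc : 0 < Real.cosh z := Real.cosh_pos z
  have h1 : z ^ 2 ≤ Real.sinh z ^ 2 := by
    have h := Real.self_le_sinh_iff.2 (abs_nonneg z)
    rw [← Real.abs_sinh] at h
    exact sq_le_sq.2 h
  rw [← abs_of_nonneg (Real.sqrt_nonneg (1 + z ^ 2)), ← abs_mul]
  refine sq_le_sq.1 ?_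
  rw [mul_pow, Real.sq_sqrt (by positivity), Real.tanh_eq_sinh_div_cosh, div_pow, div_mul_eq_mul_div,
    le_div_iff₀ (by positivity)]
  nlinarith [Real.cosh_sq z]

/-- A quartic lower bound for `z tanh z`, tight at `z² = 3` up to convexity. -/
lemma mul_tanh_lower (z : ℝ) : 11 / 16 * z ^ 2 - z ^ 4 / 16 ≤ z * Real.tanh z := by
  have h1 : z * Real.tanh z = |z| * |Real.tanh z| := by
    rw [← abs_mul, abs_of_nonneg (mul_tanh_nonneg z)]
  have h2 := abs_tanh_lower (z := z)
  set s := Real.sqrt (1 + z ^ 2) with hs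
  have hs2 : s ^ 2 = 1 + z ^ 2 := Real.sq_sqrt (by positivity)
  have hs1 : 1 ≤ s := by
    rw [hs]; exact Real.one_le_sqrt.2 (by nlinarith [sq_nonneg z])
  have hz : |z| ^ 2 = s ^ 2 - 1 := by rw [sq_abs]; linarith
  have h3 : z ^ 2 ≤ (z * Real.tanh z) * s := by
    rw [h1, ← sq_abs]
    nlinarith [abs_nonneg z]
  have h4 : (11 / 16 * z ^ 2 - z ^ 4 / 16) * s ≤ z ^ 2 := by
    have : 0 ≤ (s - 2) ^ 2 * (s + 4) := by positivity
    have h5 : z ^ 4 = z ^ 2 * (s ^ 2 - 1) := by rw [hs2]; ring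
    rw [h5]
    have : (11 / 16 * z ^ 2 - z ^ 2 * (s ^ 2 - 1) / 16) * s - z ^ 2
        = - (z ^ 2 * ((s - 2) ^ 2 * (s + 4)) / 16) := by ring
    nlinarith [sq_nonneg z, mul_nonneg (sq_nonneg z) ‹0 ≤ (s - 2) ^ 2 * (s + 4)›]
  have : (11 / 16 * z ^ 2 - z ^ 4 / 16) * s ≤ (z * Real.tanh z) * s := h4.trans h3
  exact le_of_mul_le_mul_right this (by linarith)

/-- Concavity of `tanh` on the positive half line, in the form used for rescaling. -/
lemma mul_tanh_le_tanh_mul {c s : ℝ} (hc0 : 0 ≤ c) (hc1 : c ≤ 1) (hs : 0 ≤ s) :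
    c * Real.tanh s ≤ Real.tanh (c * s) := by
  let f : ℝ → ℝ := fun s => Real.tanh (c * s) - c * Real.tanh s
  have hd : ∀ s, HasDerivAt f ((1 - Real.tanh (c * s) ^ 2) * c - c * (1 - Real.tanh s ^ 2)) s :=
    fun s => ((hasDerivAt_tanh (c * s)).comp s (by simpa using (hasDerivAt_id s).const_mul c)).sub
      ((hasDerivAt_tanh s).const_mul c)
  have hm : MonotoneOn f (Set.Ici 0) := by
    refine monotoneOn_of_deriv_nonneg (convex_Ici 0)
      (fun s _ => (hd s).continuousAt.continuousWithinAt)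
      (fun s _ => (hd s).differentiableAt.differentiableWithinAt) fun s hs => ?_
    rw [interior_Ici] at hs
    have hs' : 0 ≤ s := le_of_lt hs
    rw [(hd s).deriv]
    have h1 : Real.tanh (c * s) ≤ Real.tanh s := monotone_tanh (by nlinarith)
    have h2 : 0 ≤ Real.tanh (c * s) := tanh_nonneg (by positivity)
    have h3 : Real.tanh (c * s) ^ 2 ≤ Real.tanh s ^ 2 := by gcongr
    nlinarith
  have := hm (Set.mem_Ici.2 le_rfl) (Set.mem_Ici.2 hs) hs
  simp only [f, mul_zero, Real.tanh_zero, sub_zero] at this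
  linarith

lemma hasDerivAt_hmu {μ : ℝ} (hμ : μ ≠ 0) (z : ℝ) :
    HasDerivAt (hmu μ) (Real.tanh (z / μ)) z := by
  have hc : Real.cosh (z / μ) ≠ 0 := (Real.cosh_pos _).ne'
  have h1 : HasDerivAt (fun z : ℝ => z / μ) (1 / μ) z := (hasDerivAt_id z).div_const μ
  refine (((h1.cosh).log hc).const_mul μ).congr_deriv ?_
  rw [Real.tanh_eq_sinh_div_cosh]
  field_simp

/-! ### One summand of the objective and its first two derivatives -/

section Summand

variable {E : Type*} [NormedAddCommGroup E]

/-- The last coordinate of `q(w)`. -/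
def qlast (w : E) : ℝ := Real.sqrt (1 - ‖w‖ ^ 2)

lemma qlast_pos {w : E} (hw : ‖w‖ < 1) : 0 < qlast w :=
  Real.sqrt_pos.2 (by nlinarith [norm_nonneg w])

lemma qlast_sq {w : E} (hw : ‖w‖ < 1) : qlast w ^ 2 = 1 - ‖w‖ ^ 2 :=
  Real.sq_sqrt (by nlinarith [norm_nonneg w])

variable [InnerProductSpace ℝ E]

/-- The value `q(w)ᵀ x` for `x = (a, b)`. -/
def zval (a : E) (b : ℝ) (w : E) : ℝ := ⟪w, a⟫ + qlast w * b

/-- The gradient in `w` of `h_μ(q(w)ᵀ x)` for `x = (a, b)`. -/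
def gradTerm (μ : ℝ) (a : E) (b : ℝ) (w : E) : E :=
  Real.tanh (zval a b w / μ) • (a - (b / qlast w) • w)

/-- The first directional derivative of `h_μ(q(w)ᵀ x)` in direction `v`. -/
def dTerm (μ : ℝ) (a : E) (b : ℝ) (w v : E) : ℝ :=
  Real.tanh (zval a b w / μ) * (⟪v, a⟫ - b * (⟪w, v⟫ / qlast w))

/-- The second directional derivative of `h_μ(q(w)ᵀ x)` in direction `v`. -/
def hTerm (μ : ℝ) (a : E) (b : ℝ) (w v : E) : ℝ :=
  μ⁻¹ * ((1 - Real.tanh (zval a b w / μ) ^ 2) * (⟪v, a⟫ - b * (⟪w, v⟫ / qlast w)) ^ 2)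
    - Real.tanh (zval a b w / μ) * (b * (‖v‖ ^ 2 / qlast w + ⟪w, v⟫ ^ 2 / qlast w ^ 3))

lemma hasFDerivAt_qlast {w : E} (hw : ‖w‖ < 1) :
    HasFDerivAt (qlast : E → ℝ) (-(qlast w)⁻¹ • innerSL ℝ w) w := by
  have h1 : HasFDerivAt (fun w : E => 1 - ‖w‖ ^ 2) (-(2 • innerSL ℝ w)) w :=
    ((hasStrictFDerivAt_norm_sq w).hasFDerivAt).const_sub 1
  have h2 := h1.sqrt (by nlinarith [norm_nonneg w] : (1 - ‖w‖ ^ 2) ≠ 0)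
  refine h2.congr_fderiv ?_
  ext v
  have := (qlast_pos hw).ne'
  simp only [qlast] at this ⊢
  simp
  field_simp

lemma hasFDerivAt_zval (a : E) (b : ℝ) {w : E} (hw : ‖w‖ < 1) :
    HasFDerivAt (zval a b) (innerSL ℝ a - (b / qlast w) • innerSL ℝ w) w := by
  have h1 : HasFDerivAt (fun w : E => ⟪w, a⟫) (innerSL ℝ a) w := by
    have := (innerSL ℝ a).hasFDerivAt (x := w)
    refine this.congr_of_eventuallyEq (Filter.Eventually.of_forall fun u => ?_)
    simp [real_inner_comm]
  refine (h1.add ((hasFDerivAt_qlast hw).mul_const b)).congr_fderiv ?_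
  ext v
  simp
  ring

lemma hasFDerivAt_gradTerm {μ : ℝ} (a : E) (b : ℝ) {w : E} (hw : ‖w‖ < 1) :
    ∃ L : E →L[ℝ] E, HasFDerivAt (gradTerm μ a b) L w ∧ ∀ v, ⟪L v, v⟫ = hTerm μ a b w v := by
  have hq := (qlast_pos hw).ne'
  have h1 := (hasFDerivAt_zval a b hw).mul_const μ⁻¹
  have h2 := (hasDerivAt_tanh (zval a b w * μ⁻¹)).comp_hasFDerivAt w h1
  have h3 := ((hasDerivAt_inv hq).comp_hasFDerivAt w (hasFDerivAt_qlast hw)).const_mul b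
  have h4 := (h3.smul (hasFDerivAt_id w)).const_sub a
  refine ⟨_, h2.smul h4, fun v => ?_⟩
  simp only [Function.comp_def, hTerm, div_eq_mul_inv]
  simp [inner_add_left, inner_sub_left, inner_smul_left, real_inner_comm]
  generalize Real.tanh (zval a b w * μ⁻¹) = T
  field_simp
  ring

lemma inner_gradTerm (μ : ℝ) (a : E) (b : ℝ) (w v : E) :
    ⟪v, gradTerm μ a b w⟫ = dTerm μ a b w v := by
  simp only [gradTerm, dTerm, inner_smul_right, inner_sub_right, real_inner_comm v w]
  ring

lemma hasGradientAt_hmu_zval [CompleteSpace E] {μ : ℝ} (hμ : μ ≠ 0) (a : E) (b : ℝ) {w : E}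
    (hw : ‖w‖ < 1) : HasGradientAt (fun w => hmu μ (zval a b w)) (gradTerm μ a b w) w := by
  rw [hasGradientAt_iff_hasFDerivAt]
  refine ((hasDerivAt_hmu hμ _).comp_hasFDerivAt w (hasFDerivAt_zval a b hw)).congr_fderiv ?_
  ext v
  simp [gradTerm]

end Summand

/-! ### Derivatives of the empirical objective -/

/-- The first `m` coordinates of a vector in `ℝ^{m+1}`. -/
def headVec {m : ℕ} (x : Fin (m + 1) → ℝ) : EuclideanSpace ℝ (Fin m) :=
  WithLp.toLp 2 fun i => x i.castSucc

section Empirical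

variable {m p : ℕ} (μ : ℝ) (X : Fin (m + 1) → Fin p → ℝ)

lemma gfun_eq (w : EuclideanSpace ℝ (Fin m)) :
    gfun (m + 1) p μ (Matrix.of X) w = (p : ℝ)⁻¹ * ∑ k : Fin p,
      hmu μ (zval (headVec fun i => X i k) (X (Fin.last m) k) w) := by
  unfold gfun
  congr 1
  refine Finset.sum_congr rfl fun k _ => ?_
  congr 1
  rw [Fin.sum_univ_castSucc]
  simp [qmap, zval, qlast, headVec, PiLp.inner_apply, mul_comm]

variable {μ}

lemma hasGradientAt_gfun (hμ : μ ≠ 0) {w : EuclideanSpace ℝ (Fin m)} (hw : ‖w‖ < 1) :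
    HasGradientAt (gfun (m + 1) p μ (Matrix.of X) : EuclideanSpace ℝ (Fin m) → ℝ)
      ((p : ℝ)⁻¹ • ∑ k : Fin p, gradTerm μ (headVec fun i => X i k) (X (Fin.last m) k) w) w := by
  have h : (gfun (m + 1) p μ (Matrix.of X) : EuclideanSpace ℝ (Fin m) → ℝ) = fun w =>
      (p : ℝ)⁻¹ * ∑ k : Fin p, hmu μ (zval (headVec fun i => X i k) (X (Fin.last m) k) w) :=
    funext (gfun_eq μ X)
  rw [h, hasGradientAt_iff_hasFDerivAt, map_smul, map_sum]
  exact (HasFDerivAt.fun_sum fun k _ => (hasGradientAt_iff_hasFDerivAt.1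
    (hasGradientAt_hmu_zval hμ _ _ hw))).const_mul _

lemma gradg_eq (hμ : μ ≠ 0) {w : EuclideanSpace ℝ (Fin m)} (hw : ‖w‖ < 1) :
    gradg (m + 1) p μ (Matrix.of X) w =
      (p : ℝ)⁻¹ • ∑ k : Fin p, gradTerm μ (headVec fun i => X i k) (X (Fin.last m) k) w :=
  (hasGradientAt_gfun X hμ hw).gradient

lemma inner_gradg (hμ : μ ≠ 0) {w : EuclideanSpace ℝ (Fin m)} (hw : ‖w‖ < 1)
    (v : EuclideanSpace ℝ (Fin m)) :
    ⟪v, (gradg (m + 1) p μ (Matrix.of X) w : EuclideanSpace ℝ (Fin m))⟫ =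
      (p : ℝ)⁻¹ * ∑ k : Fin p, dTerm μ (headVec fun i => X i k) (X (Fin.last m) k) w v := by
  rw [gradg_eq X hμ hw, inner_smul_right, inner_sum]
  simp [inner_gradTerm]

lemma hasFDerivAt_gradg (hμ : μ ≠ 0) {w : EuclideanSpace ℝ (Fin m)} (hw : ‖w‖ < 1) :
    HasFDerivAt (gradg (m + 1) p μ (Matrix.of X) :
        EuclideanSpace ℝ (Fin m) → EuclideanSpace ℝ (Fin m))
      (hessg (m + 1) p μ (Matrix.of X) w) w ∧
    ∀ v : EuclideanSpace ℝ (Fin m),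
      ⟪(hessg (m + 1) p μ (Matrix.of X) w v : EuclideanSpace ℝ (Fin m)), v⟫ =
      (p : ℝ)⁻¹ * ∑ k : Fin p, hTerm μ (headVec fun i => X i k) (X (Fin.last m) k) w v := by
  choose L hL hLv using fun k : Fin p => hasFDerivAt_gradTerm (μ := μ)
    (headVec fun i => X i k) (X (Fin.last m) k) hw
  have h1 := (HasFDerivAt.fun_sum fun k (_ : k ∈ Finset.univ) => hL k).const_smul (p : ℝ)⁻¹
  have h2 : HasFDerivAt (gradg (m + 1) p μ (Matrix.of X) :
        EuclideanSpace ℝ (Fin m) → EuclideanSpace ℝ (Fin m)) ((p : ℝ)⁻¹ • ∑ k, L k) w := by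
    refine h1.congr_of_eventuallyEq ?_
    have : ∀ᶠ u in nhds w, ‖u‖ < 1 := continuous_norm.continuousAt.eventually_lt_const hw
    filter_upwards [this] with u hu
    exact gradg_eq X hμ hu
  have h3 : hessg (m + 1) p μ (Matrix.of X) w = (p : ℝ)⁻¹ • ∑ k, L k := h2.fderiv
  refine ⟨h3 ▸ h2, fun v => ?_⟩
  rw [h3]
  simp [inner_smul_left, sum_inner, hLv]

end Empirical

/-! ### From landscape estimates to a unique local minimizer -/

section Landscape

variable {E : Type*} [NormedAddCommGroup E] [InnerProductSpace ℝ E]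
  {G : E → E} {H : E → E →L[ℝ] E} {κ ρ₁ ρ₂ ρ₃ : ℝ}

lemma hasDerivAt_inner_along_line {w v : E} (hG : HasFDerivAt G (H w) w) (t : ℝ) {u : E}
    (hu : u + t • v = w) :
    HasDerivAt (fun s : ℝ => ⟪v, G (u + s • v)⟫) ⟪H w v, v⟫ t := by
  have h1 : HasDerivAt (fun s : ℝ => u + s • v) v t := by
    simpa using ((hasDerivAt_id t).smul_const v).const_add u
  subst hu
  have h2 := hG.comp_hasDerivAt t h1
  have h3 := (innerSL ℝ v).hasFDerivAt.comp_hasDerivAt t h2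
  simpa [real_inner_comm, Function.comp_def] using h3

/-- Strong monotonicity of the gradient along a segment of the strongly convex region. -/
lemma strong_monotone (hρ : ρ₁ < 1) (hG : ∀ w, ‖w‖ < 1 → HasFDerivAt G (H w) w)
    (hconv : ∀ w, ‖w‖ ≤ ρ₁ → ∀ v, κ * ‖v‖ ^ 2 ≤ ⟪H w v, v⟫) {u w : E} (hu : ‖u‖ ≤ ρ₁)
    (hw : ‖w‖ ≤ ρ₁) : κ * ‖w - u‖ ^ 2 ≤ ⟪w - u, G w - G u⟫ := by
  have hseg : ∀ t ∈ Set.Icc (0 : ℝ) 1, ‖u + t • (w - u)‖ ≤ ρ₁ := by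
    intro t ht
    have : u + t • (w - u) ∈ Metric.closedBall (0 : E) ρ₁ :=
      (convex_closedBall (0 : E) ρ₁).add_smul_sub_mem (by simpa using hu) (by simpa using hw) ht
    simpa using this
  have hd : ∀ t ∈ Set.Icc (0 : ℝ) 1, HasDerivAt (fun s : ℝ => ⟪w - u, G (u + s • (w - u))⟫)
      ⟪H (u + t • (w - u)) (w - u), w - u⟫ t := fun t ht =>
    hasDerivAt_inner_along_line (hG _ ((hseg t ht).trans_lt hρ)) t rfl
  obtain ⟨ξ, hξ, h⟩ := exists_hasDerivAt_eq_slope _ _ (zero_lt_one (α := ℝ))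
    (fun t ht => (hd t ht).continuousAt.continuousWithinAt)
    (fun t ht => hd t (Set.Ioo_subset_Icc_self ht))
  have h1 := hconv _ (hseg ξ (Set.Ioo_subset_Icc_self hξ)) (w - u)
  rw [h] at h1
  simpa [inner_sub_right] using h1

variable [CompleteSpace E] {g : E → ℝ}

lemma hasDerivAt_along_line {w v : E} (hg : HasGradientAt g (G w) w) (t : ℝ) {u : E}
    (hu : u + t • v = w) : HasDerivAt (fun s : ℝ => g (u + s • v)) ⟪v, G w⟫ t := by
  have h1 : HasDerivAt (fun s : ℝ => u + s • v) v t := by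
    simpa using ((hasDerivAt_id t).smul_const v).const_add u
  subst hu
  have := (hasGradientAt_iff_hasFDerivAt.1 hg).comp_hasDerivAt t h1
  simpa [real_inner_comm, Function.comp_def] using this

/-- A point with negative curvature along some direction is not a local minimizer. -/
lemma not_isLocalMin_of_neg_curvature {w v : E} (hg : ∀ᶠ u in nhds w, HasGradientAt g (G u) u)
    (hG : HasFDerivAt G (H w) w) (hneg : ⟪H w v, v⟫ < 0) : ¬ IsLocalMin g w := by
  intro hmin
  let f : ℝ → ℝ := fun s => g (w + s • v)
  have hcont : Filter.Tendsto (fun s : ℝ => w + s • v) (nhds 0) (nhds w) := by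
    have : Continuous fun s : ℝ => w + s • v := by fun_prop
    simpa using this.tendsto 0
  have hderiv : ∀ᶠ s in nhds (0 : ℝ), HasDerivAt f ⟪v, G (w + s • v)⟫ s := by
    filter_upwards [hcont.eventually hg] with s hs
    exact hasDerivAt_along_line hs s rfl
  have hfmin : IsLocalMin f 0 := by
    have := hcont.eventually hmin
    filter_upwards [this] with s hs
    simpa [f] using hs
  have hd2 : HasDerivAt (deriv f) ⟪H w v, v⟫ 0 := by
    refine (hasDerivAt_inner_along_line hG 0 (u := w) (by simp)).congr_of_eventuallyEq ?_
    filter_upwards [hderiv] with s hs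
    exact hs.deriv
  have hd0 : deriv f 0 = 0 := hfmin.deriv_eq_zero
  have hnf : IsLocalMin (fun s => -f s) 0 := by
    refine isLocalMin_of_deriv_deriv_pos ?_ ?_ ?_
    · have h : deriv (fun s => -f s) = fun s => -deriv f s := by ext s; exact deriv.fun_neg
      rw [h, deriv.fun_neg, hd2.deriv]
      linarith
    · rw [deriv.fun_neg, hd0, neg_zero]
    · exact hderiv.self_of_nhds.continuousAt.neg
  have hconst : f =ᶠ[nhds 0] fun _ => f 0 := by
    filter_upwards [hfmin, hnf] with s h1 h2
    linarith
  have h0 : deriv f =ᶠ[nhds 0] fun _ => 0 := by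
    have := hconst.deriv
    simpa using this
  have := (hd2.congr_of_eventuallyEq h0.symm).unique (hasDerivAt_const 0 (0 : ℝ))
  linarith

lemma gradient_eq_zero_of_isLocalMin {w : E} (hg : HasGradientAt g (G w) w)
    (hmin : IsLocalMin g w) : G w = 0 := by
  have := hmin.hasFDerivAt_eq_zero (hasGradientAt_iff_hasFDerivAt.1 hg)
  simpa using this

theorem exists_unique_localMin [FiniteDimensional ℝ E] (hκ : 0 < κ) (hρ₁ : 0 < ρ₁)
    (h12 : ρ₁ ≤ ρ₂) (h23 : ρ₂ < ρ₃) (hρ₃ : ρ₃ < 1)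
    (hg : ∀ w, ‖w‖ < 1 → HasGradientAt g (G w) w)
    (hG : ∀ w, ‖w‖ < 1 → HasFDerivAt G (H w) w)
    (hconv : ∀ w, ‖w‖ ≤ ρ₁ → ∀ v, κ * ‖v‖ ^ 2 ≤ ⟪H w v, v⟫)
    (hgrad : ∀ w, ρ₁ ≤ ‖w‖ → ‖w‖ ≤ ρ₂ → 0 < ⟪w, G w⟫)
    (hcurv : ∀ w, ρ₂ ≤ ‖w‖ → ‖w‖ ≤ ρ₃ → ⟪H w w, w⟫ < 0) :
    ∃ w, ‖w‖ < ρ₃ ∧ IsLocalMinOn g {w | ‖w‖ < ρ₃} w ∧ ‖w‖ ≤ ‖G 0‖ / κ ∧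
      ∀ w', ‖w'‖ < ρ₃ → IsLocalMinOn g {w | ‖w‖ < ρ₃} w' → w' = w := by
  have hopen : IsOpen {w : E | ‖w‖ < ρ₃} := isOpen_lt continuous_norm continuous_const
  obtain ⟨w, hwball, hwmin⟩ := (isCompact_closedBall (0 : E) ρ₁).exists_isMinOn
    ⟨0, by simp [hρ₁.le]⟩
    (fun w hw => (hasGradientAt_iff_hasFDerivAt.1 (hg w (by
      have : ‖w‖ ≤ ρ₁ := by simpa using hw
      linarith))).continuousAt.continuousWithinAt)
  have hwρ : ‖w‖ ≤ ρ₁ := by simpa using hwball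
  have hwlt : ‖w‖ < ρ₁ := by
    refine lt_of_le_of_ne hwρ fun heq => ?_
    have hpos := hgrad w heq.ge (by linarith)
    have hd := hasDerivAt_along_line (v := w) (hg w (by linarith)) 0 (u := w) (by simp)
    have hloc : ∀ᶠ s in nhdsWithin (0 : ℝ) (Set.Iio 0), 0 ≤ g (w + s • w) - g w := by
      have h1 : ∀ᶠ s in nhdsWithin (0 : ℝ) (Set.Iio 0), s ∈ Set.Ioo (-1 : ℝ) 0 :=
        Ioo_mem_nhdsLT (by norm_num)
      filter_upwards [h1] with s hs
      have : w + s • w ∈ Metric.closedBall (0 : E) ρ₁ := by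
        have h2 : w + s • w = (1 + s) • w := by rw [add_smul, one_smul]
        rw [h2, mem_closedBall_zero_iff, norm_smul, Real.norm_eq_abs,
          abs_of_pos (by linarith [hs.1])]
        nlinarith [hs.2, norm_nonneg w]
      exact sub_nonneg.2 (hwmin this)
    have hlim := (hasDerivAt_iff_tendsto_slope.1 hd).mono_left
      (nhdsWithin_mono (0 : ℝ) (show Set.Iio (0 : ℝ) ⊆ {0}ᶜ from fun s hs => ne_of_lt hs))
    have hle : ⟪w, G w⟫ ≤ 0 := by
      refine le_of_tendsto hlim ?_
      filter_upwards [hloc, self_mem_nhdsWithin] with s hs hs0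
      rw [slope_def_field]
      simp only [zero_smul, add_zero, sub_zero]
      exact div_nonpos_of_nonneg_of_nonpos hs (le_of_lt hs0)
    linarith
  have hwloc : IsLocalMin g w :=
    hwmin.isLocalMin (Metric.closedBall_mem_nhds_of_mem (by simpa using hwlt))
  have hGw : G w = 0 := gradient_eq_zero_of_isLocalMin (hg w (by linarith)) hwloc
  refine ⟨w, by linarith, hwloc.on _, ?_, fun w' hw' hmin' => ?_⟩
  · have h := strong_monotone (u := 0) (by linarith) hG hconv (by simp [hρ₁.le]) hwρ
    rw [hGw] at h
    simp only [sub_zero, zero_sub, inner_neg_right] at h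
    have h2 : -⟪w, G 0⟫ ≤ ‖w‖ * ‖G 0‖ := (neg_le_abs _).trans (abs_real_inner_le_norm _ _)
    rw [le_div_iff₀ hκ]
    rcases (norm_nonneg w).eq_or_lt with h0 | h0
    · rw [← h0]; simp
    · nlinarith
  · have hloc' : IsLocalMin g w' := hmin'.isLocalMin (hopen.mem_nhds hw')
    have hG' : G w' = 0 := gradient_eq_zero_of_isLocalMin (hg w' (by linarith)) hloc'
    rcases le_total ‖w'‖ ρ₁ with h1 | h1
    · have h := strong_monotone (u := w) (by linarith) hG hconv hwρ h1
      rw [hGw, hG'] at h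
      simp only [sub_zero, inner_zero_right] at h
      have : ‖w' - w‖ ^ 2 ≤ 0 := by nlinarith
      have : ‖w' - w‖ = 0 := by nlinarith [norm_nonneg (w' - w)]
      exact sub_eq_zero.1 (norm_eq_zero.1 this)
    rcases le_total ‖w'‖ ρ₂ with h2 | h2
    · have := hgrad w' h1 h2
      rw [hG', inner_zero_right] at this
      exact absurd this (lt_irrefl _)
    · have hnear : ∀ᶠ u in nhds w', HasGradientAt g (G u) u := by
        have : ∀ᶠ u in nhds w', ‖u‖ < 1 :=
          continuous_norm.continuousAt.eventually_lt_const (by linarith : ‖w'‖ < 1)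
        filter_upwards [this] with u hu using hg u hu
      exact absurd hloc' (not_isLocalMin_of_neg_curvature hnear (hG w' (by linarith))
        (hcurv w' h2 hw'.le))

end Landscape

/-! ### The standard Gaussian measure -/

/-- The standard Gaussian measure on `ℝ`. -/
abbrev stdG : Measure ℝ := gaussianReal 0 1

lemma integrable_stdG_iff {f : ℝ → ℝ} :
    Integrable f stdG ↔ Integrable (fun z => gaussianPDFReal 0 1 z * f z) volume := by
  rw [stdG, gaussianReal_of_var_ne_zero 0 one_ne_zero,
    integrable_withDensity_iff_integrable_smul' (by fun_prop)
      (Filter.Eventually.of_forall fun _ => gaussianPDF_lt_top)]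
  simp [toReal_gaussianPDF]

lemma integral_stdG (f : ℝ → ℝ) :
    ∫ z, f z ∂stdG = ∫ z, gaussianPDFReal 0 1 z * f z := by
  rw [stdG, integral_gaussianReal_eq_integral_smul one_ne_zero]
  simp

lemma integrable_exp_sq_stdG : Integrable (fun z => Real.exp (z ^ 2 / 8)) stdG := by
  rw [integrable_stdG_iff]
  have h := (integrable_exp_neg_mul_sq (b := 3 / 8) (by norm_num)).const_mul (√(2 * π))⁻¹
  refine h.congr (Filter.Eventually.of_forall fun z => ?_)
  simp only [gaussianPDFReal_def, NNReal.coe_one, mul_one, sub_zero]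
  rw [mul_assoc, ← Real.exp_add]
  congr 2
  ring

lemma integrable_stdG_of_bound {f : ℝ → ℝ} (hf : Measurable f) (C : ℝ)
    (hb : ∀ z, |f z| ≤ C * Real.exp (z ^ 2 / 8)) : Integrable f stdG :=
  (integrable_exp_sq_stdG.const_mul C).mono' hf.aestronglyMeasurable
    (Filter.Eventually.of_forall hb)

lemma sq_le_exp (z : ℝ) : z ^ 2 ≤ 8 * Real.exp (z ^ 2 / 8) := by
  nlinarith [Real.add_one_le_exp (z ^ 2 / 8)]

lemma pow_four_le_exp (z : ℝ) : z ^ 4 ≤ 128 * Real.exp (z ^ 2 / 8) := by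
  have := Real.pow_div_factorial_le_exp (z ^ 2 / 8) (by positivity) 2
  norm_num [Nat.factorial] at this
  nlinarith

lemma one_le_exp_sq (z : ℝ) : 1 ≤ Real.exp (z ^ 2 / 8) := Real.one_le_exp (by positivity)

lemma abs_le_exp (z : ℝ) : |z| ≤ 5 * Real.exp (z ^ 2 / 8) := by
  nlinarith [sq_nonneg (|z| - 1), sq_abs z, sq_le_exp z, one_le_exp_sq z]

lemma abs_pow_three_le_exp (z : ℝ) : |z| ^ 3 ≤ 68 * Real.exp (z ^ 2 / 8) := by
  have h4 : |z| ^ 4 = z ^ 4 := by rw [show 4 = 2 * 2 from rfl, pow_mul, pow_mul, sq_abs]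
  nlinarith [sq_nonneg (|z| ^ 2 - |z|), sq_abs z, sq_le_exp z, pow_four_le_exp z]

lemma integrable_sq_stdG : Integrable (fun z : ℝ => z ^ 2) stdG :=
  integrable_stdG_of_bound (by fun_prop) 8 fun z => by
    rw [abs_of_nonneg (by positivity)]; exact sq_le_exp z

lemma integrable_pow_four_stdG : Integrable (fun z : ℝ => z ^ 4) stdG :=
  integrable_stdG_of_bound (by fun_prop) 128 fun z => by
    rw [abs_of_nonneg (by positivity)]; exact pow_four_le_exp z

/-- Gaussian integration by parts. -/
lemma stein {f f' : ℝ → ℝ} (hf : ∀ z, HasDerivAt f (f' z) z) (h0 : Integrable f stdG)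
    (h1 : Integrable (fun z => z * f z) stdG) (h2 : Integrable f' stdG) :
    ∫ z, z * f z ∂stdG = ∫ z, f' z ∂stdG := by
  rw [integrable_stdG_iff] at h0 h1 h2
  rw [integral_stdG, integral_stdG]
  have hp : ∀ z : ℝ, HasDerivAt (gaussianPDFReal 0 1) (-z * gaussianPDFReal 0 1 z) z := by
    intro z
    have h : gaussianPDFReal 0 1 = fun z => (√(2 * π))⁻¹ * Real.exp (-z ^ 2 / 2) := by
      ext z; simp [gaussianPDFReal_def]
    rw [h]
    have h3 : HasDerivAt (fun z : ℝ => -z ^ 2 / 2) (-z) z := by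
      refine (((hasDerivAt_id z).pow 2).neg.div_const 2).congr_deriv ?_
      simp
      ring
    refine (h3.exp.const_mul _).congr_deriv ?_
    ring
  have h := integral_mul_deriv_eq_deriv_mul_of_integrable (u := f) (v := gaussianPDFReal 0 1)
    (fun x _ => hf x) (fun x _ => hp x)
    (h1.neg.congr (Filter.Eventually.of_forall fun z => by simp; ring))
    (h2.congr (Filter.Eventually.of_forall fun z => by simp [mul_comm]))
    (h0.congr (Filter.Eventually.of_forall fun z => by simp [mul_comm]))
  have e1 : ∫ z, gaussianPDFReal 0 1 z * (z * f z) = -∫ z, f z * (-z * gaussianPDFReal 0 1 z) := by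
    rw [← integral_neg]; congr 1; ext z; ring
  rw [e1, h, neg_neg]
  congr 1; ext z; ring

lemma integral_id_stdG : ∫ z, z ∂stdG = 0 := integral_id_gaussianReal

lemma integral_sq_stdG : ∫ z, z ^ 2 ∂stdG = 1 := by
  have h := stein (f := fun z => z) (f' := fun _ => 1) (fun z => hasDerivAt_id z)
    (integrable_stdG_of_bound (by fun_prop) 5 abs_le_exp)
    (integrable_sq_stdG.congr (Filter.Eventually.of_forall fun z => by simp [sq]))
    (integrable_const _)
  simpa [sq] using h

lemma integral_pow_four_stdG : ∫ z, z ^ 4 ∂stdG = 3 := by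
  have h := stein (f := fun z => z ^ 3) (f' := fun z => 3 * z ^ 2)
    (fun z => by simpa using hasDerivAt_pow 3 z)
    (integrable_stdG_of_bound (by fun_prop) 68 fun z => by
      rw [abs_pow]; exact abs_pow_three_le_exp z)
    (integrable_pow_four_stdG.congr (Filter.Eventually.of_forall fun z => by simp; ring))
    (integrable_sq_stdG.const_mul 3)
  rw [integral_const_mul, integral_sq_stdG] at h
  rw [← mul_one (3 : ℝ), ← h]
  congr 1; ext z; ring

lemma integrable_mul_tanh_stdG (c : ℝ) : Integrable (fun z => z * Real.tanh (c * z)) stdG :=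
  integrable_stdG_of_bound
    (measurable_id.mul (continuous_tanh.measurable.comp (measurable_const_mul c))) 5 fun z => by
    rw [abs_mul]
    have := abs_tanh_le_one (c * z)
    nlinarith [abs_nonneg z, abs_le_exp z]

lemma integrable_sech_sq_stdG (c : ℝ) : Integrable (fun z => 1 - Real.tanh (c * z) ^ 2) stdG :=
  integrable_stdG_of_bound
    (measurable_const.sub ((continuous_tanh.measurable.comp (measurable_const_mul c)).pow_const 2))
    1 fun z => by
    rw [abs_of_nonneg (one_sub_tanh_sq_nonneg _)]
    nlinarith [one_le_exp_sq z, sq_nonneg (Real.tanh (c * z))]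

lemma integral_mul_tanh_stdG (c : ℝ) :
    ∫ z, z * Real.tanh (c * z) ∂stdG = c * ∫ z, (1 - Real.tanh (c * z) ^ 2) ∂stdG := by
  have hd : ∀ z : ℝ, HasDerivAt (fun z => Real.tanh (c * z)) ((1 - Real.tanh (c * z) ^ 2) * c) z :=
    fun z => (hasDerivAt_tanh (c * z)).comp z (by simpa using (hasDerivAt_id z).const_mul c)
  rw [stein hd _ (integrable_mul_tanh_stdG c) ((integrable_sech_sq_stdG c).mul_const c),
    integral_mul_const, mul_comm]
  refine integrable_stdG_of_bound
    (continuous_tanh.measurable.comp (measurable_const_mul c)) 1 fun z => ?_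
  rw [one_mul]
  exact (abs_tanh_le_one _).trans (one_le_exp_sq z)

lemma integral_mul_tanh_ge {c : ℝ} (hc : 1 ≤ c) : 1 / 2 ≤ ∫ z, z * Real.tanh (c * z) ∂stdG := by
  have h1 : ∫ z, (11 / 16 * z ^ 2 - z ^ 4 / 16) ∂stdG = 1 / 2 := by
    rw [integral_sub (integrable_sq_stdG.const_mul _) (integrable_pow_four_stdG.div_const _),
      integral_const_mul, integral_div, integral_sq_stdG, integral_pow_four_stdG]
    norm_num
  rw [← h1]
  refine integral_mono ((integrable_sq_stdG.const_mul _).sub (integrable_pow_four_stdG.div_const _))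
    (integrable_mul_tanh_stdG c) fun z => (mul_tanh_lower z).trans ?_
  rcases le_total 0 z with h | h
  · exact mul_le_mul_of_nonneg_left (monotone_tanh (by nlinarith)) h
  · exact mul_le_mul_of_nonpos_left (monotone_tanh (by nlinarith)) h

lemma integral_mul_tanh_le_one (c : ℝ) : ∫ z, z * Real.tanh (c * z) ∂stdG ≤ 1 := by
  have h1 : ∫ z, ((1 : ℝ) / 2 + z ^ 2 / 2) ∂stdG = 1 := by
    rw [integral_add (integrable_const _) (integrable_sq_stdG.div_const _),
      integral_div _ (fun z : ℝ => z ^ 2), integral_sq_stdG]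
    simp
    norm_num
  rw [← h1]
  refine integral_mono (integrable_mul_tanh_stdG c)
    ((integrable_const _).add (integrable_sq_stdG.div_const _)) fun z => ?_
  have h2 := le_abs_self (z * Real.tanh (c * z))
  rw [abs_mul] at h2
  have := abs_tanh_le_one (c * z)
  simp only
  nlinarith [abs_nonneg z, sq_abs z, sq_nonneg (|z| - 1)]

lemma integral_mul_tanh_nonneg {c : ℝ} (hc : 0 ≤ c) : 0 ≤ ∫ z, z * Real.tanh (c * z) ∂stdG := by
  refine integral_nonneg fun z => ?_
  rcases le_total 0 z with h | h
  · exact mul_nonneg h (tanh_nonneg (by positivity))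
  · refine mul_nonneg_of_nonpos_of_nonpos h ?_
    simpa using monotone_tanh (mul_nonpos_of_nonneg_of_nonpos hc h)

/-- Rotation invariance of the standard Gaussian measure on the plane. -/
lemma integral_rotation {c s : ℝ} (h : c ^ 2 + s ^ 2 = 1) {F : ℝ × ℝ → ℝ} (hF : Measurable F) :
    ∫ z, F (c * z.1 - s * z.2, s * z.1 + c * z.2) ∂(stdG.prod stdG) =
      ∫ z, F z ∂(stdG.prod stdG) := by
  obtain ⟨φ, hc, hs⟩ : ∃ φ : ℝ, Real.cos φ = c ∧ Real.sin φ = -s := by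
    let z : ℂ := ⟨c, -s⟩
    have hz : ‖z‖ = 1 := by
      rw [Complex.norm_def, Complex.normSq_apply]
      simp only [z]
      rw [show c * c + -s * -s = c ^ 2 + s ^ 2 by ring, h, Real.sqrt_one]
    have hz0 : z ≠ 0 := fun h0 => by simp [h0] at hz
    exact ⟨z.arg, by rw [Complex.cos_arg hz0, hz, div_one], by rw [Complex.sin_arg, hz, div_one]⟩
  have hrot := IsGaussian.map_rotation_eq_self (μ := stdG) (by simp) φ
  conv_rhs => rw [← hrot]
  rw [integral_map (by fun_prop) hF.aestronglyMeasurable]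
  simp only [ContinuousLinearMap.rotation_apply, hc, hs, smul_eq_mul]
  congr 1; ext z
  congr 2 <;> ring

/-! ### The Bernoulli–Gaussian law as a Gaussian mixture -/

/-- The Bernoulli law on `{0, 1} ⊆ ℝ`. -/
def ber (θ : ℝ) : Measure ℝ :=
  θ.toNNReal • Measure.dirac 1 + (1 - θ).toNNReal • Measure.dirac 0

section Mixture

variable {θ : ℝ}

instance isFiniteMeasure_ber : IsFiniteMeasure (ber θ) := by unfold ber; infer_instance

lemma toNNReal_add_toNNReal_one_sub (h0 : 0 ≤ θ) (h1 : θ ≤ 1) :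
    (θ.toNNReal : ℝ≥0∞) + ((1 - θ).toNNReal : ℝ≥0∞) = 1 := by
  rw [← ENNReal.coe_add, ← Real.toNNReal_add h0 (by linarith)]
  simp

lemma isProbabilityMeasure_ber (h0 : 0 ≤ θ) (h1 : θ ≤ 1) : IsProbabilityMeasure (ber θ) := by
  constructor
  simp [ber, toNNReal_add_toNNReal_one_sub h0 h1]

lemma isProbabilityMeasure_bg (h0 : 0 ≤ θ) (h1 : θ ≤ 1) : IsProbabilityMeasure (bg θ) := by
  constructor
  simp [bg, toNNReal_add_toNNReal_one_sub h0 h1]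

lemma bg_eq_map : bg θ = ((ber θ).prod stdG).map (fun y => y.1 * y.2) := by
  have hm : Measurable fun y : ℝ × ℝ => y.1 * y.2 := by fun_prop
  unfold ber bg
  rw [Measure.add_prod, Measure.map_add _ _ hm, Measure.prod_smul_left, Measure.prod_smul_left,
    Measure.map_smul, Measure.map_smul, Measure.dirac_prod, Measure.dirac_prod,
    Measure.map_map hm (by fun_prop), Measure.map_map hm (by fun_prop)]
  congr 2
  · simp [Function.comp_def]
  · simp [Function.comp_def]

lemma integral_bg (h0 : 0 ≤ θ) (h1 : θ ≤ 1) {f : ℝ → ℝ} (hf : Integrable f stdG) :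
    ∫ y, f y ∂(bg θ) = θ * ∫ y, f y ∂stdG + (1 - θ) * f 0 := by
  have hd : Integrable f (Measure.dirac 0) := integrable_dirac (by simp)
  unfold bg
  rw [integral_add_measure hf.smul_measure_nnreal hd.smul_measure_nnreal,
    integral_smul_nnreal_measure, integral_smul_nnreal_measure, integral_dirac]
  simp [NNReal.smul_def, h0, h1]

lemma integrable_bg {f : ℝ → ℝ} (hf : Integrable f stdG) : Integrable f (bg θ) :=
  hf.smul_measure_nnreal.add_measure (Integrable.smul_measure_nnreal (integrable_dirac (by simp)))

lemma ae_ber (θ : ℝ) : ∀ᵐ b ∂(ber θ), b ^ 2 = b ∧ 0 ≤ b := by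
  unfold ber
  rw [ae_add_measure_iff]
  constructor <;> refine Measure.ae_smul_measure ?_ _ <;> rw [ae_dirac_eq] <;> simp

lemma integral_ber (h0 : 0 ≤ θ) : ∫ b, b ∂(ber θ) = θ := by
  have hd : ∀ a : ℝ, Integrable (fun b : ℝ => b) (Measure.dirac a) :=
    fun a => integrable_dirac (by simp)
  unfold ber
  rw [integral_add_measure (hd 1).smul_measure_nnreal (hd 0).smul_measure_nnreal,
    integral_smul_nnreal_measure, integral_smul_nnreal_measure, integral_dirac, integral_dirac]
  simp [NNReal.smul_def, h0]

lemma integrable_ber : Integrable (fun b : ℝ => b) (ber θ) :=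
  Integrable.add_measure (Integrable.smul_measure_nnreal (integrable_dirac (by simp)))
    (Integrable.smul_measure_nnreal (integrable_dirac (by simp)))

variable {m : ℕ}

lemma map_sum_pi_stdG (c : Fin m → ℝ) :
    (Measure.pi fun _ : Fin m => stdG).map (fun g => ∑ i, c i * g i) =
      stdG.map (fun z => Real.sqrt (∑ i, c i ^ 2) * z) := by
  have hs : 0 ≤ ∑ i, c i ^ 2 := Finset.sum_nonneg fun i _ => sq_nonneg _
  rw [stdG, gaussianReal_map_const_mul]
  have hmeas : Measurable fun g : Fin m → ℝ => ∑ i, c i * g i := by fun_prop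
  have : IsProbabilityMeasure ((Measure.pi fun _ : Fin m => gaussianReal 0 1).map
      (fun g => ∑ i, c i * g i)) := Measure.isProbabilityMeasure_map hmeas.aemeasurable
  refine Measure.ext_of_charFun ?_
  ext t
  rw [charFun_gaussianReal, charFun_apply_real, integral_map hmeas.aemeasurable (by fun_prop)]
  have h1 : ∀ g : Fin m → ℝ, Complex.exp (t * ((∑ i, c i * g i : ℝ) : ℂ) * Complex.I) =
      ∏ i, Complex.exp (((t * c i : ℝ) : ℂ) * (g i : ℂ) * Complex.I) := by
    intro g
    rw [← Complex.exp_sum]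
    congr 1
    push_cast
    rw [Finset.mul_sum, Finset.sum_mul]
    exact Finset.sum_congr rfl fun i _ => by ring
  simp_rw [h1]
  rw [integral_fintype_prod_eq_prod
    (f := fun i (y : ℝ) => Complex.exp (((t * c i : ℝ) : ℂ) * (y : ℂ) * Complex.I))]
  have h2 : ∀ i, ∫ y : ℝ, Complex.exp (((t * c i : ℝ) : ℂ) * (y : ℂ) * Complex.I)
      ∂(gaussianReal 0 1) = Complex.exp (-((t * c i : ℝ) : ℂ) ^ 2 / 2) := by
    intro i
    rw [← charFun_apply_real, charFun_gaussianReal]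
    congr 1
    simp
    ring
  simp_rw [h2]
  rw [← Complex.exp_sum]
  congr 1
  simp only [mul_zero, Complex.ofReal_zero, zero_mul, NNReal.coe_mk,
    mul_one, Real.sq_sqrt hs, zero_sub]
  push_cast
  rw [Finset.sum_mul, Finset.sum_div, ← Finset.sum_neg_distrib]
  exact Finset.sum_congr rfl fun i _ => by ring

/-- The random standard deviation of `∑ vᵢ xᵢ` given the support `b` of `x`. -/
def mixStd (v b : Fin m → ℝ) : ℝ := Real.sqrt (∑ i, (v i * b i) ^ 2)

lemma measurable_mixStd (v : Fin m → ℝ) : Measurable (mixStd v) := by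
  unfold mixStd; fun_prop

lemma map_sum_pi_bg (v : Fin m → ℝ) :
    (Measure.pi fun _ : Fin m => bg θ).map (fun x => ∑ i, v i * x i) =
      ((Measure.pi fun _ : Fin m => ber θ).prod stdG).map (fun y => mixStd v y.1 * y.2) := by
  have hpi : (Measure.pi fun _ : Fin m => bg θ) =
      ((Measure.pi fun _ : Fin m => ber θ).prod (Measure.pi fun _ : Fin m => stdG)).map
        (fun y i => y.1 i * y.2 i) := by
    simp_rw [bg_eq_map]
    rw [← Measure.pi_map_pi (f := fun _ (y : ℝ × ℝ) => y.1 * y.2) (fun _ => by fun_prop)]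
    have := (measurePreserving_arrowProdEquivProdArrow ℝ ℝ (Fin m) (fun _ => ber θ)
      (fun _ => stdG)).symm.map_eq
    rw [← this, Measure.map_map (by fun_prop) (MeasurableEquiv.measurable _)]
    rfl
  have hm2 : Measurable fun y : (Fin m → ℝ) × ℝ => mixStd v y.1 * y.2 :=
    ((measurable_mixStd v).comp measurable_fst).mul measurable_snd
  rw [hpi, Measure.map_map (by fun_prop) (by fun_prop)]
  ext s hs
  rw [Measure.map_apply (by fun_prop) hs, Measure.map_apply hm2 hs,
    Measure.prod_apply (measurableSet_preimage (by fun_prop) hs),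
    Measure.prod_apply (measurableSet_preimage hm2 hs)]
  refine lintegral_congr fun b => ?_
  have h := congrArg (fun ν => ν s) (map_sum_pi_stdG fun i => v i * b i)
  rw [Measure.map_apply (by fun_prop) hs, Measure.map_apply (by fun_prop) hs] at h
  convert h using 2
  · ext g
    simp [mul_assoc]
  · rfl

lemma map_head_last (v : EuclideanSpace ℝ (Fin m)) :
    (bgVec θ (m + 1)).map (fun x => (⟪v, headVec x⟫, x (Fin.last m))) =
      (((Measure.pi fun _ : Fin m => ber θ).prod stdG).map (fun y => mixStd v y.1 * y.2)).prod
        (bg θ) := by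
  have h := (measurePreserving_piFinSuccAbove (fun _ : Fin (m + 1) => bg θ) (Fin.last m))
  have h2 : (fun x : Fin (m + 1) → ℝ => (⟪v, headVec x⟫, x (Fin.last m))) =
      (Prod.map (fun x : Fin m → ℝ => ∑ i, v i * x i) id ∘ Prod.swap) ∘
        (MeasurableEquiv.piFinSuccAbove (fun _ => ℝ) (Fin.last m)) := by
    ext x
    · simp [headVec, PiLp.inner_apply, MeasurableEquiv.piFinSuccAbove]
      exact Finset.sum_congr rfl fun i _ => mul_comm _ _
    · simp [MeasurableEquiv.piFinSuccAbove]
  rw [h2, bgVec, ← Measure.map_map (by fun_prop) (MeasurableEquiv.measurable _), h.map_eq,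
    ← Measure.map_map (by fun_prop) measurable_swap, Measure.prod_swap,
    ← Measure.map_prod_map _ _ (by fun_prop) measurable_id, Measure.map_id]
  exact congrArg (fun ν => Measure.prod ν (bg θ)) (map_sum_pi_bg (θ := θ) (v : Fin m → ℝ))

end Mixture

section HeadLast

variable {θ : ℝ} {m : ℕ}

lemma ae_mixStd (v : EuclideanSpace ℝ (Fin m)) (h0 : 0 ≤ θ) (h1 : θ ≤ 1) :
    ∀ᵐ b ∂(Measure.pi fun _ : Fin m => ber θ),
      mixStd v b ^ 2 = ∑ i, v i ^ 2 * b i ∧ mixStd v b ≤ ‖v‖ := by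
  have := isProbabilityMeasure_ber h0 h1
  have h : ∀ᵐ b ∂(Measure.pi fun _ : Fin m => ber θ), ∀ i, b i ^ 2 = b i ∧ 0 ≤ b i := by
    rw [ae_all_iff]
    intro i
    exact (measurePreserving_eval (fun _ : Fin m => ber θ) i).quasiMeasurePreserving.ae (ae_ber θ)
  filter_upwards [h] with b hb
  constructor
  · unfold mixStd
    rw [Real.sq_sqrt (Finset.sum_nonneg fun i _ => sq_nonneg _)]
    exact Finset.sum_congr rfl fun i _ => by rw [mul_pow, (hb i).1]
  · unfold mixStd
    rw [EuclideanSpace.norm_eq]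
    refine Real.sqrt_le_sqrt (Finset.sum_le_sum fun i _ => ?_)
    rw [mul_pow, (hb i).1, Real.norm_eq_abs, sq_abs]
    have : b i ≤ 1 := by nlinarith [(hb i).1, (hb i).2]
    nlinarith [sq_nonneg (v i)]

lemma integrable_mixStd_sq (v : EuclideanSpace ℝ (Fin m)) (h0 : 0 ≤ θ) (h1 : θ ≤ 1) :
    Integrable (fun b => mixStd v b ^ 2) (Measure.pi fun _ : Fin m => ber θ) := by
  have := isProbabilityMeasure_ber h0 h1
  have h : Integrable (fun b : Fin m → ℝ => ∑ i, v i ^ 2 * b i)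
      (Measure.pi fun _ : Fin m => ber θ) :=
    integrable_finsetSum _ fun i _ => (integrable_comp_eval (μ := fun _ : Fin m => ber θ)
      (i := i) (f := fun b : ℝ => b) integrable_ber).const_mul _
  exact h.congr ((ae_mixStd v h0 h1).mono fun b hb => hb.1.symm)

lemma integral_mixStd_sq (v : EuclideanSpace ℝ (Fin m)) (h0 : 0 ≤ θ) (h1 : θ ≤ 1) :
    ∫ b, mixStd v b ^ 2 ∂(Measure.pi fun _ : Fin m => ber θ) = ‖v‖ ^ 2 * θ := by
  have := isProbabilityMeasure_ber h0 h1
  rw [integral_congr_ae ((ae_mixStd v h0 h1).mono fun b hb => hb.1), integral_finsetSum]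
  · simp_rw [integral_const_mul]
    rw [EuclideanSpace.norm_sq_eq, Finset.sum_mul]
    refine Finset.sum_congr rfl fun i _ => ?_
    rw [integral_comp_eval (μ := fun _ : Fin m => ber θ) (i := i) (f := fun b : ℝ => b)
      integrable_ber.aestronglyMeasurable, integral_ber h0, Real.norm_eq_abs, sq_abs]
  · exact fun i _ => (integrable_comp_eval (μ := fun _ : Fin m => ber θ)
      (i := i) (f := fun b : ℝ => b) integrable_ber).const_mul _

/-- Conditional expectation of `F(⟪v, x̄⟫, xₙ)` when `⟪v, x̄⟫` has standard deviation `s`. -/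
def condExpect (θ : ℝ) (F : ℝ → ℝ → ℝ) (s : ℝ) : ℝ :=
  θ * ∫ z, F (s * z.1) z.2 ∂(stdG.prod stdG) + (1 - θ) * ∫ z, F (s * z) 0 ∂stdG

variable {F : ℝ → ℝ → ℝ} {C : ℝ}

lemma nonneg_of_exp_bound (hb : ∀ a b, |F a b| ≤ C * exp ((a ^ 2 + b ^ 2) / 8)) : 0 ≤ C := by
  have := (abs_nonneg _).trans (hb 0 0)
  simpa using this

lemma exp_bound_scale (hb : ∀ a b, |F a b| ≤ C * exp ((a ^ 2 + b ^ 2) / 8)) {s : ℝ}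
    (hs0 : 0 ≤ s) (hs1 : s ≤ 1) (z y : ℝ) :
    |F (s * z) y| ≤ C * (exp (z ^ 2 / 8) * exp (y ^ 2 / 8)) := by
  refine (hb _ _).trans ?_
  rw [← Real.exp_add]
  refine mul_le_mul_of_nonneg_left (Real.exp_le_exp.2 ?_) (nonneg_of_exp_bound hb)
  have : (s * z) ^ 2 ≤ z ^ 2 := by
    rw [mul_pow]
    nlinarith [sq_nonneg z, mul_nonneg hs0 (sub_nonneg.2 hs1)]
  linarith

lemma integrable_stdG_prod (hF : Measurable (Function.uncurry F))
    (hb : ∀ a b, |F a b| ≤ C * exp ((a ^ 2 + b ^ 2) / 8)) {s : ℝ} (hs0 : 0 ≤ s) (hs1 : s ≤ 1) :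
    Integrable (fun z : ℝ × ℝ => F (s * z.1) z.2) (stdG.prod stdG) := by
  refine Integrable.mono' ((integrable_exp_sq_stdG.mul_prod integrable_exp_sq_stdG).const_mul C)
    ?_ (.of_forall fun z => exp_bound_scale hb hs0 hs1 z.1 z.2)
  exact (hF.comp ((measurable_fst.const_mul s).prodMk measurable_snd)).aestronglyMeasurable

lemma integrable_stdG_snd (hF : Measurable (Function.uncurry F))
    (hb : ∀ a b, |F a b| ≤ C * exp ((a ^ 2 + b ^ 2) / 8)) (a : ℝ) :
    Integrable (fun y => F a y) stdG := by
  refine integrable_stdG_of_bound (hF.comp measurable_prodMk_left) (C * exp (a ^ 2 / 8))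
    fun z => (hb a z).trans_eq ?_
  rw [mul_assoc, ← Real.exp_add, add_div]

lemma integrable_stdG_fst (hF : Measurable (Function.uncurry F))
    (hb : ∀ a b, |F a b| ≤ C * exp ((a ^ 2 + b ^ 2) / 8)) {s : ℝ} (hs0 : 0 ≤ s) (hs1 : s ≤ 1)
    (y : ℝ) : Integrable (fun z => F (s * z) y) stdG := by
  refine integrable_stdG_of_bound (hF.comp ((measurable_id.const_mul s).prodMk measurable_const))
    (C * exp (y ^ 2 / 8)) fun z => (exp_bound_scale hb hs0 hs1 z y).trans_eq ?_
  ring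

lemma measurable_headVec : Measurable (headVec : (Fin (m + 1) → ℝ) → EuclideanSpace ℝ (Fin m)) := by
  unfold headVec
  fun_prop

lemma measurable_head_last (v : EuclideanSpace ℝ (Fin m)) :
    Measurable fun x : Fin (m + 1) → ℝ => (⟪v, headVec x⟫, x (Fin.last m)) := by
  have := measurable_headVec (m := m)
  fun_prop

lemma bgVec_map_eq (v : EuclideanSpace ℝ (Fin m)) :
    (bgVec θ (m + 1)).map (fun x => (⟪v, headVec x⟫, x (Fin.last m))) =
      ((((Measure.pi fun _ : Fin m => ber θ).prod stdG)).prod (bg θ)).map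
        (fun y => (mixStd v y.1.1 * y.1.2, y.2)) := by
  rw [map_head_last]
  have hm2 : Measurable fun y : (Fin m → ℝ) × ℝ => mixStd v y.1 * y.2 :=
    ((measurable_mixStd v).comp measurable_fst).mul measurable_snd
  conv_lhs => rw [← Measure.map_id (μ := bg θ)]
  rw [Measure.map_prod_map _ _ hm2 measurable_id]
  rfl

lemma integrable_mixture (v : EuclideanSpace ℝ (Fin m)) (hv : ‖v‖ ≤ 1) (h0 : 0 ≤ θ) (h1 : θ ≤ 1)
    (hF : Measurable (Function.uncurry F))
    (hb : ∀ a b, |F a b| ≤ C * exp ((a ^ 2 + b ^ 2) / 8)) :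
    Integrable (fun y : ((Fin m → ℝ) × ℝ) × ℝ => F (mixStd v y.1.1 * y.1.2) y.2)
      (((Measure.pi fun _ : Fin m => ber θ).prod stdG).prod (bg θ)) := by
  have := isProbabilityMeasure_ber h0 h1
  have := isProbabilityMeasure_bg h0 h1
  have hmix := measurable_mixStd (v : Fin m → ℝ)
  have hI : Integrable (fun y : ((Fin m → ℝ) × ℝ) × ℝ =>
      C * ((1 * exp (y.1.2 ^ 2 / 8)) * exp (y.2 ^ 2 / 8)))
      (((Measure.pi fun _ : Fin m => ber θ).prod stdG).prod (bg θ)) :=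
    (((integrable_const (1 : ℝ)).mul_prod integrable_exp_sq_stdG).mul_prod
      (integrable_bg integrable_exp_sq_stdG)).const_mul C
  refine Integrable.mono' hI ?_ ?_
  · have : Measurable fun y : ((Fin m → ℝ) × ℝ) × ℝ => (mixStd v y.1.1 * y.1.2, y.2) := by fun_prop
    exact (hF.comp this).aestronglyMeasurable
  · have hq : Measure.QuasiMeasurePreserving (fun y : ((Fin m → ℝ) × ℝ) × ℝ => y.1.1)
        (((Measure.pi fun _ : Fin m => ber θ).prod stdG).prod (bg θ))
        (Measure.pi fun _ : Fin m => ber θ) :=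
      Measure.quasiMeasurePreserving_fst.comp Measure.quasiMeasurePreserving_fst
    filter_upwards [hq.ae (ae_mixStd v h0 h1)] with y hy
    rw [one_mul]
    exact exp_bound_scale hb (Real.sqrt_nonneg _) (hy.2.trans hv) _ _

lemma integrable_head_last (v : EuclideanSpace ℝ (Fin m)) (hv : ‖v‖ ≤ 1) (h0 : 0 ≤ θ) (h1 : θ ≤ 1)
    (hF : Measurable (Function.uncurry F))
    (hb : ∀ a b, |F a b| ≤ C * exp ((a ^ 2 + b ^ 2) / 8)) :
    Integrable (fun x => F ⟪v, headVec x⟫ (x (Fin.last m))) (bgVec θ (m + 1)) := by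
  have hmix := measurable_mixStd (v : Fin m → ℝ)
  have h : Integrable (Function.uncurry F)
      ((bgVec θ (m + 1)).map (fun x => (⟪v, headVec x⟫, x (Fin.last m)))) := by
    rw [bgVec_map_eq, integrable_map_measure hF.aestronglyMeasurable (by fun_prop)]
    exact integrable_mixture v hv h0 h1 hF hb
  exact (integrable_map_measure hF.aestronglyMeasurable
    (measurable_head_last v).aemeasurable).1 h

/-- Lower bound for an expectation of a function of `⟪v, x̄⟫` and `xₙ`, from a bound on the
conditional expectations which is affine in the conditional variance. -/
lemma le_integral_head_last (v : EuclideanSpace ℝ (Fin m)) (hv : ‖v‖ = 1) (h0 : 0 ≤ θ)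
    (h1 : θ ≤ 1) (hF : Measurable (Function.uncurry F))
    (hb : ∀ a b, |F a b| ≤ C * exp ((a ^ 2 + b ^ 2) / 8)) {c₀ c₁ : ℝ}
    (hc : ∀ s, 0 ≤ s → s ≤ 1 → c₀ + c₁ * s ^ 2 ≤ condExpect θ F s) :
    c₀ + c₁ * θ ≤ ∫ x, F ⟪v, headVec x⟫ (x (Fin.last m)) ∂(bgVec θ (m + 1)) := by
  have := isProbabilityMeasure_ber h0 h1
  have := isProbabilityMeasure_bg h0 h1
  have hmix := measurable_mixStd (v : Fin m → ℝ)
  have hInt := integrable_mixture v hv.le h0 h1 hF hb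
  have e1 : ∫ x, F ⟪v, headVec x⟫ (x (Fin.last m)) ∂(bgVec θ (m + 1)) =
      ∫ y : ((Fin m → ℝ) × ℝ) × ℝ, F (mixStd v y.1.1 * y.1.2) y.2
        ∂(((Measure.pi fun _ : Fin m => ber θ).prod stdG).prod (bg θ)) := by
    have := integral_map (μ := bgVec θ (m + 1)) (measurable_head_last v).aemeasurable
      (f := Function.uncurry F) hF.aestronglyMeasurable
    rw [bgVec_map_eq, integral_map (by fun_prop) hF.aestronglyMeasurable] at this
    exact this.symm
  rw [e1, integral_prod _ hInt, integral_prod _ hInt.integral_prod_left]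
  have e2 : ∀ᵐ b ∂(Measure.pi fun _ : Fin m => ber θ),
      c₀ + c₁ * mixStd v b ^ 2 ≤ ∫ z, ∫ y, F (mixStd v b * z) y ∂(bg θ) ∂stdG := by
    filter_upwards [ae_mixStd v h0 h1] with b hb'
    have hs0 : 0 ≤ mixStd v b := Real.sqrt_nonneg _
    have hs1 : mixStd v b ≤ 1 := hb'.2.trans hv.le
    refine (hc _ hs0 hs1).trans_eq ?_
    have hp := integrable_stdG_prod hF hb hs0 hs1
    simp_rw [integral_bg h0 h1 (integrable_stdG_snd hF hb _)]
    rw [integral_add (hp.integral_prod_left.const_mul _)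
      ((integrable_stdG_fst hF hb hs0 hs1 0).const_mul _), integral_const_mul, integral_const_mul,
      condExpect, integral_prod _ hp]
  calc c₀ + c₁ * θ = ∫ b, c₀ + c₁ * mixStd v b ^ 2 ∂(Measure.pi fun _ : Fin m => ber θ) := by
        rw [integral_add (integrable_const _) ((integrable_mixStd_sq v h0 h1).const_mul _),
          integral_const_mul, integral_mixStd_sq v h0 h1, hv]
        simp
    _ ≤ _ := integral_mono_ae ((integrable_const _).add ((integrable_mixStd_sq v h0 h1).const_mul _))
        hInt.integral_prod_left.integral_prod_left e2

end HeadLast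

section Radial

/-- First radial derivative of `h_μ(r a + q b)` along the sphere. -/
def radialGrad (μ r q a b : ℝ) : ℝ := Real.tanh ((r * a + q * b) / μ) * (a - b * (r / q))

/-- Second radial derivative of `h_μ(r a + q b)` along the sphere. -/
def radialHess (μ r q a b : ℝ) : ℝ :=
  μ⁻¹ * ((1 - Real.tanh ((r * a + q * b) / μ) ^ 2) * (a - b * (r / q)) ^ 2)
    - Real.tanh ((r * a + q * b) / μ) * (b * (1 / q + r ^ 2 / q ^ 3))

lemma measurable_radialGrad (μ r q : ℝ) : Measurable (Function.uncurry (radialGrad μ r q)) := by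
  have := continuous_tanh
  unfold radialGrad Function.uncurry
  exact Continuous.measurable (by fun_prop)

lemma measurable_radialHess (μ r q : ℝ) : Measurable (Function.uncurry (radialHess μ r q)) := by
  have := continuous_tanh
  unfold radialHess Function.uncurry
  exact Continuous.measurable (by fun_prop)

lemma one_add_sq_le_exp (a b : ℝ) : 1 + a ^ 2 + b ^ 2 ≤ 8 * exp ((a ^ 2 + b ^ 2) / 8) := by
  nlinarith [Real.add_one_le_exp ((a ^ 2 + b ^ 2) / 8)]

lemma exp_bound_of_sq_bound {F : ℝ → ℝ → ℝ} {C : ℝ}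
    (h : ∀ a b, |F a b| ≤ C * (1 + a ^ 2 + b ^ 2)) (a b : ℝ) :
    |F a b| ≤ (C * 8) * exp ((a ^ 2 + b ^ 2) / 8) := by
  have hC : 0 ≤ C := by simpa using (abs_nonneg _).trans (h 0 0)
  rw [mul_assoc]
  exact (h a b).trans (mul_le_mul_of_nonneg_left (one_add_sq_le_exp a b) hC)

lemma abs_le_one_add_sq (a b : ℝ) : |a| ≤ 1 + a ^ 2 + b ^ 2 := by
  nlinarith [sq_nonneg (|a| - 1), sq_abs a, sq_nonneg b, abs_nonneg a]

lemma abs_sub_mul_le (a b k : ℝ) : |a - b * k| ≤ (1 + |k|) * (1 + a ^ 2 + b ^ 2) := by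
  have h1 := abs_le_one_add_sq a b
  have h2 := abs_le_one_add_sq b a
  calc |a - b * k| ≤ |a| + |b| * |k| := by rw [← abs_mul]; exact abs_sub _ _
    _ ≤ (1 + a ^ 2 + b ^ 2) + (1 + a ^ 2 + b ^ 2) * |k| := by gcongr; linarith
    _ = _ := by ring

lemma sub_mul_sq_le (a b k : ℝ) : (a - b * k) ^ 2 ≤ (2 + 2 * k ^ 2) * (1 + a ^ 2 + b ^ 2) := by
  nlinarith [sq_nonneg (a + b * k), sq_nonneg k, sq_nonneg (a * k), sq_nonneg b]

lemma abs_tanh_mul_le (t y : ℝ) : |Real.tanh t * y| ≤ |y| := by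
  rw [abs_mul]
  exact mul_le_of_le_one_left (abs_nonneg _) (abs_tanh_le_one _)

lemma radialGrad_bound (μ r q a b : ℝ) :
    |radialGrad μ r q a b| ≤ (1 + |r / q|) * (1 + a ^ 2 + b ^ 2) :=
  (abs_tanh_mul_le _ _).trans (abs_sub_mul_le _ _ _)

lemma one_sub_tanh_sq_le (t : ℝ) : 1 - Real.tanh t ^ 2 ≤ 1 := by nlinarith [sq_nonneg (Real.tanh t)]

lemma abs_hess_le {μ : ℝ} (hμ : 0 < μ) (t y b k : ℝ) :
    |μ⁻¹ * ((1 - Real.tanh t ^ 2) * y ^ 2) - Real.tanh t * (b * k)| ≤ μ⁻¹ * y ^ 2 + |b| * |k| := by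
  have h1 : |μ⁻¹ * ((1 - Real.tanh t ^ 2) * y ^ 2)| ≤ μ⁻¹ * y ^ 2 := by
    rw [abs_of_nonneg (mul_nonneg (by positivity)
      (mul_nonneg (one_sub_tanh_sq_nonneg t) (sq_nonneg y)))]
    gcongr
    exact mul_le_of_le_one_left (sq_nonneg _) (one_sub_tanh_sq_le t)
  have h2 := abs_tanh_mul_le t (b * k)
  rw [abs_mul b k] at h2
  exact (abs_sub _ _).trans (add_le_add h1 h2)

lemma radialHess_bound {μ : ℝ} (hμ : 0 < μ) (r q a b : ℝ) :
    |radialHess μ r q a b| ≤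
      (μ⁻¹ * (2 + 2 * (r / q) ^ 2) + |1 / q + r ^ 2 / q ^ 3|) * (1 + a ^ 2 + b ^ 2) := by
  refine (abs_hess_le hμ _ _ _ _).trans ?_
  have h1 := sub_mul_sq_le a b (r / q)
  have h2 := abs_le_one_add_sq b a
  have h3 : |b| * |1 / q + r ^ 2 / q ^ 3| ≤ |1 / q + r ^ 2 / q ^ 3| * (1 + a ^ 2 + b ^ 2) := by
    rw [mul_comm]
    exact mul_le_mul_of_nonneg_left (by linarith) (abs_nonneg _)
  rw [add_mul, mul_assoc]
  exact add_le_add (mul_le_mul_of_nonneg_left h1 (by positivity)) h3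

variable {μ r q s σ : ℝ}

lemma measurable_tanh_mul (c : ℝ) : Measurable fun z : ℝ => Real.tanh (c * z) :=
  (continuous_tanh.comp (continuous_const_mul c)).measurable

lemma integrable_tanh_stdG (c : ℝ) : Integrable (fun z => Real.tanh (c * z)) stdG :=
  integrable_stdG_of_bound (measurable_tanh_mul c) 1 fun z => by
    rw [one_mul]
    exact (abs_tanh_le_one _).trans (one_le_exp_sq z)

lemma integrable_id_stdG : Integrable (fun z : ℝ => z) stdG :=
  integrable_stdG_of_bound measurable_id 5 abs_le_exp

lemma integrable_sq_mul_sech_stdG (c : ℝ) :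
    Integrable (fun z => z ^ 2 * (1 - Real.tanh (c * z) ^ 2)) stdG :=
  integrable_stdG_of_bound ((measurable_id.pow_const 2).mul
    (measurable_const.sub ((measurable_tanh_mul c).pow_const 2))) 8 fun z => by
    rw [abs_of_nonneg (mul_nonneg (sq_nonneg z) (one_sub_tanh_sq_nonneg _))]
    exact (mul_le_of_le_one_right (sq_nonneg _) (one_sub_tanh_sq_le _)).trans (sq_le_exp z)

lemma measurable_scale_fst {F : ℝ → ℝ → ℝ} (hF : Measurable (Function.uncurry F)) (s : ℝ) :
    Measurable fun z : ℝ × ℝ => F (s * z.1) z.2 :=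
  hF.comp ((measurable_fst.const_mul s).prodMk measurable_snd)

lemma integral_radialGrad (hq : 0 < q) (hrq : r ^ 2 + q ^ 2 = 1) (hσ : 0 < σ)
    (hσ2 : σ ^ 2 = s ^ 2 * r ^ 2 + q ^ 2) :
    ∫ z, radialGrad μ r q (s * z.1) z.2 ∂(stdG.prod stdG) =
      -(r * (1 - s ^ 2) / σ) * ∫ z, z * Real.tanh (σ / μ * z) ∂stdG := by
  have hrot : (r * s / σ) ^ 2 + (q / σ) ^ 2 = 1 := by
    rw [div_pow, div_pow, ← add_div, div_eq_one_iff_eq (by positivity), hσ2]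
    ring
  have hm := measurable_scale_fst (measurable_radialGrad μ r q) s
  rw [← integral_rotation hrot hm]
  have hI1 := ((integrable_mul_tanh_stdG (σ / μ)).mul_prod
    (integrable_const (1 : ℝ) (μ := stdG))).const_mul (-(r * (1 - s ^ 2) / σ))
  have hI2 := ((integrable_tanh_stdG (σ / μ)).mul_prod integrable_id_stdG).const_mul (-(s / (q * σ)))
  have hpt : ∀ z : ℝ × ℝ, radialGrad μ r q (s * (r * s / σ * z.1 - q / σ * z.2))
        (q / σ * z.1 + r * s / σ * z.2) =
      -(r * (1 - s ^ 2) / σ) * ((z.1 * Real.tanh (σ / μ * z.1)) * 1) +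
        -(s / (q * σ)) * (Real.tanh (σ / μ * z.1) * z.2) := by
    intro z
    unfold radialGrad
    have e1 : (r * (s * (r * s / σ * z.1 - q / σ * z.2)) + q * (q / σ * z.1 + r * s / σ * z.2)) / μ
        = σ / μ * z.1 := by
      have : r * (s * (r * s / σ * z.1 - q / σ * z.2)) + q * (q / σ * z.1 + r * s / σ * z.2)
        = σ * z.1 := by
        field_simp
        rw [hσ2]; ring
      rw [this]; ring
    have e2 : s * (r * s / σ * z.1 - q / σ * z.2) - (q / σ * z.1 + r * s / σ * z.2) * (r / q) =
        -(r * (1 - s ^ 2) / σ) * z.1 - s / (q * σ) * z.2 := by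
      field_simp
      linear_combination (-(s * z.2)) * hrq
    rw [e1, e2]
    ring
  simp_rw [hpt]
  rw [integral_add hI1 hI2, integral_const_mul, integral_const_mul,
    integral_prod_mul (fun z => z * Real.tanh (σ / μ * z)) (fun _ => (1 : ℝ)),
    integral_prod_mul (fun z => Real.tanh (σ / μ * z)) (fun z => z), integral_id_stdG]
  simp

lemma integral_radialHess (hμ : μ ≠ 0) (hq : 0 < q) (hrq : r ^ 2 + q ^ 2 = 1) (hσ : 0 < σ)
    (hσ2 : σ ^ 2 = s ^ 2 * r ^ 2 + q ^ 2) :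
    ∫ z, radialHess μ r q (s * z.1) z.2 ∂(stdG.prod stdG) =
      μ⁻¹ * (r * (1 - s ^ 2) / σ) ^ 2 * (∫ z, z ^ 2 * (1 - Real.tanh (σ / μ * z) ^ 2) ∂stdG)
        - (1 - s ^ 2) / σ ^ 3 * ∫ z, z * Real.tanh (σ / μ * z) ∂stdG := by
  have hrot : (r * s / σ) ^ 2 + (q / σ) ^ 2 = 1 := by
    rw [div_pow, div_pow, ← add_div, div_eq_one_iff_eq (by positivity), hσ2]
    ring
  have hm := measurable_scale_fst (measurable_radialHess μ r q) s
  rw [← integral_rotation hrot hm]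
  have hZsech : Integrable (fun z => z * (1 - Real.tanh (σ / μ * z) ^ 2)) stdG :=
    integrable_stdG_of_bound (measurable_id.mul
      (measurable_const.sub ((measurable_tanh_mul _).pow_const 2))) 5 fun z => by
      rw [abs_mul, abs_of_nonneg (one_sub_tanh_sq_nonneg _)]
      exact (mul_le_of_le_one_right (abs_nonneg _) (one_sub_tanh_sq_le _)).trans (abs_le_exp z)
  have hI1 := ((integrable_sq_mul_sech_stdG (σ / μ)).mul_prod
    (integrable_const (1 : ℝ) (μ := stdG))).const_mul (μ⁻¹ * (r * (1 - s ^ 2) / σ) ^ 2)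
  have hI2 := (hZsech.mul_prod integrable_id_stdG).const_mul
    (2 * μ⁻¹ * (r * (1 - s ^ 2) / σ) * (s / (q * σ)))
  have hI3 := ((integrable_sech_sq_stdG (σ / μ)).mul_prod integrable_sq_stdG).const_mul
    (μ⁻¹ * (s / (q * σ)) ^ 2)
  have hI4 := ((integrable_mul_tanh_stdG (σ / μ)).mul_prod
    (integrable_const (1 : ℝ) (μ := stdG))).const_mul (-(1 / (q ^ 2 * σ)))
  have hI5 := ((integrable_tanh_stdG (σ / μ)).mul_prod integrable_id_stdG).const_mul
    (-(r * s / (q ^ 3 * σ)))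
  have hpt : ∀ z : ℝ × ℝ, radialHess μ r q (s * (r * s / σ * z.1 - q / σ * z.2))
        (q / σ * z.1 + r * s / σ * z.2) =
      μ⁻¹ * (r * (1 - s ^ 2) / σ) ^ 2 * ((z.1 ^ 2 * (1 - Real.tanh (σ / μ * z.1) ^ 2)) * 1) +
      2 * μ⁻¹ * (r * (1 - s ^ 2) / σ) * (s / (q * σ)) *
        ((z.1 * (1 - Real.tanh (σ / μ * z.1) ^ 2)) * z.2) +
      μ⁻¹ * (s / (q * σ)) ^ 2 * ((1 - Real.tanh (σ / μ * z.1) ^ 2) * z.2 ^ 2) +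
      -(1 / (q ^ 2 * σ)) * ((z.1 * Real.tanh (σ / μ * z.1)) * 1) +
      -(r * s / (q ^ 3 * σ)) * (Real.tanh (σ / μ * z.1) * z.2) := by
    intro z
    unfold radialHess
    have e1 : (r * (s * (r * s / σ * z.1 - q / σ * z.2)) + q * (q / σ * z.1 + r * s / σ * z.2)) / μ
        = σ / μ * z.1 := by
      have : r * (s * (r * s / σ * z.1 - q / σ * z.2)) + q * (q / σ * z.1 + r * s / σ * z.2)
        = σ * z.1 := by
        field_simp
        rw [hσ2]; ring
      rw [this]; ring
    have e2 : s * (r * s / σ * z.1 - q / σ * z.2) - (q / σ * z.1 + r * s / σ * z.2) * (r / q) =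
        -(r * (1 - s ^ 2) / σ) * z.1 - s / (q * σ) * z.2 := by
      field_simp
      linear_combination (-(s * z.2)) * hrq
    have e3 : 1 / q + r ^ 2 / q ^ 3 = 1 / q ^ 3 := by
      field_simp
      linarith
    have e4 : (q / σ * z.1 + r * s / σ * z.2) * (1 / q ^ 3) =
        1 / (q ^ 2 * σ) * z.1 + r * s / (q ^ 3 * σ) * z.2 := by
      field_simp
    rw [e1, e2, e3, e4]
    ring
  simp_rw [hpt]
  have hI12 := hI1.fun_add hI2
  have hI13 := hI12.fun_add hI3
  have hI14 := hI13.fun_add hI4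
  rw [integral_add hI14 hI5, integral_add hI13 hI4, integral_add hI12 hI3, integral_add hI1 hI2]
  simp_rw [integral_const_mul]
  rw [integral_prod_mul (fun z => z ^ 2 * (1 - Real.tanh (σ / μ * z) ^ 2)) (fun _ => (1 : ℝ)),
    integral_prod_mul (fun z => z * (1 - Real.tanh (σ / μ * z) ^ 2)) (fun z => z),
    integral_prod_mul (fun z => 1 - Real.tanh (σ / μ * z) ^ 2) (fun z => z ^ 2),
    integral_prod_mul (fun z => z * Real.tanh (σ / μ * z)) (fun _ => (1 : ℝ)),
    integral_prod_mul (fun z => Real.tanh (σ / μ * z)) (fun z => z), integral_id_stdG,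
    integral_sq_stdG, integral_mul_tanh_stdG]
  simp only [integral_const, probReal_univ, smul_eq_mul, mul_one, mul_zero, add_zero]
  generalize ∫ z, (1 - Real.tanh (σ / μ * z) ^ 2) ∂stdG = J
  have : μ⁻¹ * (s / (q * σ)) ^ 2 - 1 / (q ^ 2 * σ) * (σ / μ) + (1 - s ^ 2) / σ ^ 3 * (σ / μ) = 0 := by
    field_simp
    linear_combination (-1 : ℝ) * hσ2 - s ^ 2 * hrq
  linear_combination J * this

/-- Conditional expectation of the radial derivative, on `μ/(4√2) ≤ r ≤ 1/(20√5)`. -/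
lemma condExpect_radialGrad_ge {θ : ℝ} (h0 : 0 ≤ θ) (h1 : θ ≤ 1 / 2) (hμ : 0 < μ) (hq : 0 < q)
    (hrq : r ^ 2 + q ^ 2 = 1) (hr1 : 17 / 100 * μ ≤ r) (hr2 : r ≤ 1 / 44) (hs0 : 0 ≤ s)
    (hs1 : s ≤ 1) :
    -(θ / 43) + 17 / 400 * s ^ 2 ≤ condExpect θ (radialGrad μ r q) s := by
  have hr0 : 0 ≤ r := by nlinarith
  have hσ2 : Real.sqrt (s ^ 2 * r ^ 2 + q ^ 2) ^ 2 = s ^ 2 * r ^ 2 + q ^ 2 :=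
    Real.sq_sqrt (by positivity)
  have hσ : 0 < Real.sqrt (s ^ 2 * r ^ 2 + q ^ 2) := Real.sqrt_pos.2 (by positivity)
  set σ := Real.sqrt (s ^ 2 * r ^ 2 + q ^ 2)
  unfold condExpect
  have hA : -(1 / 43 : ℝ) ≤ ∫ z, radialGrad μ r q (s * z.1) z.2 ∂(stdG.prod stdG) := by
    rw [integral_radialGrad hq hrq hσ hσ2]
    have hI1 := integral_mul_tanh_le_one (σ / μ)
    have hI0 := integral_mul_tanh_nonneg (c := σ / μ) (by positivity)
    generalize ∫ z, z * Real.tanh (σ / μ * z) ∂stdG = I at hI0 hI1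
    have hs2 : s ^ 2 ≤ 1 := pow_le_one₀ hs0 hs1
    have hσl : 99 / 100 ≤ σ := by
      have : 0 ≤ s ^ 2 * r ^ 2 := by positivity
      nlinarith
    have h2 : r * (1 - s ^ 2) / σ ≤ 1 / 43 := by
      rw [div_le_iff₀ hσ]
      have : r * (1 - s ^ 2) ≤ r := mul_le_of_le_one_right hr0 (by nlinarith [sq_nonneg s])
      linarith
    have h3 : 0 ≤ r * (1 - s ^ 2) / σ :=
      div_nonneg (mul_nonneg hr0 (by linarith)) hσ.le
    nlinarith
  have hB : 17 / 200 * s ^ 2 ≤ ∫ z, radialGrad μ r q (s * z) 0 ∂stdG := by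
    have hlow : ∀ z : ℝ, 17 / 100 * s ^ 2 * (z * Real.tanh (1 * z)) ≤ radialGrad μ r q (s * z) 0 := by
      intro z
      have key : ∀ z : ℝ, 0 ≤ z →
          17 / 100 * s ^ 2 * (z * Real.tanh z) ≤ Real.tanh (r * (s * z) / μ) * (s * z) := by
        intro z hz
        have k1 : 17 / 100 * s * Real.tanh z ≤ Real.tanh (17 / 100 * s * z) :=
          mul_tanh_le_tanh_mul (by positivity) (by linarith) hz
        have k2 : Real.tanh (17 / 100 * s * z) ≤ Real.tanh (r * (s * z) / μ) := by
          apply monotone_tanh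
          rw [le_div_iff₀ hμ]
          nlinarith [mul_nonneg hs0 hz]
        calc 17 / 100 * s ^ 2 * (z * Real.tanh z) = (17 / 100 * s * Real.tanh z) * (s * z) := by ring
          _ ≤ _ := mul_le_mul_of_nonneg_right (k1.trans k2) (by positivity)
      unfold radialGrad
      simp only [mul_zero, zero_mul, add_zero, sub_zero, one_mul]
      rcases le_total 0 z with hz | hz
      · exact key z hz
      · have := key (-z) (neg_nonneg.2 hz)
        rw [Real.tanh_neg, show r * (s * -z) / μ = -(r * (s * z) / μ) by ring, Real.tanh_neg] at this
        linarith
    have hInt : Integrable (fun z => radialGrad μ r q (s * z) 0) stdG :=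
      integrable_stdG_fst (measurable_radialGrad μ r q)
        (exp_bound_of_sq_bound (radialGrad_bound μ r q)) hs0 hs1 0
    have := integral_mono ((integrable_mul_tanh_stdG 1).const_mul (17 / 100 * s ^ 2)) hInt hlow
    rw [integral_const_mul] at this
    have h12 := integral_mul_tanh_ge (le_refl (1 : ℝ))
    nlinarith [sq_nonneg s]
  nlinarith [sq_nonneg s]

/-- Conditional expectation of the radial curvature, on `1/(20√5) ≤ r`. -/
lemma condExpect_radialHess_le {θ : ℝ} (h0 : 0 ≤ θ) (h1 : θ ≤ 1 / 2) (hμ : 0 < μ) (hq : 0 < q)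
    (hrq : r ^ 2 + q ^ 2 = 1) (hr : 1 ≤ 2000 * r ^ 2) (hμq : 4 * μ ≤ q) (hs0 : 0 ≤ s)
    (hs1 : s ≤ 1) :
    condExpect θ (radialHess μ r q) s ≤ 2000 * μ - θ / 4 * (1 - s ^ 2) := by
  have hσ2 : Real.sqrt (s ^ 2 * r ^ 2 + q ^ 2) ^ 2 = s ^ 2 * r ^ 2 + q ^ 2 :=
    Real.sq_sqrt (by positivity)
  have hσ : 0 < Real.sqrt (s ^ 2 * r ^ 2 + q ^ 2) := Real.sqrt_pos.2 (by positivity)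
  set σ := Real.sqrt (s ^ 2 * r ^ 2 + q ^ 2)
  have hs2 : s ^ 2 ≤ 1 := pow_le_one₀ hs0 hs1
  have hqσ : q ≤ σ := by
    apply le_of_sq_le_sq _ hσ.le
    nlinarith [mul_nonneg (sq_nonneg s) (sq_nonneg r)]
  have hσ1 : σ ≤ 1 := by nlinarith [sq_nonneg r]
  unfold condExpect
  have hA : ∫ z, radialHess μ r q (s * z.1) z.2 ∂(stdG.prod stdG) ≤ -(1 / 4) * (1 - s ^ 2) := by
    rw [integral_radialHess hμ.ne' hq hrq hσ hσ2]
    have hI := integral_mul_tanh_ge (c := σ / μ) ((one_le_div hμ).2 (by linarith))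
    have hJ : ∫ z, z ^ 2 * (1 - Real.tanh (σ / μ * z) ^ 2) ∂stdG ≤ (μ / σ) ^ 2 := by
      have := integral_mono (integrable_sq_mul_sech_stdG (σ / μ))
        (integrable_const ((μ / σ) ^ 2)) fun z => by
          have := sq_mul_one_sub_tanh_sq_le (σ / μ * z)
          calc z ^ 2 * (1 - Real.tanh (σ / μ * z) ^ 2) =
              (μ / σ) ^ 2 * ((σ / μ * z) ^ 2 * (1 - Real.tanh (σ / μ * z) ^ 2)) := by
                field_simp
            _ ≤ (μ / σ) ^ 2 * 1 := by gcongr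
            _ = _ := mul_one _
      simpa using this
    generalize ∫ z, z ^ 2 * (1 - Real.tanh (σ / μ * z) ^ 2) ∂stdG = J at hJ
    generalize ∫ z, z * Real.tanh (σ / μ * z) ∂stdG = I at hI
    have hβ0 : 0 ≤ 1 - s ^ 2 := by linarith
    have hβ1 : 1 - s ^ 2 ≤ 1 := by nlinarith [sq_nonneg s]
    generalize 1 - s ^ 2 = β at *
    have k1 : μ⁻¹ * (r * β / σ) ^ 2 * J ≤ β / (4 * σ ^ 3) := by
      calc μ⁻¹ * (r * β / σ) ^ 2 * J ≤ μ⁻¹ * (r * β / σ) ^ 2 * (μ / σ) ^ 2 := by gcongr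
        _ = (β / (4 * σ ^ 3)) * (r ^ 2 * β * (4 * μ / σ)) := by field_simp
        _ ≤ (β / (4 * σ ^ 3)) * (1 * 1 * 1) := by
            gcongr
            · nlinarith [sq_nonneg q]
            · rw [div_le_one hσ]; linarith
        _ = _ := by ring
    have k2 : β / σ ^ 3 * (1 / 2) ≤ β / σ ^ 3 * I := by gcongr
    have k3 : β ≤ β / σ ^ 3 := by
      rw [le_div_iff₀ (by positivity)]
      exact mul_le_of_le_one_right hβ0 (pow_le_one₀ hσ.le hσ1)
    have k4 : β / (4 * σ ^ 3) = (β / σ ^ 3) / 4 := by field_simp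
    linarith
  have hB : ∫ z, radialHess μ r q (s * z) 0 ∂stdG ≤ 2000 * μ := by
    have hInt : Integrable (fun z => radialHess μ r q (s * z) 0) stdG :=
      integrable_stdG_fst (measurable_radialHess μ r q)
        (exp_bound_of_sq_bound (radialHess_bound hμ r q)) hs0 hs1 0
    have := integral_mono hInt (integrable_const (2000 * μ)) fun z => by
      have h := sq_mul_one_sub_tanh_sq_le (r * (s * z) / μ)
      have hr2 : r ≠ 0 := by rintro rfl; norm_num at hr
      unfold radialHess
      simp only [mul_zero, zero_mul, add_zero, sub_zero]
      calc μ⁻¹ * ((1 - Real.tanh (r * (s * z) / μ) ^ 2) * (s * z) ^ 2) =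
          μ / r ^ 2 * ((r * (s * z) / μ) ^ 2 * (1 - Real.tanh (r * (s * z) / μ) ^ 2)) := by
            field_simp
        _ ≤ μ / r ^ 2 * 1 := by gcongr
        _ ≤ 2000 * μ := by
            rw [mul_one, div_le_iff₀ (by positivity)]
            nlinarith
    simpa using this
  have : (1 - θ) * (2000 * μ) ≤ 2000 * μ := mul_le_of_le_one_left (by positivity) (by linarith)
  nlinarith
end Radial

section Expectations

variable {θ μ : ℝ} {m : ℕ}

lemma condExpect_neg (F : ℝ → ℝ → ℝ) (s : ℝ) :
    condExpect θ (fun a b => -F a b) s = -condExpect θ F s := by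
  unfold condExpect
  rw [integral_neg, integral_neg]
  ring

lemma integral_head_last_le {F : ℝ → ℝ → ℝ} {C : ℝ} (v : EuclideanSpace ℝ (Fin m)) (hv : ‖v‖ = 1)
    (h0 : 0 ≤ θ) (h1 : θ ≤ 1) (hF : Measurable (Function.uncurry F))
    (hb : ∀ a b, |F a b| ≤ C * exp ((a ^ 2 + b ^ 2) / 8)) {c₀ c₁ : ℝ}
    (hc : ∀ s, 0 ≤ s → s ≤ 1 → condExpect θ F s ≤ c₀ + c₁ * s ^ 2) :
    ∫ x, F ⟪v, headVec x⟫ (x (Fin.last m)) ∂(bgVec θ (m + 1)) ≤ c₀ + c₁ * θ := by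
  have := le_integral_head_last (F := fun a b => -F a b) (c₀ := -c₀) (c₁ := -c₁) v hv h0 h1 hF.neg
    (fun a b => by rw [abs_neg]; exact hb a b) (fun s hs0 hs1 => by
      rw [condExpect_neg]
      linarith [hc s hs0 hs1])
  rw [integral_neg] at this
  linarith

lemma qlast_smul {r : ℝ} {v : EuclideanSpace ℝ (Fin m)} (hv : ‖v‖ = 1) :
    qlast (r • v) = Real.sqrt (1 - r ^ 2) := by
  rw [qlast, norm_smul, hv, mul_one, Real.norm_eq_abs, sq_abs]

lemma dTerm_radial (r : ℝ) {v : EuclideanSpace ℝ (Fin m)} (hv : ‖v‖ = 1)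
    (a : EuclideanSpace ℝ (Fin m)) (b : ℝ) :
    dTerm μ a b (r • v) v = radialGrad μ r (Real.sqrt (1 - r ^ 2)) ⟪v, a⟫ b := by
  simp only [dTerm, radialGrad, zval, qlast_smul hv, real_inner_smul_left,
    real_inner_self_eq_norm_sq, hv, one_pow, mul_one]

lemma hTerm_radial (r : ℝ) {v : EuclideanSpace ℝ (Fin m)} (hv : ‖v‖ = 1)
    (a : EuclideanSpace ℝ (Fin m)) (b : ℝ) :
    hTerm μ a b (r • v) v = radialHess μ r (Real.sqrt (1 - r ^ 2)) ⟪v, a⟫ b := by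
  simp only [hTerm, radialHess, zval, qlast_smul hv, real_inner_smul_left,
    real_inner_self_eq_norm_sq, hv, one_pow, mul_one]

lemma expect_dTerm_ge (h0 : 0 ≤ θ) (h1 : θ ≤ 1 / 2) (hμ : 0 < μ) {v : EuclideanSpace ℝ (Fin m)}
    (hv : ‖v‖ = 1) {r : ℝ} (hr1 : 17 / 100 * μ ≤ r) (hr2 : r ≤ 1 / 44) :
    θ / 60 ≤ ∫ x, dTerm μ (headVec x) (x (Fin.last m)) (r • v) v ∂(bgVec θ (m + 1)) := by
  have hr0 : 0 ≤ r := by nlinarith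
  have hq1 : 0 < 1 - r ^ 2 := by nlinarith
  simp_rw [dTerm_radial r hv]
  have := le_integral_head_last (c₀ := -(θ / 43)) (c₁ := 17 / 400) v hv h0 (by linarith)
    (measurable_radialGrad μ r (Real.sqrt (1 - r ^ 2)))
    (exp_bound_of_sq_bound (radialGrad_bound μ r _)) fun s hs0 hs1 =>
      condExpect_radialGrad_ge h0 h1 hμ (Real.sqrt_pos.2 hq1)
        (by rw [Real.sq_sqrt hq1.le]; ring) hr1 hr2 hs0 hs1
  linarith

lemma expect_neg_hTerm_ge (h0 : 0 ≤ θ) (h1 : θ ≤ 1 / 2) (hμ : 0 < μ) (hμθ : 32000 * μ ≤ θ)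
    {v : EuclideanSpace ℝ (Fin m)} (hv : ‖v‖ = 1) {r : ℝ} (hr : 1 ≤ 2000 * r ^ 2)
    (hq1 : 0 < 1 - r ^ 2) (hμq : 4 * μ ≤ Real.sqrt (1 - r ^ 2)) :
    θ / 16 ≤ ∫ x, -hTerm μ (headVec x) (x (Fin.last m)) (r • v) v ∂(bgVec θ (m + 1)) := by
  simp_rw [hTerm_radial r hv]
  have := integral_head_last_le (c₀ := 2000 * μ - θ / 4) (c₁ := θ / 4) v hv h0 (by linarith)
    (measurable_radialHess μ r (Real.sqrt (1 - r ^ 2)))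
    (exp_bound_of_sq_bound (radialHess_bound hμ r _)) fun s hs0 hs1 =>
      (condExpect_radialHess_le h0 h1 hμ (Real.sqrt_pos.2 hq1)
        (by rw [Real.sq_sqrt hq1.le]; ring) hr hμq hs0 hs1).trans_eq (by ring)
  rw [integral_neg]
  nlinarith

/-- A quadratic envelope of the summands in direction `v`. -/
def envelope (v : EuclideanSpace ℝ (Fin m)) (x : Fin (m + 1) → ℝ) : ℝ :=
  1 + ⟪v, headVec x⟫ ^ 2 + x (Fin.last m) ^ 2

/-- The exponential moment `E exp(z²/8)` of a standard Gaussian. -/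
def gaussExpMoment : ℝ := ∫ z, exp (z ^ 2 / 8) ∂stdG

lemma one_le_gaussExpMoment : 1 ≤ gaussExpMoment := by
  have := integral_mono (integrable_const (1 : ℝ)) integrable_exp_sq_stdG one_le_exp_sq
  simpa [gaussExpMoment] using this

/-- A bound for the exponential moment of the envelope. -/
def envConst : ℝ := exp (1 / 8) * gaussExpMoment ^ 2

lemma one_le_envConst : 1 ≤ envConst :=
  one_le_mul_of_one_le_of_one_le (Real.one_le_exp (by norm_num))
    (one_le_pow₀ one_le_gaussExpMoment)

lemma envFun_bound (a b : ℝ) :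
    |exp ((1 + a ^ 2 + b ^ 2) / 8)| ≤ exp (1 / 8) * exp ((a ^ 2 + b ^ 2) / 8) := by
  rw [abs_of_pos (Real.exp_pos _), ← Real.exp_add]
  exact le_of_eq (by ring_nf)

lemma measurable_envFun :
    Measurable (Function.uncurry fun a b : ℝ => exp ((1 + a ^ 2 + b ^ 2) / 8)) := by
  unfold Function.uncurry
  fun_prop

lemma integrable_exp_envelope (h0 : 0 ≤ θ) (h1 : θ ≤ 1) {v : EuclideanSpace ℝ (Fin m)}
    (hv : ‖v‖ = 1) : Integrable (fun x => exp (envelope v x / 8)) (bgVec θ (m + 1)) :=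
  integrable_head_last v hv.le h0 h1 measurable_envFun envFun_bound

lemma integral_exp_envelope_le (h0 : 0 ≤ θ) (h1 : θ ≤ 1) {v : EuclideanSpace ℝ (Fin m)}
    (hv : ‖v‖ = 1) : ∫ x, exp (envelope v x / 8) ∂(bgVec θ (m + 1)) ≤ envConst := by
  have := integral_head_last_le (c₀ := envConst) (c₁ := 0) v hv h0 h1 measurable_envFun envFun_bound
    fun s hs0 hs1 => by
      have hM := one_le_gaussExpMoment
      have he : 1 ≤ exp (1 / 8 : ℝ) := Real.one_le_exp (by norm_num)
      have hA : ∫ z, exp ((1 + (s * z.1) ^ 2 + z.2 ^ 2) / 8) ∂(stdG.prod stdG) ≤ envConst := by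
        have h2 := integral_mono (integrable_stdG_prod measurable_envFun envFun_bound hs0 hs1)
          ((integrable_exp_sq_stdG.mul_prod integrable_exp_sq_stdG).const_mul (exp (1 / 8)))
          fun z => (le_abs_self _).trans (exp_bound_scale envFun_bound hs0 hs1 z.1 z.2)
        rw [integral_const_mul, integral_prod_mul (fun z => exp (z ^ 2 / 8))
          (fun z => exp (z ^ 2 / 8))] at h2
        refine h2.trans_eq ?_
        rw [envConst, gaussExpMoment, sq]
      have hB : ∫ z, exp ((1 + (s * z) ^ 2 + 0 ^ 2) / 8) ∂stdG ≤ envConst := by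
        have h2 := integral_mono (integrable_stdG_fst measurable_envFun envFun_bound hs0 hs1 0)
          (integrable_exp_sq_stdG.const_mul (exp (1 / 8)))
          fun z => by simpa using (le_abs_self _).trans (exp_bound_scale envFun_bound hs0 hs1 z 0)
        rw [integral_const_mul] at h2
        refine h2.trans ?_
        change exp (1 / 8) * gaussExpMoment ≤ exp (1 / 8) * gaussExpMoment ^ 2
        gcongr
        nlinarith
      unfold condExpect
      nlinarith
  simpa [envelope] using this

lemma abs_dTerm_le {μ q₀ : ℝ} (hq₀ : 0 < q₀) (x : Fin (m + 1) → ℝ)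
    {w v : EuclideanSpace ℝ (Fin m)} (hv : ‖v‖ = 1) (hw : ‖w‖ < 1) (hq : q₀ ≤ qlast w) :
    |dTerm μ (headVec x) (x (Fin.last m)) w v| ≤ (1 + 1 / q₀) * envelope v x := by
  refine ((abs_tanh_mul_le _ _).trans (abs_sub_mul_le _ _ _)).trans ?_
  have : |⟪w, v⟫ / qlast w| ≤ 1 / q₀ := by
    rw [abs_div, abs_of_pos (qlast_pos hw)]
    have := abs_real_inner_le_norm w v
    rw [hv, mul_one] at this
    exact div_le_div₀ zero_le_one (this.trans hw.le) hq₀ hq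
  exact mul_le_mul_of_nonneg_right (by linarith) (by positivity)

lemma abs_hTerm_le (hμ : 0 < μ) {q₀ : ℝ} (hq₀ : 0 < q₀) (x : Fin (m + 1) → ℝ)
    {w v : EuclideanSpace ℝ (Fin m)} (hv : ‖v‖ = 1) (hw : ‖w‖ < 1) (hq : q₀ ≤ qlast w) :
    |hTerm μ (headVec x) (x (Fin.last m)) w v| ≤
      (μ⁻¹ * (2 + 2 / q₀ ^ 2) + (1 / q₀ + 1 / q₀ ^ 3)) * envelope v x := by
  have hqp := qlast_pos hw
  have hin : |⟪w, v⟫| ≤ 1 := by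
    have := abs_real_inner_le_norm w v
    rw [hv, mul_one] at this
    exact this.trans hw.le
  have hin2 : ⟪w, v⟫ ^ 2 ≤ 1 := by rw [← sq_abs]; exact pow_le_one₀ (abs_nonneg _) hin
  refine (abs_hess_le hμ _ _ _ _).trans ?_
  have h1 := sub_mul_sq_le ⟪v, headVec x⟫ (x (Fin.last m)) (⟪w, v⟫ / qlast w)
  have h2 := abs_le_one_add_sq (x (Fin.last m)) ⟪v, headVec x⟫
  have hk : (⟪w, v⟫ / qlast w) ^ 2 ≤ 1 / q₀ ^ 2 := by
    rw [div_pow]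
    exact div_le_div₀ zero_le_one hin2 (by positivity) (pow_le_pow_left₀ hq₀.le hq 2)
  have hk2 : |‖v‖ ^ 2 / qlast w + ⟪w, v⟫ ^ 2 / qlast w ^ 3| ≤ 1 / q₀ + 1 / q₀ ^ 3 := by
    rw [abs_of_nonneg (by positivity), hv, one_pow]
    exact add_le_add (div_le_div₀ zero_le_one le_rfl hq₀ hq)
      (div_le_div₀ zero_le_one hin2 (by positivity) (pow_le_pow_left₀ hq₀.le hq 3))
  have hE : 0 ≤ envelope v x := by unfold envelope; positivity
  rw [add_mul, mul_assoc]
  refine add_le_add (mul_le_mul_of_nonneg_left (h1.trans ?_) (by positivity)) ?_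
  · refine mul_le_mul_of_nonneg_right ?_ hE
    rw [show (2 : ℝ) / q₀ ^ 2 = 2 * (1 / q₀ ^ 2) by ring]
    linarith
  · rw [mul_comm]
    refine mul_le_mul hk2 ?_ (abs_nonneg _) (by positivity)
    unfold envelope
    linarith

lemma measurable_hTerm (w v : EuclideanSpace ℝ (Fin m)) :
    Measurable fun x : Fin (m + 1) → ℝ => hTerm μ (headVec x) (x (Fin.last m)) w v := by
  have h1 := continuous_tanh.measurable
  have h2 := measurable_headVec (m := m)
  unfold hTerm zval
  fun_prop

lemma measurable_dTerm (w v : EuclideanSpace ℝ (Fin m)) :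
    Measurable fun x : Fin (m + 1) → ℝ => dTerm μ (headVec x) (x (Fin.last m)) w v := by
  have h1 := continuous_tanh.measurable
  have h2 := measurable_headVec (m := m)
  unfold dTerm zval
  fun_prop

lemma integrable_of_envelope (h0 : 0 ≤ θ) (h1 : θ ≤ 1) {v : EuclideanSpace ℝ (Fin m)}
    (hv : ‖v‖ = 1) {W : (Fin (m + 1) → ℝ) → ℝ} (hW : Measurable W) {K : ℝ}
    (hK : ∀ x, |W x| ≤ K * envelope v x) : Integrable W (bgVec θ (m + 1)) := by
  have hK0 : 0 ≤ K := by
    have h := (abs_nonneg _).trans (hK 0)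
    have he : 1 ≤ envelope v 0 := by unfold envelope; nlinarith [sq_nonneg ⟪v, headVec 0⟫, sq_nonneg ((0 : Fin (m+1) → ℝ) (Fin.last m))]
    by_contra hneg
    nlinarith
  refine ((integrable_exp_envelope h0 h1 hv).const_mul (K * 8)).mono' hW.aestronglyMeasurable
    (.of_forall fun x => (hK x).trans ?_)
  rw [mul_assoc]
  refine mul_le_mul_of_nonneg_left ?_ hK0
  linarith [Real.add_one_le_exp (envelope v x / 8)]

/-- Indicator of the event that the last coordinate vanishes. -/
def zeroInd (b : ℝ) : ℝ := if b = 0 then 1 else 0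

lemma zeroInd_nonneg (b : ℝ) : 0 ≤ zeroInd b := by unfold zeroInd; split_ifs <;> norm_num

lemma zeroInd_le_one (b : ℝ) : zeroInd b ≤ 1 := by unfold zeroInd; split_ifs <;> norm_num

lemma measurable_zeroInd : Measurable zeroInd :=
  Measurable.ite (measurableSet_singleton 0) measurable_const measurable_const

lemma integral_zeroInd_mul (f : ℝ → ℝ) (s : ℝ) :
    ∫ z, zeroInd z.2 * f (s * z.1) ∂(stdG.prod stdG) = 0 := by
  have h1 : ∀ᵐ b ∂stdG, zeroInd b = 0 := by
    have : ∀ᵐ b ∂stdG, b ≠ 0 := by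
      rw [ae_iff]
      have := nullSingletonClass_gaussianReal (μ := 0) (v := 1) one_ne_zero
      simp
    filter_upwards [this] with b hb
    simp [zeroInd, hb]
  have h2 : ∀ᵐ z ∂(stdG.prod stdG), zeroInd z.2 = 0 :=
    Measure.quasiMeasurePreserving_snd.ae h1
  rw [integral_congr_ae (g := fun _ => 0) (h2.mono fun z hz => by simp [hz])]
  simp

lemma zeroInd_zero : zeroInd 0 = 1 := if_pos rfl

lemma measurable_zeroInd_mul_pow (k : ℕ) :
    Measurable (Function.uncurry fun a b : ℝ => zeroInd b * a ^ k) :=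
  (measurable_zeroInd.comp measurable_snd).mul (measurable_fst.pow_const k)

lemma exp_bound_pow_four (a b : ℝ) :
    |zeroInd b * a ^ 4| ≤ 128 * exp ((a ^ 2 + b ^ 2) / 8) := by
  have h4 := pow_four_le_exp a
  have h5 : exp (a ^ 2 / 8) ≤ exp ((a ^ 2 + b ^ 2) / 8) :=
    Real.exp_le_exp.2 (by nlinarith [sq_nonneg b])
  rw [abs_of_nonneg (mul_nonneg (zeroInd_nonneg b) (by positivity))]
  have : zeroInd b * a ^ 4 ≤ a ^ 4 := mul_le_of_le_one_left (by positivity) (zeroInd_le_one b)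
  linarith

lemma exp_bound_sq (a b : ℝ) :
    |zeroInd b * a ^ 2| ≤ 8 * exp ((a ^ 2 + b ^ 2) / 8) := by
  have h4 := sq_le_exp a
  have h5 : exp (a ^ 2 / 8) ≤ exp ((a ^ 2 + b ^ 2) / 8) :=
    Real.exp_le_exp.2 (by nlinarith [sq_nonneg b])
  rw [abs_of_nonneg (mul_nonneg (zeroInd_nonneg b) (by positivity))]
  have : zeroInd b * a ^ 2 ≤ a ^ 2 := mul_le_of_le_one_left (by positivity) (zeroInd_le_one b)
  linarith

lemma expect_zeroInd_sq_ge (h0 : 0 ≤ θ) (h1 : θ ≤ 1) {v : EuclideanSpace ℝ (Fin m)}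
    (hv : ‖v‖ = 1) : (1 - θ) * θ ≤
      ∫ x, zeroInd (x (Fin.last m)) * ⟪v, headVec x⟫ ^ 2 ∂(bgVec θ (m + 1)) := by
  have := le_integral_head_last (c₀ := 0) (c₁ := 1 - θ) v hv h0 h1 (measurable_zeroInd_mul_pow 2)
    exp_bound_sq fun s hs0 hs1 => by
      unfold condExpect
      rw [integral_zeroInd_mul (fun a => a ^ 2)]
      simp_rw [zeroInd_zero, mul_pow, one_mul]
      rw [integral_const_mul, integral_sq_stdG]
      simp
  simpa using this

lemma expect_zeroInd_pow_four_le (h0 : 0 ≤ θ) (h1 : θ ≤ 1) {v : EuclideanSpace ℝ (Fin m)}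
    (hv : ‖v‖ = 1) :
    ∫ x, zeroInd (x (Fin.last m)) * ⟪v, headVec x⟫ ^ 4 ∂(bgVec θ (m + 1)) ≤ 3 * (1 - θ) * θ := by
  have := integral_head_last_le (c₀ := 0) (c₁ := 3 * (1 - θ)) v hv h0 h1
    (measurable_zeroInd_mul_pow 4) exp_bound_pow_four fun s hs0 hs1 => by
      unfold condExpect
      rw [integral_zeroInd_mul (fun a => a ^ 4)]
      simp_rw [zeroInd_zero, mul_pow, one_mul]
      rw [integral_const_mul, integral_pow_four_stdG]
      have : s ^ 4 ≤ s ^ 2 := pow_le_pow_of_le_one hs0 hs1 (by norm_num)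
      nlinarith
  simpa using this

lemma exp_bound_abs_snd (a b : ℝ) : |(|b|)| ≤ 8 * exp ((a ^ 2 + b ^ 2) / 8) := by
  rw [abs_abs]
  refine (abs_le_one_add_sq b a).trans (le_trans (le_of_eq ?_) (one_add_sq_le_exp a b))
  ring

lemma measurable_abs_snd : Measurable (Function.uncurry fun _ b : ℝ => |b|) :=
  measurable_snd.abs

lemma expect_abs_last_le (h0 : 0 ≤ θ) (h1 : θ ≤ 1) {v : EuclideanSpace ℝ (Fin m)}
    (hv : ‖v‖ = 1) : ∫ x, |x (Fin.last m)| ∂(bgVec θ (m + 1)) ≤ θ := by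
  have := integral_head_last_le (F := fun _ b => |b|) (c₀ := θ) (c₁ := 0) v hv h0 h1
    measurable_abs_snd exp_bound_abs_snd fun s hs0 hs1 => by
      unfold condExpect
      have h1 : ∫ z : ℝ × ℝ, |z.2| ∂(stdG.prod stdG) ≤ 1 := by
        have e := integral_prod_mul (μ := stdG) (ν := stdG) (fun _ => (1 : ℝ)) (fun z : ℝ => |z|)
        simp only [one_mul, integral_const, probReal_univ, smul_eq_mul] at e
        rw [e]
        have hI : Integrable (fun z : ℝ => (1 + z ^ 2) / 2) stdG :=
          ((integrable_const _).fun_add integrable_sq_stdG).div_const 2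
        refine (integral_mono integrable_id_stdG.abs hI fun z => ?_).trans_eq ?_
        · simp only
          nlinarith [sq_nonneg (|z| - 1), sq_abs z]
        · rw [integral_div, integral_add (integrable_const _) integrable_sq_stdG, integral_sq_stdG]
          norm_num
      simp only [abs_zero, integral_zero, mul_zero, add_zero, zero_mul]
      nlinarith
  simpa using this

lemma hTerm_lower {r : ℝ} (hμ : 0 < μ) {u v : EuclideanSpace ℝ (Fin m)} (hu : ‖u‖ = 1)
    (hv : ‖v‖ = 1) (hr : 32 * r ^ 2 ≤ μ ^ 2) (hr1 : r ^ 2 ≤ 1 / 4) (a : EuclideanSpace ℝ (Fin m))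
    (b : ℝ) :
    μ⁻¹ * (zeroInd b * ⟪v, a⟫ ^ 2) - μ⁻¹ / 64 * (zeroInd b * ⟪u, a⟫ ^ 4)
      - μ⁻¹ / 64 * (zeroInd b * ⟪v, a⟫ ^ 4) - 10 * |b| ≤ hTerm μ a b (r • u) v := by
  by_cases hb : b = 0
  · subst hb
    have ht := tanh_sq_le (r * ⟪u, a⟫ / μ)
    have h2 : (r * ⟪u, a⟫ / μ) ^ 2 ≤ ⟪u, a⟫ ^ 2 / 32 := by
      rw [div_pow, div_le_iff₀ (by positivity)]
      nlinarith [sq_nonneg ⟪u, a⟫]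
    simp only [hTerm, zval, zeroInd_zero, abs_zero, mul_zero, zero_mul, sub_zero, add_zero,
      real_inner_smul_left, one_mul]
    have hi : 0 < μ⁻¹ := by positivity
    have key : ⟪v, a⟫ ^ 2 - ⟪u, a⟫ ^ 4 / 64 - ⟪v, a⟫ ^ 4 / 64 ≤
        (1 - Real.tanh (r * ⟪u, a⟫ / μ) ^ 2) * ⟪v, a⟫ ^ 2 := by
      nlinarith [sq_nonneg (⟪u, a⟫ ^ 2 - ⟪v, a⟫ ^ 2), sq_nonneg ⟪v, a⟫]
    nlinarith [mul_le_mul_of_nonneg_left key hi.le]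
  · have hz : zeroInd b = 0 := by simp [zeroInd, hb]
    have hru : ‖r • u‖ ^ 2 = r ^ 2 := by rw [norm_smul, hu, mul_one, Real.norm_eq_abs, sq_abs]
    have hru1 : ‖r • u‖ < 1 := by nlinarith [norm_nonneg (r • u)]
    have hq2 := qlast_sq hru1
    have hqp := qlast_pos hru1
    have hq : 1 / 2 ≤ qlast (r • u) := by nlinarith
    have hin : ⟪r • u, v⟫ ^ 2 ≤ 1 := by
      have := abs_real_inner_le_norm (r • u) v
      rw [hv, mul_one] at this
      rw [← sq_abs]
      exact pow_le_one₀ (abs_nonneg _) (this.trans hru1.le)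
    have hk : |‖v‖ ^ 2 / qlast (r • u) + ⟪r • u, v⟫ ^ 2 / qlast (r • u) ^ 3| ≤ 10 := by
      rw [abs_of_nonneg (by positivity), hv, one_pow]
      have k1 : 1 / qlast (r • u) ≤ 1 / (1 / 2) :=
        div_le_div₀ zero_le_one le_rfl (by norm_num) hq
      have k2 : ⟪r • u, v⟫ ^ 2 / qlast (r • u) ^ 3 ≤ 1 / (1 / 2) ^ 3 :=
        div_le_div₀ zero_le_one hin (by norm_num) (pow_le_pow_left₀ (by norm_num) hq 3)
      norm_num at k1 k2 ⊢
      linarith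
    simp only [hz, zero_mul, mul_zero, sub_zero, zero_sub]
    unfold hTerm
    have h1 := abs_tanh_mul_le (zval a b (r • u) / μ)
      (b * (‖v‖ ^ 2 / qlast (r • u) + ⟪r • u, v⟫ ^ 2 / qlast (r • u) ^ 3))
    rw [abs_mul b] at h1
    have h2 := (le_abs_self _).trans h1
    have h3 : 0 ≤ μ⁻¹ * ((1 - Real.tanh (zval a b (r • u) / μ) ^ 2) *
        (⟪v, a⟫ - b * (⟪r • u, v⟫ / qlast (r • u))) ^ 2) :=
      mul_nonneg (by positivity) (mul_nonneg (one_sub_tanh_sq_nonneg _) (sq_nonneg _))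
    have h4 := mul_le_mul_of_nonneg_left hk (abs_nonneg b)
    linarith

lemma integrable_fun_sub {α : Type*} [MeasurableSpace α] {ν : Measure α} {f g : α → ℝ}
    (hf : Integrable f ν) (hg : Integrable g ν) : Integrable (fun x => f x - g x) ν :=
  hf.sub hg

lemma expect_hTerm_ge (h0 : 0 ≤ θ) (h1 : θ ≤ 1 / 2) (hμ : 0 < μ) (hμ1 : μ ≤ 1 / 200)
    {w v : EuclideanSpace ℝ (Fin m)} (hv : ‖v‖ = 1) (hw : 32 * ‖w‖ ^ 2 ≤ μ ^ 2) :
    2 / 5 * θ / μ ≤ ∫ x, hTerm μ (headVec x) (x (Fin.last m)) w v ∂(bgVec θ (m + 1)) := by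
  obtain ⟨u, hu, hwu⟩ : ∃ u : EuclideanSpace ℝ (Fin m), ‖u‖ = 1 ∧ w = ‖w‖ • u := by
    by_cases h : w = 0
    · exact ⟨v, hv, by simp [h]⟩
    · have hn : ‖w‖ ≠ 0 := norm_ne_zero_iff.2 h
      exact ⟨‖w‖⁻¹ • w, by rw [norm_smul, norm_inv, norm_norm, inv_mul_cancel₀ hn],
        by rw [smul_smul, mul_inv_cancel₀ hn, one_smul]⟩
  have hw1 : ‖w‖ ^ 2 ≤ 1 / 4 := by nlinarith
  have hw2 : ‖w‖ < 1 := by nlinarith [norm_nonneg w]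
  have h1' : θ ≤ 1 := by linarith
  have i1 := (integrable_head_last v hv.le h0 h1' (measurable_zeroInd_mul_pow 2)
    exp_bound_sq).const_mul μ⁻¹
  have i2 := (integrable_head_last u hu.le h0 h1' (measurable_zeroInd_mul_pow 4)
    exp_bound_pow_four).const_mul (μ⁻¹ / 64)
  have i3 := (integrable_head_last v hv.le h0 h1' (measurable_zeroInd_mul_pow 4)
    exp_bound_pow_four).const_mul (μ⁻¹ / 64)
  have i4 := (integrable_head_last v hv.le h0 h1' measurable_abs_snd exp_bound_abs_snd).const_mul 10
  have i12 := integrable_fun_sub i1 i2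
  have i13 := integrable_fun_sub i12 i3
  have iH : Integrable (fun x => hTerm μ (headVec x) (x (Fin.last m)) w v) (bgVec θ (m + 1)) :=
    integrable_of_envelope h0 h1' hv (measurable_hTerm w v)
      fun x => abs_hTerm_le hμ (qlast_pos hw2) x hv hw2 le_rfl
  have hmono := integral_mono (integrable_fun_sub i13 i4) iH fun x => by
    have := hTerm_lower hμ hu hv hw hw1 (headVec x) (x (Fin.last m))
    rw [← hwu] at this
    exact this
  rw [integral_sub i13 i4, integral_sub i12 i3, integral_sub i1 i2, integral_const_mul,
    integral_const_mul, integral_const_mul, integral_const_mul] at hmono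
  have e1 := expect_zeroInd_sq_ge h0 h1' hv
  have e2 := expect_zeroInd_pow_four_le h0 h1' hu
  have e3 := expect_zeroInd_pow_four_le h0 h1' hv
  have e4 := expect_abs_last_le h0 h1' hv
  refine le_trans ?_ hmono
  have hi : 0 < μ⁻¹ := by positivity
  have hi2 : 200 ≤ μ⁻¹ := by
    rw [le_inv_comm₀ (by norm_num) hμ]
    linarith
  have f1 := mul_le_mul_of_nonneg_left e1 hi.le
  have f2 := mul_le_mul_of_nonneg_left e2 (by positivity : 0 ≤ μ⁻¹ / 64)
  have f3 := mul_le_mul_of_nonneg_left e3 (by positivity : 0 ≤ μ⁻¹ / 64)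
  have f5 : 1 / 2 * (μ⁻¹ * θ) ≤ (1 - θ) * (μ⁻¹ * θ) :=
    mul_le_mul_of_nonneg_right (by linarith) (by positivity)
  have f6 := mul_le_mul_of_nonneg_right hi2 h0
  rw [div_eq_mul_inv]
  nlinarith

/-- Sub-Gaussian moment bound for a coordinate of the gradient at the origin. -/
lemma integral_exp_tanh_mul_le (h0 : 0 ≤ θ) (h1 : θ ≤ 1) (l : ℝ) {v : EuclideanSpace ℝ (Fin m)}
    (hv : ‖v‖ = 1) :
    Integrable (fun x => exp (l * (Real.tanh (x (Fin.last m) / μ) * ⟪v, headVec x⟫)))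
      (bgVec θ (m + 1)) ∧
    ∫ x, exp (l * (Real.tanh (x (Fin.last m) / μ) * ⟪v, headVec x⟫)) ∂(bgVec θ (m + 1))
      ≤ exp (l ^ 2 / 2) := by
  let F : ℝ → ℝ → ℝ := fun a b => exp (l * (Real.tanh (b / μ) * a))
  have hF : Measurable (Function.uncurry F) := by
    have := continuous_tanh
    exact Continuous.measurable (by unfold F Function.uncurry; fun_prop)
  have hb : ∀ a b, |F a b| ≤ exp (2 * l ^ 2) * exp ((a ^ 2 + b ^ 2) / 8) := by
    intro a b
    rw [abs_of_pos (Real.exp_pos _), ← Real.exp_add]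
    refine Real.exp_le_exp.2 ?_
    have h1 := (le_abs_self _).trans (abs_tanh_mul_le (b / μ) (l * a))
    have h2 : |l * a| ≤ 2 * l ^ 2 + a ^ 2 / 8 := by
      rw [abs_le]
      constructor <;> nlinarith [sq_nonneg (4 * l + a), sq_nonneg (4 * l - a)]
    nlinarith [sq_nonneg b]
  refine ⟨integrable_head_last v hv.le h0 h1 hF hb, ?_⟩
  have := integral_head_last_le (F := F) (c₀ := exp (l ^ 2 / 2)) (c₁ := 0) v hv h0 h1 hF hb
    fun s hs0 hs1 => by
      unfold condExpect
      have hA : ∫ z : ℝ × ℝ, F (s * z.1) z.2 ∂(stdG.prod stdG) ≤ exp (l ^ 2 / 2) := by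
        have hI := integrable_stdG_prod hF hb hs0 hs1
        rw [integral_prod_symm _ hI]
        refine (integral_mono hI.integral_prod_right (integrable_const (exp (l ^ 2 / 2)))
          fun y => ?_).trans_eq (by simp)
        have hm := congrFun (mgf_fun_id_gaussianReal (μ := 0) (v := 1)) (l * Real.tanh (y / μ) * s)
        unfold mgf at hm
        have hFe : ∀ z, F (s * z) y = exp (l * Real.tanh (y / μ) * s * z) := fun z => by
          simp only [F]; ring_nf
        simp only [hFe]
        rw [hm]
        refine Real.exp_le_exp.2 ?_
        have ht : Real.tanh (y / μ) ^ 2 ≤ 1 := by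
          rw [← sq_abs]; exact pow_le_one₀ (abs_nonneg _) (abs_tanh_le_one _)
        have hs : s ^ 2 ≤ 1 := pow_le_one₀ hs0 hs1
        have : Real.tanh (y / μ) ^ 2 * s ^ 2 ≤ 1 := mul_le_one₀ ht (sq_nonneg s) hs
        have := mul_le_mul_of_nonneg_left this (sq_nonneg l)
        simp only [zero_mul, zero_add, NNReal.coe_one, one_mul]
        nlinarith
      have hB : ∫ z, F (s * z) 0 ∂stdG = 1 := by simp [F]
      rw [hB]
      have : 1 ≤ exp (l ^ 2 / 2) := Real.one_le_exp (by positivity)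
      nlinarith
  simpa [F] using this

end Expectations

section Concentration

variable {m n p : ℕ} {θ μ : ℝ}

/-- The columns of a Bernoulli–Gaussian matrix are i.i.d. Bernoulli–Gaussian vectors. -/
lemma map_columns_bgMatrix :
    (bgMatrix θ n p).map (fun X k i => X i k) = Measure.pi fun _ : Fin p => bgVec θ n := by
  have hmeas : Measurable (fun (X : Fin n → Fin p → ℝ) (k : Fin p) (i : Fin n) => X i k) := by
    fun_prop
  symm
  refine Measure.pi_eq_generateFrom (C := fun _ => Set.pi Set.univ '' Set.pi Set.univ
    fun _ : Fin n => {s : Set ℝ | MeasurableSet s}) (fun _ => generateFrom_pi)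
    (fun _ => isPiSystem_pi) (fun _ => ⟨fun _ => Set.univ, fun _ => ⟨fun _ => Set.univ, by simp⟩,
      fun _ => by unfold bgVec; exact measure_lt_top _ _, Set.iUnion_const _⟩) ?_
  intro s hs
  choose t ht hts using hs
  have hset : (fun (X : Fin n → Fin p → ℝ) (k : Fin p) (i : Fin n) => X i k) ⁻¹' Set.univ.pi s =
      Set.univ.pi fun i => Set.univ.pi fun k => t k i := by
    ext X
    simp only [Set.mem_preimage, Set.mem_pi, Set.mem_univ, true_imp_iff, ← hts]
    exact forall_comm
  have ht' : ∀ k i, MeasurableSet (t k i) := fun k i => ht k i trivial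
  rw [Measure.map_apply hmeas (MeasurableSet.univ_pi fun k => hts k ▸
    MeasurableSet.univ_pi fun i => ht' k i), hset, bgMatrix, Measure.pi_pi]
  simp_rw [Measure.pi_pi, ← hts, bgVec, Measure.pi_pi]
  exact Finset.prod_comm

lemma exp_le_one_add_add_sq_mul (y : ℝ) : exp y ≤ 1 + y + y ^ 2 * exp |y| := by
  have h := Complex.norm_exp_sub_sum_le_norm_mul_exp (y : ℂ) 2
  simp only [Finset.sum_range_succ, Finset.range_zero, Finset.sum_empty, pow_zero,
    Nat.factorial, pow_one, Nat.cast_one, div_one, zero_add, mul_one, Complex.norm_real] at h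
  rw [← Complex.ofReal_exp, ← Complex.ofReal_one, ← Complex.ofReal_add, ← Complex.ofReal_sub,
    Complex.norm_real, Real.norm_eq_abs, Real.norm_eq_abs, sq_abs] at h
  linarith [le_of_abs_le h]

/-- Chernoff's bound for the columns of a Bernoulli–Gaussian matrix. -/
lemma bgMatrix_sum_le (h0 : 0 ≤ θ) (h1 : θ ≤ 1) {W : (Fin n → ℝ) → ℝ} (hW : Measurable W)
    {s c : ℝ} (hs : 0 ≤ s) (hi : Integrable (fun x => exp (-(s * W x))) (bgVec θ n))
    (hc : ∫ x, exp (-(s * W x)) ∂(bgVec θ n) ≤ exp (-c)) (t : ℝ) :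
    bgMatrix θ n p {X | ∑ k, W (fun i => X i k) ≤ t} ≤ ENNReal.ofReal (exp (s * t - p * c)) := by
  have := isProbabilityMeasure_bg h0 h1
  have : IsProbabilityMeasure (bgVec θ n) := by unfold bgVec; infer_instance
  have hmeas : Measurable (fun (X : Fin n → Fin p → ℝ) (k : Fin p) (i : Fin n) => X i k) := by
    fun_prop
  have hA : MeasurableSet {x : Fin p → Fin n → ℝ | ∑ k, W (x k) ≤ t} :=
    measurableSet_le (by fun_prop) measurable_const
  have e : bgMatrix θ n p {X | ∑ k, W (fun i => X i k) ≤ t} =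
      Measure.pi (fun _ : Fin p => bgVec θ n) {x | ∑ k, W (x k) ≤ t} := by
    rw [← map_columns_bgMatrix, Measure.map_apply hmeas hA]
    rfl
  rw [e]
  have hprod : Integrable (fun x : Fin p → Fin n → ℝ => ∏ k, exp (-(s * W (x k))))
      (Measure.pi fun _ => bgVec θ n) := Integrable.fintype_prod fun _ => hi
  have hmk := mul_meas_ge_le_integral_of_nonneg (μ := Measure.pi fun _ : Fin p => bgVec θ n)
    (f := fun x => ∏ k, exp (-(s * W (x k)))) (ae_of_all _ fun x => by positivity) hprod
    (exp (-(s * t)))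
  rw [integral_fintype_prod_eq_pow (fun x => exp (-(s * W x))), Fintype.card_fin] at hmk
  have hsub : {x : Fin p → Fin n → ℝ | ∑ k, W (x k) ≤ t} ⊆
      {x | exp (-(s * t)) ≤ ∏ k, exp (-(s * W (x k)))} := by
    intro x hx
    rw [Set.mem_ofPred_eq, ← Real.exp_sum, Real.exp_le_exp, Finset.sum_neg_distrib, ← Finset.mul_sum]
    exact neg_le_neg (mul_le_mul_of_nonneg_left hx hs)
  have hreal := measureReal_mono (μ := Measure.pi fun _ : Fin p => bgVec θ n) hsub
  have hpow : (∫ x, exp (-(s * W x)) ∂(bgVec θ n)) ^ p ≤ exp (-(p * c)) := by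
    calc _ ≤ exp (-c) ^ p :=
          pow_le_pow_left₀ (integral_nonneg fun _ => (Real.exp_pos _).le) hc p
      _ = exp (-(p * c)) := by rw [← Real.exp_nat_mul]; ring_nf
  rw [← ofReal_measureReal]
  refine ENNReal.ofReal_le_ofReal (hreal.trans ?_)
  have h2 := hmk.trans hpow
  have h3 : exp (s * t - p * c) = exp (s * t) * exp (-(p * c)) := by
    rw [← Real.exp_add]; ring_nf
  rw [h3]
  have h4 := mul_le_mul_of_nonneg_left h2 (Real.exp_pos (s * t)).le
  rwa [← mul_assoc, ← Real.exp_add, add_neg_cancel, Real.exp_zero, one_mul] at h4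

lemma sq_le_eight_mul_exp_half {t : ℝ} (ht : 0 ≤ t) : t ^ 2 ≤ 8 * exp (t / 2) := by
  have := Real.quadratic_le_exp_of_nonneg (x := t / 2) (by positivity)
  nlinarith

/-- A moment generating function bound for sub-exponential variables. -/
lemma integral_exp_neg_mul_le {α : Type*} [MeasurableSpace α] {ν : Measure α}
    [IsProbabilityMeasure ν] {W : α → ℝ} (hW : Measurable W) {K M κ s : ℝ} (hK : 0 < K)
    (hi : Integrable (fun x => exp (|W x| / K)) ν) (hM : ∫ x, exp (|W x| / K) ∂ν ≤ M)
    (hκ : κ ≤ ∫ x, W x ∂ν) (hs : 0 ≤ s) (hsK : 2 * (s * K) ≤ 1) :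
    Integrable (fun x => exp (-(s * W x))) ν ∧
      ∫ x, exp (-(s * W x)) ∂ν ≤ exp (-(s * κ - 8 * s ^ 2 * K ^ 2 * M)) := by
  have hhalf : ∀ x, s * |W x| ≤ |W x| / K / 2 := by
    intro x
    have : s ≤ 1 / K / 2 := by
      rw [div_div, le_div_iff₀ (by positivity)]
      linarith
    calc _ ≤ 1 / K / 2 * |W x| := mul_le_mul_of_nonneg_right this (abs_nonneg _)
      _ = _ := by ring
  have hpos : ∀ x, 0 ≤ |W x| / K := fun x => by positivity
  have hiE : Integrable (fun x => exp (-(s * W x))) ν := by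
    refine hi.mono' (by fun_prop) (ae_of_all _ fun x => ?_)
    rw [Real.norm_of_nonneg (Real.exp_pos _).le]
    refine Real.exp_le_exp.2 ?_
    have h1 := hhalf x
    have h2 := hpos x
    have h3 := mul_le_mul_of_nonneg_left (neg_le_abs (W x)) hs
    linarith
  have hiW : Integrable W ν := by
    refine (hi.const_mul K).mono' hW.aestronglyMeasurable (ae_of_all _ fun x => ?_)
    have := Real.add_one_le_exp (|W x| / K)
    rw [Real.norm_eq_abs]
    calc |W x| = K * (|W x| / K) := by field_simp
      _ ≤ _ := mul_le_mul_of_nonneg_left (by linarith) hK.le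
  refine ⟨hiE, ?_⟩
  have hpt : ∀ x, exp (-(s * W x)) ≤
      (1 + -s * W x) + 8 * s ^ 2 * K ^ 2 * exp (|W x| / K) := by
    intro x
    refine (exp_le_one_add_add_sq_mul _).trans ?_
    rw [abs_neg, abs_mul, abs_of_nonneg hs]
    have e1 : (s * W x) ^ 2 ≤ s ^ 2 * K ^ 2 * (8 * exp (|W x| / K / 2)) := by
      have := mul_le_mul_of_nonneg_left (sq_le_eight_mul_exp_half (hpos x))
        (by positivity : 0 ≤ s ^ 2 * K ^ 2)
      refine le_trans (le_of_eq ?_) this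
      rw [div_pow, sq_abs]
      field_simp
    have e2 : exp (s * |W x|) ≤ exp (|W x| / K / 2) := Real.exp_le_exp.2 (hhalf x)
    have e3 := mul_le_mul e1 e2 (Real.exp_pos _).le (by positivity)
    have e4 : exp (|W x| / K / 2) * exp (|W x| / K / 2) = exp (|W x| / K) := by
      rw [← Real.exp_add, add_halves]
    rw [neg_sq]
    calc 1 + -(s * W x) + (s * W x) ^ 2 * exp (s * |W x|)
        ≤ 1 + -(s * W x) + s ^ 2 * K ^ 2 * (8 * exp (|W x| / K / 2)) * exp (|W x| / K / 2) := by
          linarith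
      _ = 1 + -(s * W x) + 8 * s ^ 2 * K ^ 2 * (exp (|W x| / K / 2) * exp (|W x| / K / 2)) := by
          ring
      _ = _ := by rw [e4]; ring
  have hi1 : Integrable (fun x => 1 + -s * W x) ν := (integrable_const _).add (hiW.const_mul _)
  have hmono := integral_mono hiE (hi1.fun_add (hi.const_mul (8 * s ^ 2 * K ^ 2))) hpt
  rw [integral_add hi1 (hi.const_mul _), integral_add (integrable_const _) (hiW.const_mul _),
    integral_const_mul, integral_const_mul] at hmono
  simp only [integral_const, probReal_univ, smul_eq_mul, mul_one] at hmono
  refine hmono.trans ?_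
  have h1 := mul_le_mul_of_nonneg_left hM (by positivity : 0 ≤ 8 * s ^ 2 * K ^ 2)
  have h2 := mul_le_mul_of_nonneg_left hκ hs
  have h3 := Real.add_one_le_exp (-(s * κ - 8 * s ^ 2 * K ^ 2 * M))
  linarith

/-- Bernstein's lower-tail bound for the columns of a Bernoulli–Gaussian matrix. -/
lemma bgMatrix_sum_le_half (h0 : 0 ≤ θ) (h1 : θ ≤ 1) {W : (Fin n → ℝ) → ℝ} (hW : Measurable W)
    {K M κ : ℝ} (hK : 0 < K) (hM1 : 1 ≤ M)
    (hi : Integrable (fun x => exp (|W x| / K)) (bgVec θ n))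
    (hM : ∫ x, exp (|W x| / K) ∂(bgVec θ n) ≤ M) (hκ0 : 0 ≤ κ) (hκK : κ ≤ K)
    (hκ : κ ≤ ∫ x, W x ∂(bgVec θ n)) :
    bgMatrix θ n p {X | ∑ k, W (fun i => X i k) ≤ p * (κ / 2)} ≤
      ENNReal.ofReal (exp (-(p * (κ ^ 2 / (128 * K ^ 2 * M))))) := by
  have := isProbabilityMeasure_bg h0 h1
  have : IsProbabilityMeasure (bgVec θ n) := by unfold bgVec; infer_instance
  have hM0 : 0 < M := by linarith
  have hs : 0 ≤ κ / (32 * K ^ 2 * M) := by positivity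
  have hsK : 2 * (κ / (32 * K ^ 2 * M) * K) ≤ 1 := by
    have : 2 * (κ / (32 * K ^ 2 * M) * K) = κ / (16 * K * M) := by field_simp; ring
    rw [this, div_le_one (by positivity)]
    nlinarith
  obtain ⟨i1, i2⟩ := integral_exp_neg_mul_le hW hK hi hM hκ hs hsK
  refine (bgMatrix_sum_le h0 h1 hW hs i1 i2 _).trans_eq ?_
  congr 2
  field_simp
  ring

end Concentration

section Nets

/-- A set with coordinates in `[-1, 1]` has an internal net indexed by grid cells. -/
lemma exists_net {α ι : Type*} [Fintype ι] (φ : α → ι → ℝ) (S : Set α)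
    (hS : ∀ a ∈ S, ∀ i, |φ a i| ≤ 1) {N : ℕ} (hN : 0 < N) :
    ∃ T : Finset α, ↑T ⊆ S ∧ T.card ≤ (2 * N + 1) ^ Fintype.card ι ∧
      ∀ s ∈ S, ∃ t ∈ T, ∀ i, |φ s i - φ t i| ≤ 1 / N := by
  classical
  let c : α → ι → ℤ := fun a i => ⌊(N : ℝ) * φ a i⌋
  have hN' : (0 : ℝ) < N := by exact_mod_cast hN
  let G : Finset (ι → ℤ) := Fintype.piFinset fun _ => Finset.Icc (-(N : ℤ)) N
  have hG : c '' S ⊆ (G : Set (ι → ℤ)) := by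
    rintro _ ⟨a, ha, rfl⟩
    simp only [G, Finset.mem_coe, Fintype.mem_piFinset, Finset.mem_Icc]
    intro i
    have h := abs_le.1 (hS a ha i)
    refine ⟨Int.le_floor.2 ?_, ?_⟩
    · push_cast
      nlinarith [h.1]
    · have : ((⌊(N : ℝ) * φ a i⌋ : ℤ) : ℝ) ≤ N := (Int.floor_le _).trans (by nlinarith [h.2])
      exact_mod_cast this
  obtain ⟨S', hS', hb⟩ := Set.exists_subset_bijOn S c
  have hfin : S'.Finite := by
    refine Set.Finite.of_finite_image ?_ hb.injOn
    rw [hb.image_eq]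
    exact G.finite_toSet.subset hG
  refine ⟨hfin.toFinset, by simpa using hS', ?_, ?_⟩
  · have h1 : (hfin.toFinset.image c) ⊆ G := by
      intro y hy
      obtain ⟨a, ha, rfl⟩ := Finset.mem_image.1 hy
      exact hG ⟨a, hS' (by simpa using ha), rfl⟩
    have h2 := Finset.card_le_card h1
    rw [Finset.card_image_of_injOn (by simpa using hb.injOn)] at h2
    refine h2.trans_eq ?_
    simp only [G, Fintype.card_piFinset, Int.card_Icc, Finset.prod_const, Finset.card_univ]
    congr 1
    omega
  · intro s hs
    obtain ⟨t, ht, hts⟩ := hb.surjOn ⟨s, hs, rfl⟩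
    refine ⟨t, by simpa using ht, fun i => ?_⟩
    have h := Int.abs_sub_lt_one_of_floor_eq_floor (congrFun hts i)
    rw [← mul_sub, abs_mul, abs_of_pos hN'] at h
    rw [le_div_iff₀ hN', abs_sub_comm]
    linarith

lemma norm_le_card_mul {m : ℕ} (w : EuclideanSpace ℝ (Fin m)) {c : ℝ} (hc : ∀ i, |w i| ≤ c) :
    ‖w‖ ≤ √m * c := by
  by_cases hm : m = 0
  · subst hm
    simp [Subsingleton.elim w 0]
  have hc0 : 0 ≤ c := (abs_nonneg _).trans (hc ⟨0, Nat.pos_of_ne_zero hm⟩)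
  rw [EuclideanSpace.norm_eq]
  refine (Real.sqrt_le_sqrt (Finset.sum_le_sum (g := fun _ => c ^ 2) fun i _ => ?_)).trans_eq ?_
  · rw [Real.norm_eq_abs]
    exact pow_le_pow_left₀ (abs_nonneg _) (hc i) 2
  · rw [Finset.sum_const, Finset.card_univ, Fintype.card_fin, nsmul_eq_mul,
      Real.sqrt_mul (Nat.cast_nonneg _), Real.sqrt_sq hc0]

end Nets

section Uniform

variable {m p : ℕ} {θ μ : ℝ}

/-- Uniform lower bound for empirical averages over a parameter set. -/
lemma bgMatrix_exists_sum_le (h0 : 0 ≤ θ) (h1 : θ ≤ 1)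
    {W : EuclideanSpace ℝ (Fin m) → EuclideanSpace ℝ (Fin m) → (Fin (m + 1) → ℝ) → ℝ}
    {S : Set (EuclideanSpace ℝ (Fin m) × EuclideanSpace ℝ (Fin m))} {K κ Λ R : ℝ} {N : ℕ}
    (hN : 0 < N) (hK : 0 < K) (hκ0 : 0 ≤ κ) (hκK : κ ≤ K) (hΛ : 0 ≤ Λ)
    (hSw : ∀ a ∈ S, ‖a.1‖ ≤ 1) (hSv : ∀ a ∈ S, ‖a.2‖ = 1)
    (hmeas : ∀ a ∈ S, Measurable (W a.1 a.2))
    (henv : ∀ a ∈ S, ∀ x, |W a.1 a.2 x| ≤ K / 8 * envelope a.2 x)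
    (hexp : ∀ a ∈ S, κ ≤ ∫ x, W a.1 a.2 x ∂(bgVec θ (m + 1)))
    (hLip : ∀ a ∈ S, ∀ b ∈ S, ∀ x : Fin (m + 1) → ℝ, (∀ i, |x i| ≤ R) →
      |W a.1 a.2 x - W b.1 b.2 x| ≤ Λ * (‖a.1 - b.1‖ + ‖a.2 - b.2‖))
    (hΛN : Λ * (2 * (√m / N)) ≤ κ / 4) :
    bgMatrix θ (m + 1) p {X | (∀ i k, |X i k| ≤ R) ∧
        ∃ a ∈ S, ∑ k, W a.1 a.2 (fun i => X i k) ≤ p * (κ / 4)} ≤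
      ENNReal.ofReal ((2 * N + 1) ^ (2 * m) *
        exp (-(p * (κ ^ 2 / (128 * K ^ 2 * envConst))))) := by
  obtain ⟨T, hTS, hTc, hT⟩ := exists_net
    (fun (a : EuclideanSpace ℝ (Fin m) × EuclideanSpace ℝ (Fin m)) (i : Fin m ⊕ Fin m) =>
      Sum.elim (fun i => a.1 i) (fun i => a.2 i) i) S
    (by
      rintro a ha (i | i)
      · exact ((PiLp.norm_apply_le a.1 i).trans (hSw a ha))
      · exact ((PiLp.norm_apply_le a.2 i).trans (hSv a ha).le)) hN
  have hsub : {X : Fin (m + 1) → Fin p → ℝ | (∀ i k, |X i k| ≤ R) ∧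
        ∃ a ∈ S, ∑ k, W a.1 a.2 (fun i => X i k) ≤ p * (κ / 4)} ⊆
      ⋃ a ∈ T, {X | ∑ k, W a.1 a.2 (fun i => X i k) ≤ p * (κ / 2)} := by
    rintro X ⟨hX, a, ha, hsum⟩
    obtain ⟨b, hb, hab⟩ := hT a ha
    simp only [Set.mem_iUnion]
    refine ⟨b, hb, ?_⟩
    have d1 : ‖a.1 - b.1‖ ≤ √m / N := by
      have := norm_le_card_mul (a.1 - b.1) (c := 1 / N) fun i => hab (Sum.inl i)
      rwa [mul_one_div] at this
    have d2 : ‖a.2 - b.2‖ ≤ √m / N := by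
      have := norm_le_card_mul (a.2 - b.2) (c := 1 / N) fun i => hab (Sum.inr i)
      rwa [mul_one_div] at this
    have hk : ∀ k ∈ Finset.univ, W b.1 b.2 (fun i => X i k) ≤
        W a.1 a.2 (fun i => X i k) + κ / 4 := by
      intro k _
      have h := neg_le_of_abs_le (hLip a ha b (hTS hb) (fun i => X i k) fun i => hX i k)
      have h2 : Λ * (‖a.1 - b.1‖ + ‖a.2 - b.2‖) ≤ Λ * (2 * (√m / N)) :=
        mul_le_mul_of_nonneg_left (by linarith) hΛ
      linarith
    have := Finset.sum_le_sum hk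
    rw [Finset.sum_add_distrib, Finset.sum_const, Finset.card_univ, Fintype.card_fin,
      nsmul_eq_mul] at this
    change ∑ k, W b.1 b.2 (fun i => X i k) ≤ p * (κ / 2)
    linarith
  have hone : ∀ a ∈ T, bgMatrix θ (m + 1) p {X | ∑ k, W a.1 a.2 (fun i => X i k) ≤ p * (κ / 2)} ≤
      ENNReal.ofReal (exp (-(p * (κ ^ 2 / (128 * K ^ 2 * envConst))))) := by
    intro a ha
    have ha' := hTS ha
    have hle : ∀ x, exp (|W a.1 a.2 x| / K) ≤ exp (envelope a.2 x / 8) := by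
      intro x
      refine Real.exp_le_exp.2 ?_
      rw [div_le_iff₀ hK]
      linarith [henv a ha' x]
    have hm := hmeas a ha'
    have hi : Integrable (fun x => exp (|W a.1 a.2 x| / K)) (bgVec θ (m + 1)) :=
      (integrable_exp_envelope h0 h1 (hSv a ha')).mono' (by fun_prop)
        (ae_of_all _ fun x => by
          rw [Real.norm_of_nonneg (Real.exp_pos _).le]
          exact hle x)
    exact bgMatrix_sum_le_half h0 h1 hm hK one_le_envConst hi
      ((integral_mono hi (integrable_exp_envelope h0 h1 (hSv a ha')) hle).trans
        (integral_exp_envelope_le h0 h1 (hSv a ha'))) hκ0 hκK (hexp a ha')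
  refine (measure_mono hsub).trans ((measure_biUnion_finset_le _ _).trans
    ((Finset.sum_le_sum hone).trans ?_))
  rw [Finset.sum_const, nsmul_eq_mul, ENNReal.ofReal_mul (by positivity)]
  gcongr
  rw [← ENNReal.ofReal_natCast]
  refine ENNReal.ofReal_le_ofReal ?_
  have : (T.card : ℝ) ≤ ((2 * N + 1) ^ Fintype.card (Fin m ⊕ Fin m) : ℕ) := by exact_mod_cast hTc
  rw [Fintype.card_sum, Fintype.card_fin, ← two_mul] at this
  exact_mod_cast this

/-- With high probability, all entries of a Bernoulli–Gaussian matrix are small. -/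
lemma bgMatrix_exists_abs_gt {n : ℕ} (h0 : 0 ≤ θ) (h1 : θ ≤ 1) {R : ℝ} (hR : 0 ≤ R) :
    bgMatrix θ n p {X | ∃ i k, R < |X i k|} ≤
      ENNReal.ofReal (n * p * (gaussExpMoment * exp (-(R ^ 2 / 8)))) := by
  have := isProbabilityMeasure_bg h0 h1
  have hsub : {X : Fin n → Fin p → ℝ | ∃ i k, R < |X i k|} ⊆
      ⋃ i ∈ (Finset.univ : Finset (Fin n)), ⋃ k ∈ (Finset.univ : Finset (Fin p)),
        {X | R < |X i k|} := by
    rintro X ⟨i, k, h⟩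
    simp only [Set.mem_iUnion]
    exact ⟨i, Finset.mem_univ _, k, Finset.mem_univ _, h⟩
  have hi : Integrable (fun x : ℝ => exp (x ^ 2 / 8)) (bg θ) := integrable_bg integrable_exp_sq_stdG
  have hInt : ∫ x : ℝ, exp (x ^ 2 / 8) ∂(bg θ) ≤ gaussExpMoment := by
    rw [integral_bg h0 h1 integrable_exp_sq_stdG]
    have := one_le_gaussExpMoment
    unfold gaussExpMoment at *
    simp only [ne_eq, OfNat.ofNat_ne_zero, not_false_eq_true, zero_pow, zero_div, Real.exp_zero]
    nlinarith
  have hA : MeasurableSet {x : ℝ | R < |x|} := measurableSet_lt measurable_const (by fun_prop)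
  have hbg : bg θ {x | R < |x|} ≤ ENNReal.ofReal (gaussExpMoment * exp (-(R ^ 2 / 8))) := by
    have hmk := mul_meas_ge_le_integral_of_nonneg (μ := bg θ)
      (ae_of_all _ fun x : ℝ => (Real.exp_pos (x ^ 2 / 8)).le) hi (exp (R ^ 2 / 8))
    have hs : {x : ℝ | R < |x|} ⊆ {x | exp (R ^ 2 / 8) ≤ exp (x ^ 2 / 8)} := by
      intro x hx
      have h2 : R ^ 2 ≤ |x| ^ 2 := pow_le_pow_left₀ hR (le_of_lt hx) 2
      rw [sq_abs] at h2
      exact Real.exp_le_exp.2 (by linarith)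
    have hreal := measureReal_mono (μ := bg θ) hs
    rw [← ofReal_measureReal]
    refine ENNReal.ofReal_le_ofReal (hreal.trans ?_)
    rw [Real.exp_neg, ← div_eq_mul_inv, le_div_iff₀ (Real.exp_pos _), mul_comm]
    exact hmk.trans hInt
  have hone : ∀ i k, bgMatrix θ n p {X | R < |X i k|} = bg θ {x | R < |x|} := by
    intro i k
    have e1 := (measurePreserving_eval (fun _ : Fin n => Measure.pi fun _ : Fin p => bg θ) i)
    have e2 := (measurePreserving_eval (fun _ : Fin p => bg θ) k)
    exact (e2.comp e1).measure_preimage hA.nullMeasurableSet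
  refine (measure_mono hsub).trans ((measure_biUnion_finset_le _ _).trans
    ((Finset.sum_le_sum fun i _ => (measure_biUnion_finset_le _ _).trans
      (Finset.sum_le_sum fun k _ => (hone i k).trans_le hbg)).trans_eq ?_))
  rw [Finset.sum_const, Finset.sum_const, Finset.card_univ, Finset.card_univ, Fintype.card_fin,
    Fintype.card_fin, nsmul_eq_mul, nsmul_eq_mul, ← mul_assoc,
    ENNReal.ofReal_mul (p := n * p) (by positivity), ENNReal.ofReal_mul (p := n) (by positivity),
    ENNReal.ofReal_natCast, ENNReal.ofReal_natCast]

lemma dTerm_zero (a v : EuclideanSpace ℝ (Fin m)) (b : ℝ) :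
    dTerm μ a b 0 v = Real.tanh (b / μ) * ⟪v, a⟫ := by
  simp [dTerm, zval, qlast]

/-- Sub-Gaussian tail of the gradient at the origin in a fixed direction. -/
lemma bgMatrix_sum_dTerm_zero_ge (h0 : 0 ≤ θ) (h1 : θ ≤ 1) {v : EuclideanSpace ℝ (Fin m)}
    (hv : ‖v‖ = 1) {τ : ℝ} (hτ : 0 ≤ τ) :
    bgMatrix θ (m + 1) p {X | p * τ ≤
        ∑ k, dTerm μ (headVec fun i => X i k) (X (Fin.last m) k) 0 v} ≤
      ENNReal.ofReal (exp (-(p * (τ ^ 2 / 2)))) := by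
  obtain ⟨i1, i2⟩ := integral_exp_tanh_mul_le (μ := μ) h0 h1 τ hv
  have hm : Measurable fun x : Fin (m + 1) → ℝ =>
      -dTerm μ (headVec x) (x (Fin.last m)) 0 v := (measurable_dTerm 0 v).neg
  have := bgMatrix_sum_le (p := p) h0 h1 hm hτ (c := -(τ ^ 2 / 2))
    (by simpa only [dTerm_zero, mul_neg, neg_neg] using i1)
    (by simpa only [dTerm_zero, mul_neg, neg_neg] using i2) (-(p * τ))
  have hset : {X : Fin (m + 1) → Fin p → ℝ | p * τ ≤
        ∑ k, dTerm μ (headVec fun i => X i k) (X (Fin.last m) k) 0 v} =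
      {X | ∑ k, -dTerm μ (headVec fun i => X i k) (X (Fin.last m) k) 0 v ≤ -(p * τ)} := by
    ext X
    simp only [Set.mem_ofPred_eq, Finset.sum_neg_distrib, neg_le_neg_iff]
  rw [hset]
  refine this.trans_eq ?_
  congr 2
  ring

/-- Tail of the gradient at the origin. -/
lemma bgMatrix_norm_gradg_zero_gt (h0 : 0 ≤ θ) (h1 : θ ≤ 1) (hμ : μ ≠ 0) (hp : 0 < p) {τ : ℝ}
    (hτ : 0 ≤ τ) :
    bgMatrix θ (m + 1) p {X | √m * τ < ‖gradg (m + 1) p μ (of X) 0‖} ≤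
      ENNReal.ofReal (2 * m * exp (-(p * (τ ^ 2 / 2)))) := by
  let e : Fin m × Bool → EuclideanSpace ℝ (Fin m) := fun j =>
    (if j.2 then (1 : ℝ) else -1) • EuclideanSpace.single j.1 (1 : ℝ)
  have he : ∀ j, ‖e j‖ = 1 := by
    rintro ⟨i, b⟩
    cases b <;> simp [e]
  have hp' : (0 : ℝ) < p := by exact_mod_cast hp
  have hsub : {X : Fin (m + 1) → Fin p → ℝ | √m * τ < ‖gradg (m + 1) p μ (of X) 0‖} ⊆
      ⋃ j ∈ (Finset.univ : Finset (Fin m × Bool)), {X | p * τ ≤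
        ∑ k, dTerm μ (headVec fun i => X i k) (X (Fin.last m) k) 0 (e j)} := by
    intro X hX
    by_contra hcon
    simp only [Set.mem_iUnion, not_exists, Set.mem_ofPred_eq, not_le] at hcon
    have hlt : ∀ j, ⟪e j, gradg (m + 1) p μ (of X) 0⟫ < τ := by
      intro j
      rw [inner_gradg X hμ (by simp) (e j), inv_mul_lt_iff₀ hp']
      exact hcon j (Finset.mem_univ _)
    refine absurd hX (not_lt.2 (norm_le_card_mul (c := τ) (gradg (m + 1) p μ (of X) 0)
      fun i => abs_le.2 ⟨?_, ?_⟩))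
    · have := hlt (i, false)
      simp only [e, Bool.false_eq_true, if_false, inner_smul_left,
        EuclideanSpace.inner_single_left] at this
      simp at this
      linarith
    · have := hlt (i, true)
      simp only [e, if_true, inner_smul_left, EuclideanSpace.inner_single_left] at this
      simp at this
      linarith
  refine (measure_mono hsub).trans ((measure_biUnion_finset_le _ _).trans
    ((Finset.sum_le_sum fun j _ => bgMatrix_sum_dTerm_zero_ge h0 h1 (he j) hτ).trans_eq ?_))
  rw [Finset.sum_const, Finset.card_univ, Fintype.card_prod, Fintype.card_fin, Fintype.card_bool,
    nsmul_eq_mul, ENNReal.ofReal_mul (by positivity)]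
  congr 1
  rw [← ENNReal.ofReal_natCast]
  congr 1
  push_cast
  ring

end Uniform

section Lipschitz

set_option linter.unusedSectionVars false

/-- Two numbers bounded by `A` and differing by at most `A * D`: the values of a bounded Lipschitz
function at two points at distance `D`. -/
structure BddLip (D A x y : ℝ) : Prop where
  left : |x| ≤ A
  right : |y| ≤ A
  sub : |x - y| ≤ A * D

namespace BddLip

variable {D A B x y x' y' : ℝ}

lemma nonneg (h : BddLip D A x y) : 0 ≤ A := (abs_nonneg _).trans h.left

lemma mono (hD : 0 ≤ D) (h : BddLip D A x y) (hAB : A ≤ B) : BddLip D B x y :=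
  ⟨h.left.trans hAB, h.right.trans hAB, h.sub.trans (mul_le_mul_of_nonneg_right hAB hD)⟩

lemma const (hD : 0 ≤ D) (h : |x| ≤ A) : BddLip D A x x :=
  ⟨h, h, by simpa using mul_nonneg ((abs_nonneg _).trans h) hD⟩

lemma add (h : BddLip D A x y) (h' : BddLip D B x' y') : BddLip D (A + B) (x + x') (y + y') := by
  refine ⟨(abs_add_le _ _).trans (add_le_add h.left h'.left),
    (abs_add_le _ _).trans (add_le_add h.right h'.right), ?_⟩
  rw [add_sub_add_comm, add_mul]
  exact (abs_add_le _ _).trans (add_le_add h.sub h'.sub)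

lemma neg (h : BddLip D A x y) : BddLip D A (-x) (-y) := by
  refine ⟨by simpa using h.left, by simpa using h.right, ?_⟩
  rw [← neg_sub', abs_neg]
  exact h.sub

lemma fun_sub (h : BddLip D A x y) (h' : BddLip D B x' y') :
    BddLip D (A + B) (x - x') (y - y') := by
  rw [sub_eq_add_neg, sub_eq_add_neg]
  exact h.add h'.neg

lemma mul (h : BddLip D A x y) (h' : BddLip D B x' y') :
    BddLip D (2 * (A * B)) (x * x') (y * y') := by
  have hA := h.nonneg
  have hB := h'.nonneg
  have hAB := mul_nonneg hA hB
  have b1 : |x * x'| ≤ A * B := by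
    rw [abs_mul]
    exact mul_le_mul h.left h'.left (abs_nonneg _) hA
  have b2 : |y * y'| ≤ A * B := by
    rw [abs_mul]
    exact mul_le_mul h.right h'.right (abs_nonneg _) hA
  refine ⟨by linarith, by linarith, ?_⟩
  have e : x * x' - y * y' = x * (x' - y') + (x - y) * y' := by ring
  rw [e]
  refine (abs_add_le _ _).trans ?_
  rw [abs_mul, abs_mul]
  have c1 := mul_le_mul h.left h'.sub (abs_nonneg _) hA
  have c2 := mul_le_mul h.sub h'.right (abs_nonneg _) ((abs_nonneg _).trans h.sub)
  linarith

lemma pow_two (h : BddLip D A x y) : BddLip D (2 * A ^ 2) (x ^ 2) (y ^ 2) := by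
  rw [sq, sq, sq]
  exact h.mul h

lemma const_mul (h : BddLip D A x y) {c : ℝ} (hc : 0 ≤ c) : BddLip D (c * A) (c * x) (c * y) := by
  refine ⟨?_, ?_, ?_⟩
  · rw [abs_mul, abs_of_nonneg hc]
    exact mul_le_mul_of_nonneg_left h.left hc
  · rw [abs_mul, abs_of_nonneg hc]
    exact mul_le_mul_of_nonneg_left h.right hc
  · rw [← mul_sub, abs_mul, abs_of_nonneg hc, mul_assoc]
    exact mul_le_mul_of_nonneg_left h.sub hc

lemma tanh_div (h : BddLip D A x y) {μ : ℝ} (hμ : 0 < μ) (hA : μ ≤ A) :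
    BddLip D (A / μ) (Real.tanh (x / μ)) (Real.tanh (y / μ)) := by
  have h1 : 1 ≤ A / μ := (one_le_div hμ).2 hA
  refine ⟨(abs_tanh_le_one _).trans h1, (abs_tanh_le_one _).trans h1,
    (abs_tanh_sub_le _ _).trans ?_⟩
  rw [← sub_div, abs_div, abs_of_pos hμ, div_mul_eq_mul_div]
  exact div_le_div_of_nonneg_right h.sub hμ.le

end BddLip

variable {E : Type*} [NormedAddCommGroup E] [InnerProductSpace ℝ E]
variable {w v w' v' a : E} {b μ Q R D : ℝ}

lemma bddLip_inner_const {v v' : E} (hv : ‖v‖ ≤ 1) (hv' : ‖v'‖ ≤ 1) (ha : ‖a‖ ≤ R)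
    (hD : ‖v - v'‖ ≤ D) : BddLip D R ⟪v, a⟫ ⟪v', a⟫ := by
  have hR : 0 ≤ R := (norm_nonneg _).trans ha
  refine ⟨(abs_real_inner_le_norm _ _).trans ?_, (abs_real_inner_le_norm _ _).trans ?_, ?_⟩
  · exact (mul_le_mul hv ha (norm_nonneg _) zero_le_one).trans_eq (one_mul _)
  · exact (mul_le_mul hv' ha (norm_nonneg _) zero_le_one).trans_eq (one_mul _)
  · rw [← inner_sub_left]
    refine (abs_real_inner_le_norm _ _).trans ?_
    rw [mul_comm R]
    exact mul_le_mul hD ha (norm_nonneg _) ((norm_nonneg _).trans hD)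

lemma bddLip_inner (hw : ‖w‖ ≤ 1) (hw' : ‖w'‖ ≤ 1) (hv : ‖v‖ ≤ 1) (hv' : ‖v'‖ ≤ 1)
    (hD : ‖w - w'‖ + ‖v - v'‖ ≤ D) : BddLip D 1 ⟪w, v⟫ ⟪w', v'⟫ := by
  refine ⟨(abs_real_inner_le_norm _ _).trans (mul_le_one₀ hw (norm_nonneg _) hv),
    (abs_real_inner_le_norm _ _).trans (mul_le_one₀ hw' (norm_nonneg _) hv'), ?_⟩
  have e : ⟪w, v⟫ - ⟪w', v'⟫ = ⟪w - w', v⟫ + ⟪w', v - v'⟫ := by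
    rw [inner_sub_left, inner_sub_right]
    ring
  rw [e, one_mul]
  refine (abs_add_le _ _).trans (le_trans (add_le_add ?_ ?_) hD)
  · refine (abs_real_inner_le_norm _ _).trans ?_
    exact mul_le_of_le_one_right (norm_nonneg _) hv
  · refine (abs_real_inner_le_norm _ _).trans ?_
    exact mul_le_of_le_one_left (norm_nonneg _) hw'

lemma bddLip_normSq {v v' : E} {D : ℝ} (hv : ‖v‖ ≤ 1) (hv' : ‖v'‖ ≤ 1) (hD : ‖v - v'‖ ≤ D) :
    BddLip D 2 (‖v‖ ^ 2) (‖v'‖ ^ 2) := by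
  have h : BddLip D 1 ‖v‖ ‖v'‖ :=
    ⟨by rwa [abs_norm], by rwa [abs_norm], by rw [one_mul]; exact (abs_norm_sub_norm_le _ _).trans hD⟩
  simpa using h.pow_two

lemma bddLip_qlast (hQ : 1 ≤ Q) (hw : ‖w‖ < 1) (hw' : ‖w'‖ < 1) (hq : 1 / Q ≤ qlast w)
    (hq' : 1 / Q ≤ qlast w') (hD : ‖w - w'‖ ≤ D) : BddLip D Q (qlast w) (qlast w') := by
  have hle : ∀ u : E, |qlast u| ≤ Q := by
    intro u
    unfold qlast
    rw [abs_of_nonneg (Real.sqrt_nonneg _)]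
    exact (Real.sqrt_le_one.2 (by nlinarith [sq_nonneg ‖u‖])).trans hQ
  refine ⟨hle _, hle _, ?_⟩
  have hs := (bddLip_normSq hw.le hw'.le hD).sub
  have hpos := qlast_pos hw
  have hpos' := qlast_pos hw'
  have e : (qlast w - qlast w') * (qlast w + qlast w') = -(‖w‖ ^ 2 - ‖w'‖ ^ 2) := by
    have := qlast_sq hw
    have := qlast_sq hw'
    nlinarith
  have e2 := congrArg abs e
  rw [abs_mul, abs_neg, abs_of_pos (add_pos hpos hpos')] at e2
  have h2 : 2 / Q ≤ qlast w + qlast w' := by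
    have : 2 / Q = 1 / Q + 1 / Q := by ring
    linarith
  have h3 := mul_le_mul_of_nonneg_left h2 (abs_nonneg (qlast w - qlast w'))
  have hQ0 : 0 < Q := by linarith
  have h4 : |qlast w - qlast w'| * (2 / Q) ≤ 2 * D := by linarith
  have h5 := mul_le_mul_of_nonneg_left h4 (by positivity : 0 ≤ Q / 2)
  have h6 : Q / 2 * (|qlast w - qlast w'| * (2 / Q)) = |qlast w - qlast w'| := by
    field_simp
  linarith

lemma bddLip_inv_qlast (hQ : 1 ≤ Q) (hw : ‖w‖ < 1) (hw' : ‖w'‖ < 1) (hq : 1 / Q ≤ qlast w)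
    (hq' : 1 / Q ≤ qlast w') (hD : ‖w - w'‖ ≤ D) :
    BddLip D (Q ^ 3) (qlast w)⁻¹ (qlast w')⁻¹ := by
  have hQ0 : 0 < Q := by linarith
  have hD0 : 0 ≤ D := (norm_nonneg _).trans hD
  have hpos := qlast_pos hw
  have hpos' := qlast_pos hw'
  have i1 : (qlast w)⁻¹ ≤ Q := by
    rw [inv_le_comm₀ hpos hQ0]
    simpa using hq
  have i2 : (qlast w')⁻¹ ≤ Q := by
    rw [inv_le_comm₀ hpos' hQ0]
    simpa using hq'
  have hQ3 : Q ≤ Q ^ 3 := le_self_pow₀ hQ (by norm_num)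
  refine ⟨?_, ?_, ?_⟩
  · rw [abs_of_pos (inv_pos.2 hpos)]
    exact i1.trans hQ3
  · rw [abs_of_pos (inv_pos.2 hpos')]
    exact i2.trans hQ3
  · have e : (qlast w)⁻¹ - (qlast w')⁻¹ =
        (qlast w)⁻¹ * (qlast w')⁻¹ * -(qlast w - qlast w') := by
      field_simp
      ring
    rw [e, abs_mul, abs_neg, abs_of_pos (mul_pos (inv_pos.2 hpos) (inv_pos.2 hpos'))]
    have h1 := mul_le_mul i1 i2 (inv_pos.2 hpos').le hQ0.le
    have h2 := (bddLip_qlast hQ hw hw' hq hq' hD).sub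
    refine (mul_le_mul h1 h2 (abs_nonneg _) (by positivity)).trans_eq ?_
    ring

/-- The standing assumptions for comparing the summands at two pairs of points and directions. -/
structure TermPair (μ Q R D : ℝ) (w v w' v' a : E) (b : ℝ) : Prop where
  hμ : 0 < μ
  hμ1 : μ ≤ 1
  hQ : 1 ≤ Q
  hR : 1 ≤ R
  hw : ‖w‖ < 1
  hw' : ‖w'‖ < 1
  hq : 1 / Q ≤ qlast w
  hq' : 1 / Q ≤ qlast w'
  hv : ‖v‖ ≤ 1
  hv' : ‖v'‖ ≤ 1
  ha : ‖a‖ ≤ R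
  hb : |b| ≤ R
  hD : ‖w - w'‖ + ‖v - v'‖ ≤ D

namespace TermPair

lemma nonneg (h : TermPair μ Q R D w v w' v' a b) : 0 ≤ D :=
  (add_nonneg (norm_nonneg _) (norm_nonneg _)).trans h.hD

lemma left_le (h : TermPair μ Q R D w v w' v' a b) : ‖w - w'‖ ≤ D := by
  linarith [h.hD, norm_nonneg (v - v')]

lemma right_le (h : TermPair μ Q R D w v w' v' a b) : ‖v - v'‖ ≤ D := by
  linarith [h.hD, norm_nonneg (w - w')]

lemma inv_qlast (h : TermPair μ Q R D w v w' v' a b) :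
    BddLip D (Q ^ 3) (qlast w)⁻¹ (qlast w')⁻¹ :=
  bddLip_inv_qlast h.hQ h.hw h.hw' h.hq h.hq' h.left_le

lemma tanh_zval (h : TermPair μ Q R D w v w' v' a b) :
    BddLip D (3 * Q * R / μ) (Real.tanh (zval a b w / μ)) (Real.tanh (zval a b w' / μ)) := by
  have hz := (bddLip_inner_const h.hw.le h.hw'.le h.ha h.left_le).add
    ((bddLip_qlast h.hQ h.hw h.hw' h.hq h.hq' h.left_le).mul (BddLip.const h.nonneg h.hb))
  have hQR : R ≤ Q * R := le_mul_of_one_le_left (by linarith [h.hR]) h.hQ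
  refine (hz.mono h.nonneg (?_ : _ ≤ 3 * Q * R)).tanh_div h.hμ ?_
  · linarith
  · linarith [h.hμ1, h.hR]

lemma direction (h : TermPair μ Q R D w v w' v' a b) :
    BddLip D (5 * Q ^ 3 * R) (⟪v, a⟫ - b * (⟪w, v⟫ / qlast w))
      (⟪v', a⟫ - b * (⟪w', v'⟫ / qlast w')) := by
  have h1 := (bddLip_inner h.hw.le h.hw'.le h.hv h.hv' h.hD).mul h.inv_qlast
  simp only [← div_eq_mul_inv] at h1
  have h2 := (bddLip_inner_const h.hv h.hv' h.ha h.right_le).fun_sub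
    ((BddLip.const h.nonneg h.hb).mul h1)
  refine h2.mono h.nonneg ?_
  have hQR : R ≤ Q ^ 3 * R := le_mul_of_one_le_left (by linarith [h.hR]) (one_le_pow₀ h.hQ)
  nlinarith

lemma bddLip_dTerm (h : TermPair μ Q R D w v w' v' a b) :
    BddLip D (30 * Q ^ 4 * R ^ 2 / μ) (dTerm μ a b w v) (dTerm μ a b w' v') := by
  refine (h.tanh_zval.mul h.direction).mono h.nonneg (le_of_eq ?_)
  ring

lemma bddLip_hTerm (h : TermPair μ Q R D w v w' v' a b) :
    BddLip D (2140 * Q ^ 10 * R ^ 4 / μ ^ 3) (hTerm μ a b w v) (hTerm μ a b w' v') := by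
  have hμ := h.hμ
  have hQ := h.hQ
  have hR := h.hR
  have hQ0 : 0 < Q := by linarith
  have hR0 : 0 < R := by linarith
  have t1 : BddLip D (19 * Q ^ 2 * R ^ 2 / μ ^ 2) (1 - Real.tanh (zval a b w / μ) ^ 2)
      (1 - Real.tanh (zval a b w' / μ) ^ 2) := by
    refine ((BddLip.const h.nonneg (by simp : |(1 : ℝ)| ≤ 1)).fun_sub
      h.tanh_zval.pow_two).mono h.nonneg ?_
    have : 1 ≤ Q ^ 2 * R ^ 2 / μ ^ 2 := by
      rw [le_div_iff₀ (by positivity), one_mul]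
      exact (pow_le_one₀ hμ.le h.hμ1).trans
        (one_le_mul_of_one_le_of_one_le (one_le_pow₀ hQ) (one_le_pow₀ hR))
    have e : (1 : ℝ) + 2 * (3 * Q * R / μ) ^ 2 = 1 + 18 * (Q ^ 2 * R ^ 2 / μ ^ 2) := by ring
    have e' : 19 * Q ^ 2 * R ^ 2 / μ ^ 2 = 19 * (Q ^ 2 * R ^ 2 / μ ^ 2) := by ring
    rw [e, e']
    linarith
  have t2 := (t1.mul h.direction.pow_two).const_mul (inv_pos.2 hμ).le
  have s1 := (bddLip_normSq h.hv h.hv' h.right_le).mul h.inv_qlast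
  have s2 := (bddLip_inner h.hw.le h.hw'.le h.hv h.hv' h.hD).pow_two.mul
    (h.inv_qlast.mul h.inv_qlast.pow_two)
  have e3 : ∀ q : ℝ, q⁻¹ * q⁻¹ ^ 2 = (q ^ 3)⁻¹ := fun q => by rw [← pow_succ', inv_pow]
  simp only [e3, ← div_eq_mul_inv] at s1 s2
  have s3 := h.tanh_zval.mul ((BddLip.const h.nonneg h.hb).mul (s1.add s2))
  refine (t2.fun_sub s3).mono h.nonneg ?_
  have p1 : Q ^ 8 * R ^ 4 / μ ^ 3 ≤ Q ^ 10 * R ^ 4 / μ ^ 3 := by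
    gcongr
    · norm_num
  have p2 : Q ^ 10 * R ^ 2 / μ ≤ Q ^ 10 * R ^ 4 / μ ^ 3 := by
    refine div_le_div₀ (by positivity) ?_ (by positivity) ?_
    · gcongr
      · norm_num
    · exact pow_le_of_le_one hμ.le h.hμ1 (by norm_num)
  have p3 : Q ^ 4 * R ^ 2 / μ ≤ Q ^ 10 * R ^ 2 / μ := by
    gcongr
    · norm_num
  have e1 : μ⁻¹ * (2 * (19 * Q ^ 2 * R ^ 2 / μ ^ 2 * (2 * (5 * Q ^ 3 * R) ^ 2))) +
      2 * (3 * Q * R / μ * (2 * (R * (2 * (2 * Q ^ 3) +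
        2 * (2 * 1 ^ 2 * (2 * (Q ^ 3 * (2 * (Q ^ 3) ^ 2)))))))) =
      1900 * (Q ^ 8 * R ^ 4 / μ ^ 3) + (48 * (Q ^ 4 * R ^ 2 / μ) +
        192 * (Q ^ 10 * R ^ 2 / μ)) := by
    field_simp
    ring
  have e2 : 2140 * Q ^ 10 * R ^ 4 / μ ^ 3 = 2140 * (Q ^ 10 * R ^ 4 / μ ^ 3) := by ring
  rw [e1, e2]
  linarith

end TermPair

end Lipschitz

section Landscape

/-- If `p` exceeds a large multiple of `B log A` with `B ≤ A³`, then it exceeds a multiple of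
`B log p`. -/
lemma mul_mul_log_le {c A B p : ℝ} (hc : 1 ≤ c) (hA : 1 ≤ Real.log A) (hB1 : 1 ≤ B)
    (hB : B ≤ A ^ 3) (hp : (4 * c) ^ 4 * B * Real.log A ≤ p) : c * B * Real.log p ≤ p := by
  have hc4 : 256 * c ≤ (4 * c) ^ 4 := by
    have : c ≤ c ^ 4 := le_self_pow₀ hc (by norm_num)
    calc 256 * c ≤ 256 * c ^ 4 := by linarith
      _ = _ := by ring
  have hBL : 1 ≤ B * Real.log A := one_le_mul_of_one_le_of_one_le hB1 hA
  have hpc : (4 * c) ^ 4 ≤ p := by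
    refine le_trans ?_ hp
    rw [mul_assoc]
    exact le_mul_of_one_le_right (by positivity) hBL
  have hp0 : 0 < p := lt_of_lt_of_le (by positivity) hpc
  rcases le_total p (A ^ 6) with h | h
  · have h1 : Real.log p ≤ 6 * Real.log A := by
      have := Real.log_le_log hp0 h
      rwa [Real.log_pow] at this
    refine le_trans ?_ hp
    have h2 : c * B * Real.log p ≤ c * B * (6 * Real.log A) :=
      mul_le_mul_of_nonneg_left h1 (by positivity)
    have h3 := mul_le_mul_of_nonneg_right hc4 (by positivity : 0 ≤ B * Real.log A)
    have h4 : 0 ≤ c * (B * Real.log A) := by positivity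
    nlinarith
  · set r := √(√p) with hr
    have hr0 : 0 ≤ r := Real.sqrt_nonneg _
    have hr2 : r ^ 2 = √p := Real.sq_sqrt (Real.sqrt_nonneg _)
    have hr4 : r ^ 4 = p := by
      rw [show r ^ 4 = (r ^ 2) ^ 2 by ring, hr2, Real.sq_sqrt hp0.le]
    have hrp : 0 < r := by
      rcases hr0.lt_or_eq with h | h
      · exact h
      · rw [← h] at hr4
        norm_num at hr4
        linarith
    have hB' : B ≤ r ^ 2 := by
      rw [hr2]
      refine hB.trans (Real.le_sqrt_of_sq_le ?_)
      calc (A ^ 3) ^ 2 = A ^ 6 := by ring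
        _ ≤ p := h
    have hlog : Real.log p ≤ 4 * r := by
      rw [← hr4, Real.log_pow]
      have := Real.log_le_self hr0
      push_cast
      linarith
    have hcr : 4 * c ≤ r := by
      refine le_of_pow_le_pow_left₀ (n := 4) (by norm_num) hr0 ?_
      rw [hr4]
      exact hpc
    calc c * B * Real.log p ≤ c * B * (4 * r) := mul_le_mul_of_nonneg_left hlog (by positivity)
      _ ≤ c * r ^ 2 * (4 * r) := by gcongr
      _ = 4 * c * r ^ 3 := by ring
      _ ≤ r * r ^ 3 := by gcongr
      _ = p := by rw [← hr4]; ring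

/-- The quantitative parameter regime. -/
structure Regime (m p : ℕ) (θ μ : ℝ) : Prop where
  hθ0 : 0 < θ
  hθ1 : θ ≤ 1 / 2
  hμ : 0 < μ
  hμθ : 64000 * (m + 1) * μ ≤ θ
  hp : 10 ^ 7 ≤ (p : ℝ)
  hmp : (m + 1 : ℝ) ≤ p
  hμp : 1 ≤ p * μ
  hθp : 1 ≤ p * θ
  hlog : 10 ^ 12 * envConst * ((m + 1) ^ 3 * Real.log p) ≤ p * (μ ^ 2 * θ ^ 2)

lemma regime_of_le {m p : ℕ} {θ μ : ℝ} (hm : 1 ≤ m) (hθ0 : 0 < θ) (hθ1 : θ ≤ 1 / 2) (hμ : 0 < μ)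
    (hμθ : 64000 * (m + 1) * μ ≤ θ)
    (hp : (4 * (10 ^ 12 * envConst)) ^ 4 / (μ ^ 2 * θ ^ 2) * (m + 1 : ℝ) ^ 3 *
      Real.log ((m + 1 : ℝ) / (μ * θ)) ≤ p) : Regime m p θ μ := by
  have hM := one_le_envConst
  have hc : (1 : ℝ) ≤ 10 ^ 12 * envConst := by linarith
  have hm' : (2 : ℝ) ≤ m + 1 := by
    have : (1 : ℝ) ≤ m := by exact_mod_cast hm
    linarith
  have hμ1 : 64000 * μ ≤ θ := by nlinarith
  have hμ2 : μ ≤ 1 := by linarith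
  have hμθ0 : 0 < μ * θ := mul_pos hμ hθ0
  have hμθ1 : μ * θ ≤ 1 / 2 := by nlinarith
  have hA3 : 4 ≤ (m + 1 : ℝ) / (μ * θ) := by
    rw [le_div_iff₀ hμθ0]
    linarith
  have hA0 : 0 < (m + 1 : ℝ) / (μ * θ) := by linarith
  have hA1 : 1 ≤ Real.log ((m + 1 : ℝ) / (μ * θ)) := by
    rw [Real.le_log_iff_exp_le hA0]
    linarith [Real.exp_one_lt_d9]
  set B : ℝ := (m + 1 : ℝ) ^ 3 / (μ ^ 2 * θ ^ 2) with hB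
  have hden : 0 < μ ^ 2 * θ ^ 2 := by positivity
  have hθ2 : θ ≤ 1 := by linarith
  have hn3 : (1 : ℝ) ≤ (m + 1 : ℝ) ^ 3 := one_le_pow₀ (by linarith)
  have hd1 : μ ^ 2 * θ ^ 2 ≤ μ := by
    have : μ ^ 2 ≤ μ := pow_le_of_le_one hμ.le hμ2 (by norm_num)
    have h2 : θ ^ 2 ≤ 1 := pow_le_one₀ hθ0.le hθ2
    nlinarith [sq_nonneg μ]
  have hd2 : μ ^ 2 * θ ^ 2 ≤ θ := by
    have : θ ^ 2 ≤ θ := pow_le_of_le_one hθ0.le hθ2 (by norm_num)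
    have h2 : μ ^ 2 ≤ 1 := pow_le_one₀ hμ.le hμ2
    nlinarith [sq_nonneg θ]
  have hBμ : 1 ≤ B * μ := by
    rw [hB, div_mul_eq_mul_div, one_le_div hden]
    nlinarith
  have hBθ : 1 ≤ B * θ := by
    rw [hB, div_mul_eq_mul_div, one_le_div hden]
    nlinarith
  have hB1 : 1 ≤ B := by nlinarith
  have hBn : (m + 1 : ℝ) ≤ B := by
    rw [hB, le_div_iff₀ hden]
    have : (m + 1 : ℝ) ≤ (m + 1 : ℝ) ^ 3 := le_self_pow₀ (by linarith) (by norm_num)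
    nlinarith
  have hBA : B ≤ ((m + 1 : ℝ) / (μ * θ)) ^ 3 := by
    rw [hB, div_pow]
    refine div_le_div_of_nonneg_left (by positivity) (by positivity) ?_
    rw [← mul_pow]
    exact pow_le_pow_of_le_one hμθ0.le (by linarith) (by norm_num)
  have hp' : (4 * (10 ^ 12 * envConst)) ^ 4 * B * Real.log ((m + 1 : ℝ) / (μ * θ)) ≤ p := by
    refine le_trans (le_of_eq ?_) hp
    rw [hB]
    ring
  have hc7 : (10 : ℝ) ^ 7 ≤ (4 * (10 ^ 12 * envConst)) ^ 4 := by
    have h1 : (10 : ℝ) ^ 7 ≤ 4 * (10 ^ 12 * envConst) := by linarith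
    exact h1.trans (le_self_pow₀ (by linarith) (by norm_num))
  have hCB : (4 * (10 ^ 12 * envConst)) ^ 4 * B ≤ p :=
    (le_mul_of_one_le_right (by positivity) hA1).trans hp'
  have hBp : B ≤ p := by
    refine le_trans ?_ hCB
    exact le_mul_of_one_le_left (by linarith) (by linarith)
  refine ⟨hθ0, hθ1, hμ, hμθ, ?_, hBn.trans hBp, ?_, ?_, ?_⟩
  · refine hc7.trans (le_trans ?_ hCB)
    exact le_mul_of_one_le_right (by positivity) hB1
  · exact hBμ.trans (mul_le_mul_of_nonneg_right hBp hμ.le)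
  · exact hBθ.trans (mul_le_mul_of_nonneg_right hBp hθ0.le)
  · have := mul_mul_log_le hc hA1 hB1 hBA hp'
    rw [hB] at this
    have h2 := mul_le_mul_of_nonneg_right this hden.le
    refine le_trans (le_of_eq ?_) h2
    field_simp

namespace Regime

variable {m p : ℕ} {θ μ : ℝ}

/-- The reciprocal lower bound for the last coordinate on the region. -/
abbrev bigQ (m : ℕ) : ℝ := 2 * √(m + 1)

lemma one_le_sqrt (m : ℕ) : 1 ≤ √(m + 1 : ℝ) := by
  rw [Real.one_le_sqrt]
  linarith [(Nat.cast_nonneg m : (0 : ℝ) ≤ m)]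

lemma one_le_bigQ (m : ℕ) : 1 ≤ bigQ m := by
  unfold bigQ
  linarith [one_le_sqrt m]

lemma bigQ_sq (m : ℕ) : bigQ m ^ 2 = 4 * (m + 1) := by
  unfold bigQ
  rw [mul_pow, Real.sq_sqrt (by positivity)]
  norm_num

lemma four_mul_le (h : Regime m p θ μ) : 4 * μ ≤ 1 / bigQ m := by
  have h1 := one_le_sqrt m
  have h2 : √(m + 1 : ℝ) ≤ m + 1 := by
    have := Real.sq_sqrt (by positivity : (0 : ℝ) ≤ m + 1)
    nlinarith
  rw [le_div_iff₀ (by linarith [one_le_bigQ m])]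
  unfold bigQ
  have := h.hμθ
  have := h.hθ1
  have := mul_le_mul_of_nonneg_left h2 h.hμ.le
  nlinarith

lemma mu_le (h : Regime m p θ μ) : 64000 * μ ≤ θ := by
  have := h.hμθ
  have := mul_nonneg (Nat.cast_nonneg m : (0 : ℝ) ≤ m) h.hμ.le
  linarith

lemma bigQ_le (h : Regime m p θ μ) : bigQ m ≤ μ⁻¹ / 4 := by
  have h1 := h.four_mul_le
  have hQ := one_le_bigQ m
  have hμ := h.hμ
  rw [le_div_iff₀ (by linarith)] at h1
  rw [le_div_iff₀ (by norm_num), le_inv_comm₀ (by linarith) hμ, ← one_div,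
    le_div_iff₀ (by linarith)]
  linarith

lemma hTerm_envelope (h : Regime m p θ μ) {w v : EuclideanSpace ℝ (Fin m)} (hw : ‖w‖ < 1)
    (hq : 1 / bigQ m ≤ qlast w) (hv : ‖v‖ = 1) (x : Fin (m + 1) → ℝ) :
    |hTerm μ (headVec x) (x (Fin.last m)) w v| ≤ 144 * (m + 1) / μ / 8 * envelope v x := by
  have hQ := one_le_bigQ m
  refine (abs_hTerm_le h.hμ (by positivity) x hv hw hq).trans ?_
  refine mul_le_mul_of_nonneg_right ?_ (by unfold envelope; positivity)
  have e1 : 2 / (1 / bigQ m) ^ 2 = 2 * bigQ m ^ 2 := by field_simp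
  have e2 : 1 / (1 / bigQ m) + 1 / (1 / bigQ m) ^ 3 = bigQ m + bigQ m * bigQ m ^ 2 := by field_simp
  rw [e1, e2, bigQ_sq]
  have hb := h.bigQ_le
  have hi : 0 < μ⁻¹ := inv_pos.2 h.hμ
  have hm : (0 : ℝ) ≤ m := Nat.cast_nonneg m
  have e3 : 144 * (m + 1 : ℝ) / μ / 8 = 18 * (m + 1) * μ⁻¹ := by ring
  rw [e3]
  nlinarith [mul_nonneg hm hi.le, mul_le_mul_of_nonneg_right hb hm]

lemma dTerm_envelope (h : Regime m p θ μ) {w v : EuclideanSpace ℝ (Fin m)} (hw : ‖w‖ < 1)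
    (hq : 1 / bigQ m ≤ qlast w) (hv : ‖v‖ = 1) (x : Fin (m + 1) → ℝ) :
    |dTerm μ (headVec x) (x (Fin.last m)) w v| ≤ 144 * (m + 1) / μ / 8 * envelope v x := by
  have hQ := one_le_bigQ m
  refine (abs_dTerm_le (by positivity) x hv hw hq).trans ?_
  refine mul_le_mul_of_nonneg_right ?_ (by unfold envelope; positivity)
  rw [one_div_one_div]
  have hb := h.bigQ_le
  have hi : 0 < μ⁻¹ := inv_pos.2 h.hμ
  have hm : (0 : ℝ) ≤ m := Nat.cast_nonneg m
  have e3 : 144 * (m + 1 : ℝ) / μ / 8 = 18 * (m + 1) * μ⁻¹ := by ring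
  rw [e3]
  nlinarith [mul_nonneg hm hi.le]

/-- A common Lipschitz constant for all summands. -/
abbrev bigL (m p : ℕ) (μ : ℝ) : ℝ := 2140 * bigQ m ^ 10 * ((p : ℝ) ^ 2) ^ 4 / μ ^ 3

lemma bigL_le (h : Regime m p θ μ) : bigL m p μ ≤ (p : ℝ) ^ 17 := by
  have hp := h.hp
  have hμ := h.hμ
  have hp0 : (0 : ℝ) < p := by linarith
  have e : bigQ m ^ 10 = 1024 * (m + 1 : ℝ) ^ 5 := by
    calc bigQ m ^ 10 = (bigQ m ^ 2) ^ 5 := by ring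
      _ = _ := by rw [bigQ_sq]; ring
  rw [bigL, e, div_le_iff₀ (by positivity)]
  have h1 : (m + 1 : ℝ) ^ 5 ≤ (p : ℝ) ^ 5 := pow_le_pow_left₀ (by positivity) h.hmp 5
  have h2 : 1 ≤ (p * μ : ℝ) ^ 3 := one_le_pow₀ h.hμp
  calc 2140 * (1024 * (m + 1 : ℝ) ^ 5) * ((p : ℝ) ^ 2) ^ 4
      = 2191360 * (m + 1 : ℝ) ^ 5 * (p : ℝ) ^ 8 := by ring
    _ ≤ p * (p : ℝ) ^ 5 * (p : ℝ) ^ 8 := by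
        gcongr
        linarith
    _ = (p : ℝ) ^ 14 * 1 := by ring
    _ ≤ (p : ℝ) ^ 14 * (p * μ) ^ 3 := by gcongr
    _ = (p : ℝ) ^ 17 * μ ^ 3 := by ring

lemma termPair (h : Regime m p θ μ) {w v w' v' : EuclideanSpace ℝ (Fin m)} (hw : ‖w‖ < 1)
    (hq : 1 / bigQ m ≤ qlast w) (hv : ‖v‖ = 1) (hw' : ‖w'‖ < 1) (hq' : 1 / bigQ m ≤ qlast w')
    (hv' : ‖v'‖ = 1) {x : Fin (m + 1) → ℝ} (hx : ∀ i, |x i| ≤ p) :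
    TermPair μ (bigQ m) ((p : ℝ) ^ 2) (‖w - w'‖ + ‖v - v'‖) w v w' v' (headVec x)
      (x (Fin.last m)) := by
  have hp := h.hp
  have hp2 : (p : ℝ) ≤ (p : ℝ) ^ 2 := le_self_pow₀ (by linarith) (by norm_num)
  have hmp : √(m : ℝ) ≤ p := by
    refine Real.sqrt_le_iff.2 ⟨by linarith, ?_⟩
    linarith [h.hmp]
  refine ⟨h.hμ, by linarith [h.mu_le, h.hθ1], one_le_bigQ m, by linarith, hw, hw', hq, hq', hv.le,
    hv'.le, ?_, (hx _).trans hp2, le_rfl⟩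
  refine (norm_le_card_mul (headVec x) (c := p) fun i => hx i.castSucc).trans ?_
  rw [sq]
  exact mul_le_mul_of_nonneg_right hmp (by linarith)

lemma hTerm_lip (h : Regime m p θ μ) {w v w' v' : EuclideanSpace ℝ (Fin m)} (hw : ‖w‖ < 1)
    (hq : 1 / bigQ m ≤ qlast w) (hv : ‖v‖ = 1) (hw' : ‖w'‖ < 1) (hq' : 1 / bigQ m ≤ qlast w')
    (hv' : ‖v'‖ = 1) {x : Fin (m + 1) → ℝ} (hx : ∀ i, |x i| ≤ p) :
    |hTerm μ (headVec x) (x (Fin.last m)) w v - hTerm μ (headVec x) (x (Fin.last m)) w' v'| ≤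
      bigL m p μ * (‖w - w'‖ + ‖v - v'‖) :=
  (h.termPair hw hq hv hw' hq' hv' hx).bddLip_hTerm.sub

lemma dTerm_lip (h : Regime m p θ μ) {w v w' v' : EuclideanSpace ℝ (Fin m)} (hw : ‖w‖ < 1)
    (hq : 1 / bigQ m ≤ qlast w) (hv : ‖v‖ = 1) (hw' : ‖w'‖ < 1) (hq' : 1 / bigQ m ≤ qlast w')
    (hv' : ‖v'‖ = 1) {x : Fin (m + 1) → ℝ} (hx : ∀ i, |x i| ≤ p) :
    |dTerm μ (headVec x) (x (Fin.last m)) w v - dTerm μ (headVec x) (x (Fin.last m)) w' v'| ≤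
      bigL m p μ * (‖w - w'‖ + ‖v - v'‖) := by
  have ht := h.termPair hw hq hv hw' hq' hv' hx
  refine (ht.bddLip_dTerm.mono ht.nonneg ?_).sub
  have hQ := ht.hQ
  have hR := ht.hR
  have hμ := h.hμ
  refine div_le_div₀ (by positivity) ?_ (by positivity)
    (pow_le_of_le_one hμ.le ht.hμ1 (by norm_num))
  have h1 : bigQ m ^ 4 ≤ bigQ m ^ 10 := pow_le_pow_right₀ hQ (by norm_num)
  have h2 : ((p : ℝ) ^ 2) ^ 2 ≤ ((p : ℝ) ^ 2) ^ 4 := pow_le_pow_right₀ hR (by norm_num)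
  gcongr
  norm_num

/-- The union bound beats the net at the given sample size. -/
lemma net_mul_exp_le (h : Regime m p θ μ) :
    (2 * ((p ^ 20 : ℕ) : ℝ) + 1) ^ (2 * m) *
      exp (-(p * ((θ / 60) ^ 2 / (128 * (144 * (m + 1) / μ) ^ 2 * envConst)))) ≤
      1 / (p : ℝ) ^ 6 := by
  have hp := h.hp
  have hμ := h.hμ
  have hp0 : (0 : ℝ) < p := by linarith
  have hM := one_le_envConst
  have hlog0 : 0 ≤ Real.log p := Real.log_nonneg (by linarith)
  have h1 : (2 * ((p ^ 20 : ℕ) : ℝ) + 1) ^ (2 * m) ≤ exp (42 * m * Real.log p) := by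
    have h2 : 2 * ((p ^ 20 : ℕ) : ℝ) + 1 ≤ (p : ℝ) ^ 21 := by
      push_cast
      have : (1 : ℝ) ≤ (p : ℝ) ^ 20 := one_le_pow₀ (by linarith)
      have h3 : (p : ℝ) ^ 21 = p * (p : ℝ) ^ 20 := by ring
      nlinarith
    refine (pow_le_pow_left₀ (by positivity) h2 (2 * m)).trans_eq ?_
    rw [← pow_mul, ← Real.exp_log hp0, ← Real.exp_nat_mul, Real.log_exp]
    congr 1
    push_cast
    ring
  have h4 : 48 * (m + 1) * Real.log p ≤
      p * ((θ / 60) ^ 2 / (128 * (144 * (m + 1) / μ) ^ 2 * envConst)) := by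
    have e : p * ((θ / 60) ^ 2 / (128 * (144 * (m + 1) / μ) ^ 2 * envConst)) =
        p * (μ ^ 2 * θ ^ 2) / (9555148800 * (m + 1) ^ 2 * envConst) := by
      field_simp
      ring
    rw [e, le_div_iff₀ (by positivity)]
    refine le_trans ?_ h.hlog
    have : 0 ≤ envConst * ((m + 1) ^ 3 * Real.log p) := by positivity
    nlinarith
  have h5 : exp (-(6 * Real.log p)) = 1 / (p : ℝ) ^ 6 := by
    rw [Real.exp_neg, one_div, ← Real.exp_log hp0, ← Real.exp_nat_mul, Real.log_exp]
    norm_num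
  rw [← h5]
  refine (mul_le_mul h1 (Real.exp_le_exp.2 (neg_le_neg h4)) (Real.exp_pos _).le
    (Real.exp_pos _).le).trans ?_
  rw [← Real.exp_add, Real.exp_le_exp]
  have hm : (0 : ℝ) ≤ m := Nat.cast_nonneg m
  nlinarith [mul_nonneg hm hlog0]

/-- A uniform high-probability lower bound for empirical averages in the parameter regime. -/
lemma measure_bad_le (h : Regime m p θ μ)
    {W : EuclideanSpace ℝ (Fin m) → EuclideanSpace ℝ (Fin m) → (Fin (m + 1) → ℝ) → ℝ}
    {S : Set (EuclideanSpace ℝ (Fin m) × EuclideanSpace ℝ (Fin m))}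
    (hS : ∀ a ∈ S, ‖a.1‖ < 1 ∧ 1 / bigQ m ≤ qlast a.1 ∧ ‖a.2‖ = 1)
    (hmeas : ∀ a ∈ S, Measurable (W a.1 a.2))
    (henv : ∀ a ∈ S, ∀ x, |W a.1 a.2 x| ≤ 144 * (m + 1) / μ / 8 * envelope a.2 x)
    (hexp : ∀ a ∈ S, θ / 60 ≤ ∫ x, W a.1 a.2 x ∂(bgVec θ (m + 1)))
    (hLip : ∀ a ∈ S, ∀ b ∈ S, ∀ x : Fin (m + 1) → ℝ, (∀ i, |x i| ≤ p) →
      |W a.1 a.2 x - W b.1 b.2 x| ≤ bigL m p μ * (‖a.1 - b.1‖ + ‖a.2 - b.2‖)) :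
    bgMatrix θ (m + 1) p {X | (∀ i k, |X i k| ≤ p) ∧
        ∃ a ∈ S, ∑ k, W a.1 a.2 (fun i => X i k) ≤ p * (θ / 60 / 4)} ≤
      ENNReal.ofReal (1 / (p : ℝ) ^ 6) := by
  have hp := h.hp
  have hμ := h.hμ
  have hθ := h.hθ0
  have hp0 : (0 : ℝ) < p := by linarith
  have hpN : 0 < p ^ 20 := pow_pos (by exact_mod_cast hp0) _
  have hQ := one_le_bigQ m
  refine (bgMatrix_exists_sum_le (N := p ^ 20) (K := 144 * (m + 1) / μ) (Λ := bigL m p μ)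
    h.hθ0.le (by linarith [h.hθ1]) hpN (by positivity) (by positivity) ?_ (by positivity)
    (fun a ha => (hS a ha).1.le) (fun a ha => (hS a ha).2.2) hmeas henv hexp hLip ?_).trans
    (ENNReal.ofReal_le_ofReal h.net_mul_exp_le)
  · rw [le_div_iff₀ hμ]
    have h1 : θ / 60 ≤ 1 := by linarith [h.hθ1]
    have h2 : μ ≤ 1 := by linarith [h.mu_le, h.hθ1]
    have hm : (0 : ℝ) ≤ m := Nat.cast_nonneg m
    nlinarith
  · have hmp : √(m : ℝ) ≤ p := by
      refine Real.sqrt_le_iff.2 ⟨by linarith, ?_⟩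
      have := le_self_pow₀ (n := 2) (by linarith : (1 : ℝ) ≤ p) (by norm_num)
      linarith [h.hmp]
    calc bigL m p μ * (2 * (√m / (p ^ 20 : ℕ)))
        ≤ (p : ℝ) ^ 17 * (2 * (p / (p ^ 20 : ℕ))) := by
          gcongr
          exact h.bigL_le
      _ = 2 / (p : ℝ) ^ 2 := by
          push_cast
          field_simp
      _ ≤ θ / 60 / 4 := by
          rw [div_le_iff₀ (by positivity)]
          have := h.hθp
          nlinarith

end Regime

end Landscape

/-- The radius of the region `Γ`. -/
abbrev outerRadius (n : ℕ) : ℝ := √((4 * (n : ℝ) - 1) / (4 * n))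

lemma outerRadius_sq (m : ℕ) : outerRadius (m + 1) ^ 2 = 1 - 1 / Regime.bigQ m ^ 2 := by
  have hm : (0 : ℝ) ≤ m := Nat.cast_nonneg m
  rw [outerRadius, Real.sq_sqrt, Regime.bigQ_sq]
  · push_cast
    field_simp
  · push_cast
    exact div_nonneg (by linarith) (by linarith)

lemma outerRadius_lt_one (m : ℕ) : outerRadius (m + 1) < 1 := by
  have h := outerRadius_sq m
  have hQ := Regime.one_le_bigQ m
  have : 0 < 1 / Regime.bigQ m ^ 2 := by positivity
  nlinarith [Real.sqrt_nonneg ((4 * ((m + 1 : ℕ) : ℝ) - 1) / (4 * ((m + 1 : ℕ) : ℝ)))]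

lemma one_div_bigQ_le_sqrt {m : ℕ} {r : ℝ} (hr0 : 0 ≤ r) (hr : r ≤ outerRadius (m + 1)) :
    1 / Regime.bigQ m ≤ √(1 - r ^ 2) := by
  have h := outerRadius_sq m
  have hr2 := pow_le_pow_left₀ hr0 hr 2
  refine Real.le_sqrt_of_sq_le ?_
  rw [div_pow, one_pow]
  linarith

lemma sq_innerRadius (μ : ℝ) : 32 * (μ / (4 * √2)) ^ 2 = μ ^ 2 := by
  rw [div_pow, mul_pow, Real.sq_sqrt (by norm_num)]
  ring

lemma mul_le_innerRadius {μ : ℝ} (hμ : 0 < μ) : 17 / 100 * μ ≤ μ / (4 * √2) := by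
  have h := sq_innerRadius μ
  have h0 : 0 < μ / (4 * √2) := by positivity
  nlinarith

lemma sq_middleRadius : 2000 * (1 / (20 * √5)) ^ 2 = (1 : ℝ) := by
  rw [div_pow, mul_pow, Real.sq_sqrt (by norm_num)]
  norm_num

lemma middleRadius_le : 1 / (20 * √5) ≤ (1 / 44 : ℝ) := by
  have h := sq_middleRadius
  have h0 : (0 : ℝ) < 1 / (20 * √5) := by positivity
  nlinarith

lemma middleRadius_lt_outerRadius (m : ℕ) : 1 / (20 * √5) < outerRadius (m + 1) := by
  have h := outerRadius_sq m
  rw [Regime.bigQ_sq] at h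
  have h1 : 1 / (4 * (m + 1 : ℝ)) ≤ 1 / 4 :=
    one_div_le_one_div_of_le (by norm_num) (by linarith [(Nat.cast_nonneg m : (0 : ℝ) ≤ m)])
  have h2 := middleRadius_le
  have h3 := Real.sqrt_nonneg ((4 * ((m + 1 : ℕ) : ℝ) - 1) / (4 * ((m + 1 : ℕ) : ℝ)))
  change 0 ≤ outerRadius (m + 1) at h3
  nlinarith

/-- A vector is its norm times a unit vector. -/
lemma exists_unit_smul {E : Type*} [NormedAddCommGroup E] [NormedSpace ℝ E] {w : E} (hw : w ≠ 0) :
    ∃ v : E, ‖v‖ = 1 ∧ w = ‖w‖ • v :=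
  ⟨‖w‖⁻¹ • w, norm_smul_inv_norm hw, by
    rw [smul_smul, mul_inv_cancel₀ (norm_ne_zero_iff.2 hw), one_smul]⟩

namespace Regime

variable {m p : ℕ} {θ μ : ℝ}

lemma innerRadius_le (h : Regime m p θ μ) : μ / (4 * √2) ≤ 1 / (20 * √5) := by
  have h1 := sq_innerRadius μ
  have h2 := sq_middleRadius
  have h3 := h.mu_le
  have h4 := h.hθ1
  have h5 := h.hμ
  refine le_of_pow_le_pow_left₀ two_ne_zero (by positivity) ?_
  nlinarith

/-- The pairs on which strong convexity is tested. -/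
def convexPairs (m : ℕ) (μ : ℝ) : Set (EuclideanSpace ℝ (Fin m) × EuclideanSpace ℝ (Fin m)) :=
  {a | ‖a.1‖ ≤ μ / (4 * √2) ∧ ‖a.2‖ = 1}

/-- Pairs `(r v, v)` with `v` a unit vector and `r` in a given interval. -/
def radialPairs (m : ℕ) (r₁ r₂ : ℝ) :
    Set (EuclideanSpace ℝ (Fin m) × EuclideanSpace ℝ (Fin m)) :=
  {a | ‖a.2‖ = 1 ∧ ∃ r, r₁ ≤ r ∧ r ≤ r₂ ∧ a.1 = r • a.2}

lemma region_of_norm_le {w : EuclideanSpace ℝ (Fin m)} (hw : ‖w‖ ≤ outerRadius (m + 1)) :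
    ‖w‖ < 1 ∧ 1 / bigQ m ≤ qlast w :=
  ⟨hw.trans_lt (outerRadius_lt_one m), one_div_bigQ_le_sqrt (norm_nonneg w) hw⟩

lemma region_of_mem_convexPairs (h : Regime m p θ μ)
    {a : EuclideanSpace ℝ (Fin m) × EuclideanSpace ℝ (Fin m)} (ha : a ∈ convexPairs m μ) :
    ‖a.1‖ < 1 ∧ 1 / bigQ m ≤ qlast a.1 ∧ ‖a.2‖ = 1 := by
  have := region_of_norm_le
    ((ha.1.trans h.innerRadius_le).trans (middleRadius_lt_outerRadius m).le)
  exact ⟨this.1, this.2, ha.2⟩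

lemma region_of_mem_radialPairs {r₁ r₂ : ℝ} (hr₁ : 0 ≤ r₁) (hr₂ : r₂ ≤ outerRadius (m + 1))
    {a : EuclideanSpace ℝ (Fin m) × EuclideanSpace ℝ (Fin m)} (ha : a ∈ radialPairs m r₁ r₂) :
    ‖a.1‖ < 1 ∧ 1 / bigQ m ≤ qlast a.1 ∧ ‖a.2‖ = 1 := by
  obtain ⟨hv, r, h1, h2, hr⟩ := ha
  have hn : ‖a.1‖ = r := by
    rw [hr, norm_smul, hv, mul_one, Real.norm_of_nonneg (hr₁.trans h1)]
  have := region_of_norm_le (hn.trans_le (h2.trans hr₂))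
  exact ⟨this.1, this.2, hv⟩

lemma measure_convex_bad_le (h : Regime m p θ μ) :
    bgMatrix θ (m + 1) p {X | (∀ i k, |X i k| ≤ p) ∧ ∃ a ∈ convexPairs m μ,
        ∑ k, μ * hTerm μ (headVec fun i => X i k) (X (Fin.last m) k) a.1 a.2 ≤
          p * (θ / 60 / 4)} ≤ ENNReal.ofReal (1 / (p : ℝ) ^ 6) := by
  have hμ := h.hμ
  have hμ1 : μ ≤ 1 := by linarith [h.mu_le, h.hθ1]
  have key : ∀ t : ℝ, |μ * t| ≤ |t| := fun t => by
    rw [abs_mul, abs_of_pos hμ]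
    exact mul_le_of_le_one_left (abs_nonneg t) hμ1
  refine h.measure_bad_le (W := fun w v x => μ * hTerm μ (headVec x) (x (Fin.last m)) w v)
    (fun a ha => h.region_of_mem_convexPairs ha)
    (fun a _ => (measurable_hTerm a.1 a.2).const_mul μ) ?_ ?_ ?_
  · intro a ha x
    obtain ⟨h1, h2, h3⟩ := h.region_of_mem_convexPairs ha
    exact (key _).trans (h.hTerm_envelope h1 h2 h3 x)
  · intro a ha
    rw [integral_const_mul]
    have hw : 32 * ‖a.1‖ ^ 2 ≤ μ ^ 2 := by
      rw [← sq_innerRadius μ]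
      have := pow_le_pow_left₀ (norm_nonneg _) ha.1 2
      linarith
    have h1 := expect_hTerm_ge h.hθ0.le h.hθ1 hμ (by linarith [h.mu_le, h.hθ1]) ha.2 hw
    have h2 := mul_le_mul_of_nonneg_left h1 hμ.le
    rw [mul_div_cancel₀ _ hμ.ne'] at h2
    linarith [h.hθ0]
  · intro a ha b hb x hx
    obtain ⟨h1, h2, h3⟩ := h.region_of_mem_convexPairs ha
    obtain ⟨h4, h5, h6⟩ := h.region_of_mem_convexPairs hb
    rw [← mul_sub]
    exact (key _).trans (h.hTerm_lip h1 h2 h3 h4 h5 h6 hx)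

lemma measure_gradient_bad_le (h : Regime m p θ μ) :
    bgMatrix θ (m + 1) p {X | (∀ i k, |X i k| ≤ p) ∧
        ∃ a ∈ radialPairs m (μ / (4 * √2)) (1 / (20 * √5)),
        ∑ k, dTerm μ (headVec fun i => X i k) (X (Fin.last m) k) a.1 a.2 ≤
          p * (θ / 60 / 4)} ≤ ENNReal.ofReal (1 / (p : ℝ) ^ 6) := by
  have hμ := h.hμ
  have hS : ∀ a ∈ radialPairs m (μ / (4 * √2)) (1 / (20 * √5)),
      ‖a.1‖ < 1 ∧ 1 / bigQ m ≤ qlast a.1 ∧ ‖a.2‖ = 1 := fun a ha =>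
    region_of_mem_radialPairs (by positivity) (middleRadius_lt_outerRadius m).le ha
  refine h.measure_bad_le (W := fun w v x => dTerm μ (headVec x) (x (Fin.last m)) w v)
    hS (fun a _ => measurable_dTerm a.1 a.2) ?_ ?_ ?_
  · intro a ha x
    obtain ⟨h1, h2, h3⟩ := hS a ha
    exact h.dTerm_envelope h1 h2 h3 x
  · rintro a ⟨hv, r, h1, h2, hr⟩
    rw [hr]
    exact expect_dTerm_ge h.hθ0.le h.hθ1 hμ hv ((mul_le_innerRadius hμ).trans h1)
      (h2.trans middleRadius_le)
  · intro a ha b hb x hx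
    obtain ⟨h1, h2, h3⟩ := hS a ha
    obtain ⟨h4, h5, h6⟩ := hS b hb
    exact h.dTerm_lip h1 h2 h3 h4 h5 h6 hx

lemma measure_curvature_bad_le (h : Regime m p θ μ) :
    bgMatrix θ (m + 1) p {X | (∀ i k, |X i k| ≤ p) ∧
        ∃ a ∈ radialPairs m (1 / (20 * √5)) (outerRadius (m + 1)),
        ∑ k, -hTerm μ (headVec fun i => X i k) (X (Fin.last m) k) a.1 a.2 ≤
          p * (θ / 60 / 4)} ≤ ENNReal.ofReal (1 / (p : ℝ) ^ 6) := by
  have hμ := h.hμ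
  have hS : ∀ a ∈ radialPairs m (1 / (20 * √5)) (outerRadius (m + 1)),
      ‖a.1‖ < 1 ∧ 1 / bigQ m ≤ qlast a.1 ∧ ‖a.2‖ = 1 := fun a ha =>
    region_of_mem_radialPairs (by positivity) le_rfl ha
  refine h.measure_bad_le (W := fun w v x => -hTerm μ (headVec x) (x (Fin.last m)) w v)
    hS (fun a _ => (measurable_hTerm a.1 a.2).neg) ?_ ?_ ?_
  · intro a ha x
    obtain ⟨h1, h2, h3⟩ := hS a ha
    rw [abs_neg]
    exact h.hTerm_envelope h1 h2 h3 x
  · rintro a ⟨hv, r, h1, h2, hr⟩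
    rw [hr]
    have hr0 : 0 ≤ r := le_trans (by positivity) h1
    have hr1 : r < 1 := h2.trans_lt (outerRadius_lt_one m)
    have hr2 : 1 ≤ 2000 * r ^ 2 := by
      have := pow_le_pow_left₀ (by positivity) h1 2
      linarith [sq_middleRadius]
    have := expect_neg_hTerm_ge h.hθ0.le h.hθ1 hμ (by linarith [h.mu_le]) hv hr2
      (by nlinarith) (h.four_mul_le.trans (one_div_bigQ_le_sqrt hr0 h2))
    linarith [h.hθ0]
  · intro a ha b hb x hx
    obtain ⟨h1, h2, h3⟩ := hS a ha
    obtain ⟨h4, h5, h6⟩ := hS b hb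
    rw [neg_sub_neg, abs_sub_comm]
    exact h.hTerm_lip h1 h2 h3 h4 h5 h6 hx

lemma measure_entry_bad_le (h : Regime m p θ μ) :
    bgMatrix θ (m + 1) p {X | ∃ i k, (p : ℝ) < |X i k|} ≤
      ENNReal.ofReal (gaussExpMoment / (p : ℝ) ^ 6) := by
  have hp := h.hp
  have hp0 : (0 : ℝ) < p := by linarith
  have hG := one_le_gaussExpMoment
  refine (bgMatrix_exists_abs_gt h.hθ0.le (by linarith [h.hθ1]) hp0.le).trans
    (ENNReal.ofReal_le_ofReal ?_)
  have h1 : exp (-((p : ℝ) ^ 2 / 8)) ≤ 1 / (p : ℝ) ^ 8 := by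
    have e : exp (-(8 * Real.log p)) = 1 / (p : ℝ) ^ 8 := by
      rw [Real.exp_neg, one_div, ← Real.exp_log hp0, ← Real.exp_nat_mul, Real.log_exp]
      norm_num
    rw [← e, Real.exp_le_exp]
    have := Real.log_le_self hp0.le
    nlinarith
  have h2 : ((m + 1 : ℕ) : ℝ) ≤ p := by
    push_cast
    exact h.hmp
  calc ((m + 1 : ℕ) : ℝ) * p * (gaussExpMoment * exp (-((p : ℝ) ^ 2 / 8)))
      ≤ p * p * (gaussExpMoment * (1 / (p : ℝ) ^ 8)) := by gcongr
    _ = _ := by field_simp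

lemma measure_norm_gradg_zero_bad_le (h : Regime m p θ μ) :
    bgMatrix θ (m + 1) p
      {X | √m * (4 * √(Real.log p / p)) < ‖gradg (m + 1) p μ (Matrix.of X) 0‖} ≤
      ENNReal.ofReal (2 / (p : ℝ) ^ 6) := by
  have hp := h.hp
  have hp0 : (0 : ℝ) < p := by linarith
  have hl : 0 ≤ Real.log p := Real.log_nonneg (by linarith)
  refine (bgMatrix_norm_gradg_zero_gt h.hθ0.le (by linarith [h.hθ1]) h.hμ.ne'
    (by exact_mod_cast hp0) (by positivity)).trans (ENNReal.ofReal_le_ofReal ?_)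
  have e : exp (-(p * ((4 * √(Real.log p / p)) ^ 2 / 2))) = 1 / (p : ℝ) ^ 8 := by
    rw [mul_pow, Real.sq_sqrt (by positivity)]
    have : (p : ℝ) * (4 ^ 2 * (Real.log p / p) / 2) = 8 * Real.log p := by
      field_simp
      ring
    rw [this, Real.exp_neg, one_div, ← Real.exp_log hp0, ← Real.exp_nat_mul, Real.log_exp]
    norm_num
  rw [e]
  have hm : (m : ℝ) ≤ p := by linarith [h.hmp]
  calc 2 * (m : ℝ) * (1 / (p : ℝ) ^ 8) ≤ 2 * p * (1 / (p : ℝ) ^ 8) := by gcongr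
    _ = 2 / (p : ℝ) ^ 7 := by field_simp
    _ ≤ 2 / (p : ℝ) ^ 6 := by
      gcongr
      · linarith
      · norm_num

end Regime

namespace Regime

variable {m p : ℕ} {θ μ : ℝ}

lemma mul_sqrt_log_div_le (h : Regime m p θ μ) :
    960 * μ / θ * √((m + 1) * Real.log p / p) ≤ μ / 16 := by
  have hp := h.hp
  have hp0 : (0 : ℝ) < p := by linarith
  have hθ := h.hθ0
  have hμ := h.hμ
  have hM := one_le_envConst
  have hl : 0 ≤ Real.log p := Real.log_nonneg (by linarith)
  have hm : (1 : ℝ) ≤ m + 1 := by linarith [(Nat.cast_nonneg m : (0 : ℝ) ≤ m)]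
  have h1 : √((m + 1) * Real.log p / p) ≤ θ / 15360 := by
    refine Real.sqrt_le_iff.2 ⟨by positivity, ?_⟩
    rw [div_le_iff₀ hp0, div_pow, div_mul_eq_mul_div, le_div_iff₀ (by norm_num)]
    have hμ2 : μ ^ 2 ≤ 1 := pow_le_one₀ hμ.le (by linarith [h.mu_le, h.hθ1])
    have h3 : (m + 1 : ℝ) ≤ (m + 1 : ℝ) ^ 3 := le_self_pow₀ hm (by norm_num)
    calc (m + 1) * Real.log p * 15360 ^ 2 ≤ (m + 1) ^ 3 * Real.log p * 10 ^ 12 := by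
          gcongr
          norm_num
      _ = 10 ^ 12 * 1 * ((m + 1) ^ 3 * Real.log p) := by ring
      _ ≤ 10 ^ 12 * envConst * ((m + 1) ^ 3 * Real.log p) := by gcongr
      _ ≤ p * (μ ^ 2 * θ ^ 2) := h.hlog
      _ ≤ p * (1 * θ ^ 2) := by gcongr
      _ = θ ^ 2 * p := by ring
  calc 960 * μ / θ * √((m + 1) * Real.log p / p) ≤ 960 * μ / θ * (θ / 15360) := by gcongr
    _ = μ / 16 := by
      field_simp
      norm_num

/-- The landscape properties hold for every sample whose empirical averages are close to their
expectations. -/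
lemma landscape_of_sum_lt (h : Regime m p θ μ) {X : Fin (m + 1) → Fin p → ℝ}
    (hconv : ∀ a ∈ convexPairs m μ, p * (θ / 60 / 4) <
      ∑ k, μ * hTerm μ (headVec fun i => X i k) (X (Fin.last m) k) a.1 a.2)
    (hgrad : ∀ a ∈ radialPairs m (μ / (4 * √2)) (1 / (20 * √5)), p * (θ / 60 / 4) <
      ∑ k, dTerm μ (headVec fun i => X i k) (X (Fin.last m) k) a.1 a.2)
    (hcurv : ∀ a ∈ radialPairs m (1 / (20 * √5)) (outerRadius (m + 1)), p * (θ / 60 / 4) <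
      ∑ k, -hTerm μ (headVec fun i => X i k) (X (Fin.last m) k) a.1 a.2)
    (hzero : ‖gradg (m + 1) p μ (Matrix.of X) 0‖ ≤ √m * (4 * √(Real.log p / p))) :
    (∀ w : EuclideanSpace ℝ (Fin m), ‖w‖ ≤ μ / (4 * √2) → ∀ v : EuclideanSpace ℝ (Fin m),
      1 / 240 * θ / μ * ‖v‖ ^ 2 ≤
        ⟪(hessg (m + 1) p μ (Matrix.of X) w v : EuclideanSpace ℝ (Fin m)), v⟫) ∧
    (∀ w : EuclideanSpace ℝ (Fin m), μ / (4 * √2) ≤ ‖w‖ → ‖w‖ ≤ 1 / (20 * √5) →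
      1 / 240 * θ ≤
        ⟪w, (gradg (m + 1) p μ (Matrix.of X) w : EuclideanSpace ℝ (Fin m))⟫ / ‖w‖) ∧
    (∀ w : EuclideanSpace ℝ (Fin m), 1 / (20 * √5) ≤ ‖w‖ → ‖w‖ ≤ outerRadius (m + 1) →
      ⟪(hessg (m + 1) p μ (Matrix.of X) w w : EuclideanSpace ℝ (Fin m)), w⟫ / ‖w‖ ^ 2 ≤
        -(1 / 240 * θ)) ∧
    ∃ w : EuclideanSpace ℝ (Fin m), ‖w‖ < outerRadius (m + 1) ∧
      IsLocalMinOn (gfun (m + 1) p μ (Matrix.of X) : EuclideanSpace ℝ (Fin m) → ℝ)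
        {w | ‖w‖ < outerRadius (m + 1)} w ∧
      ‖w‖ ≤ min (960 * μ / θ * √((m + 1) * Real.log p / p)) (μ / 16) ∧
      ∀ w' : EuclideanSpace ℝ (Fin m), ‖w'‖ < outerRadius (m + 1) →
        IsLocalMinOn (gfun (m + 1) p μ (Matrix.of X) : EuclideanSpace ℝ (Fin m) → ℝ)
          {w | ‖w‖ < outerRadius (m + 1)} w' → w' = w := by
  have hμ := h.hμ
  have hθ := h.hθ0
  have hp0 : (0 : ℝ) < p := by linarith [h.hp]
  have hρ12 := h.innerRadius_le
  have hρ23 := middleRadius_lt_outerRadius m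
  have hρ3 := outerRadius_lt_one m
  have hlog0 : 0 ≤ Real.log p := Real.log_nonneg (by linarith [h.hp])
  have havg : ∀ {s : ℝ}, p * (θ / 60 / 4) < s → 1 / 240 * θ < (p : ℝ)⁻¹ * s := by
    intro s hs
    rw [inv_mul_eq_div, lt_div_iff₀ hp0]
    linarith
  have h1 : ∀ w : EuclideanSpace ℝ (Fin m), ‖w‖ ≤ μ / (4 * √2) →
      ∀ v : EuclideanSpace ℝ (Fin m), 1 / 240 * θ / μ * ‖v‖ ^ 2 ≤
        ⟪(hessg (m + 1) p μ (Matrix.of X) w v : EuclideanSpace ℝ (Fin m)), v⟫ := by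
    intro w hw v
    by_cases hv : v = 0
    · subst hv
      simp
    obtain ⟨u, hu, hvu⟩ := exists_unit_smul hv
    have hw1 : ‖w‖ < 1 := by linarith
    have := havg (hconv (w, u) ⟨hw, hu⟩)
    rw [← Finset.mul_sum, mul_left_comm, ← (hasFDerivAt_gradg X hμ.ne' hw1).2 u] at this
    have h2 : 1 / 240 * θ / μ ≤
        ⟪(hessg (m + 1) p μ (Matrix.of X) w u : EuclideanSpace ℝ (Fin m)), u⟫ := by
      rw [div_le_iff₀ hμ]
      linarith
    have h3 : ⟪(hessg (m + 1) p μ (Matrix.of X) w v : EuclideanSpace ℝ (Fin m)), v⟫ =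
        ‖v‖ ^ 2 * ⟪(hessg (m + 1) p μ (Matrix.of X) w u : EuclideanSpace ℝ (Fin m)), u⟫ := by
      conv_lhs => rw [hvu, map_smul]
      rw [real_inner_smul_left, real_inner_smul_right]
      ring
    rw [h3, mul_comm]
    exact mul_le_mul_of_nonneg_left h2 (by positivity)
  have h2 : ∀ w : EuclideanSpace ℝ (Fin m), μ / (4 * √2) ≤ ‖w‖ → ‖w‖ ≤ 1 / (20 * √5) →
      1 / 240 * θ ≤
        ⟪w, (gradg (m + 1) p μ (Matrix.of X) w : EuclideanSpace ℝ (Fin m))⟫ / ‖w‖ := by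
    intro w hw hw'
    have hw0 : 0 < ‖w‖ := lt_of_lt_of_le (by positivity) hw
    have hw1 : ‖w‖ < 1 := by linarith
    obtain ⟨u, hu, hwu⟩ := exists_unit_smul (norm_pos_iff.1 hw0)
    have := havg (hgrad (w, u) ⟨hu, ‖w‖, hw, hw', hwu⟩)
    rw [← inner_gradg X hμ.ne' hw1 u] at this
    rw [le_div_iff₀ hw0]
    have h3 : ⟪w, (gradg (m + 1) p μ (Matrix.of X) w : EuclideanSpace ℝ (Fin m))⟫ =
        ‖w‖ * ⟪u, (gradg (m + 1) p μ (Matrix.of X) w : EuclideanSpace ℝ (Fin m))⟫ := by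
      rw [← real_inner_smul_left, ← hwu]
    rw [h3, mul_comm]
    exact mul_le_mul_of_nonneg_left this.le hw0.le
  have h3 : ∀ w : EuclideanSpace ℝ (Fin m), 1 / (20 * √5) ≤ ‖w‖ → ‖w‖ ≤ outerRadius (m + 1) →
      ⟪(hessg (m + 1) p μ (Matrix.of X) w w : EuclideanSpace ℝ (Fin m)), w⟫ / ‖w‖ ^ 2 ≤
        -(1 / 240 * θ) := by
    intro w hw hw'
    have hw0 : 0 < ‖w‖ := lt_of_lt_of_le (by positivity) hw
    have hw1 : ‖w‖ < 1 := by linarith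
    obtain ⟨u, hu, hwu⟩ := exists_unit_smul (norm_pos_iff.1 hw0)
    have := havg (hcurv (w, u) ⟨hu, ‖w‖, hw, hw', hwu⟩)
    rw [Finset.sum_neg_distrib, mul_neg, ← (hasFDerivAt_gradg X hμ.ne' hw1).2 u] at this
    have h4 : ∀ L : EuclideanSpace ℝ (Fin m) →L[ℝ] EuclideanSpace ℝ (Fin m),
        ⟪L w, w⟫ = ‖w‖ ^ 2 * ⟪L u, u⟫ := by
      intro L
      calc ⟪L w, w⟫ = ⟪L (‖w‖ • u), ‖w‖ • u⟫ := by rw [← hwu]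
        _ = _ := by
          rw [map_smul, real_inner_smul_left, real_inner_smul_right]
          ring
    rw [div_le_iff₀ (by positivity)]
    refine (h4 (hessg (m + 1) p μ (Matrix.of X) w)).trans_le ?_
    rw [mul_comm]
    exact mul_le_mul_of_nonneg_right (by linarith) (by positivity)
  refine ⟨h1, h2, h3, ?_⟩
  obtain ⟨w, hw, hmin, hnorm, huniq⟩ := exists_unique_localMin
    (g := (gfun (m + 1) p μ (Matrix.of X) : EuclideanSpace ℝ (Fin m) → ℝ))
    (G := (gradg (m + 1) p μ (Matrix.of X) : EuclideanSpace ℝ (Fin m) → EuclideanSpace ℝ (Fin m)))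
    (H := fun w => hessg (m + 1) p μ (Matrix.of X) w)
    (κ := 1 / 240 * θ / μ) (by positivity) (by positivity : 0 < μ / (4 * √2)) hρ12 hρ23 hρ3
    (fun w hw => by
      have := hasGradientAt_gfun X hμ.ne' hw
      rwa [← gradg_eq X hμ.ne' hw] at this)
    (fun w hw => (hasFDerivAt_gradg X hμ.ne' hw).1) h1
    (fun w hw hw' => by
      have hw0 : 0 < ‖w‖ := lt_of_lt_of_le (by positivity) hw
      have := h2 w hw hw'
      rw [le_div_iff₀ hw0] at this
      exact lt_of_lt_of_le (by positivity) this)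
    (fun w hw hw' => by
      have hw0 : 0 < ‖w‖ := lt_of_lt_of_le (by positivity) hw
      have := h3 w hw hw'
      rw [div_le_iff₀ (by positivity)] at this
      refine lt_of_le_of_lt this ?_
      rw [neg_mul]
      exact neg_lt_zero.2 (by positivity))
  refine ⟨w, hw, hmin, ?_, huniq⟩
  have hb : ‖w‖ ≤ 960 * μ / θ * √((m + 1) * Real.log p / p) := by
    refine hnorm.trans ?_
    rw [div_le_iff₀ (by positivity)]
    refine hzero.trans ?_
    have e : √(m : ℝ) * √(Real.log p / p) ≤ √((m + 1) * Real.log p / p) := by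
      rw [← Real.sqrt_mul (Nat.cast_nonneg m), mul_div_assoc]
      refine Real.sqrt_le_sqrt ?_
      gcongr
      linarith
    calc √(m : ℝ) * (4 * √(Real.log p / p)) = 4 * (√(m : ℝ) * √(Real.log p / p)) := by ring
      _ ≤ 4 * √((m + 1) * Real.log p / p) := by gcongr
      _ = 960 * μ / θ * √((m + 1) * Real.log p / p) * (1 / 240 * θ / μ) := by
        field_simp
        ring
  exact le_min hb (hb.trans h.mul_sqrt_log_div_le)

/-- The landscape properties hold with high probability. -/
lemma ofReal_le_bgMatrix (h : Regime m p θ μ) {good : Set (Fin (m + 1) → Fin p → ℝ)}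
    (hgood : ∀ X : Fin (m + 1) → Fin p → ℝ,
      (∀ a ∈ convexPairs m μ, p * (θ / 60 / 4) <
        ∑ k, μ * hTerm μ (headVec fun i => X i k) (X (Fin.last m) k) a.1 a.2) →
      (∀ a ∈ radialPairs m (μ / (4 * √2)) (1 / (20 * √5)), p * (θ / 60 / 4) <
        ∑ k, dTerm μ (headVec fun i => X i k) (X (Fin.last m) k) a.1 a.2) →
      (∀ a ∈ radialPairs m (1 / (20 * √5)) (outerRadius (m + 1)), p * (θ / 60 / 4) <
        ∑ k, -hTerm μ (headVec fun i => X i k) (X (Fin.last m) k) a.1 a.2) →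
      ‖gradg (m + 1) p μ (Matrix.of X) 0‖ ≤ √m * (4 * √(Real.log p / p)) → X ∈ good) :
    ENNReal.ofReal (1 - (5 + gaussExpMoment) / (p : ℝ) ^ 6) ≤ bgMatrix θ (m + 1) p good := by
  have hp0 : (0 : ℝ) < p := by linarith [h.hp]
  have hG := one_le_gaussExpMoment
  have := isProbabilityMeasure_bg h.hθ0.le (by linarith [h.hθ1] : θ ≤ 1)
  have hprob : IsProbabilityMeasure (bgMatrix θ (m + 1) p) := by
    unfold bgMatrix
    infer_instance
  set bad₁ := {X : Fin (m + 1) → Fin p → ℝ | (∀ i k, |X i k| ≤ p) ∧ ∃ a ∈ convexPairs m μ,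
    ∑ k, μ * hTerm μ (headVec fun i => X i k) (X (Fin.last m) k) a.1 a.2 ≤ p * (θ / 60 / 4)}
    with hb₁
  set bad₂ := {X : Fin (m + 1) → Fin p → ℝ | (∀ i k, |X i k| ≤ p) ∧
    ∃ a ∈ radialPairs m (μ / (4 * √2)) (1 / (20 * √5)),
    ∑ k, dTerm μ (headVec fun i => X i k) (X (Fin.last m) k) a.1 a.2 ≤ p * (θ / 60 / 4)} with hb₂
  set bad₃ := {X : Fin (m + 1) → Fin p → ℝ | (∀ i k, |X i k| ≤ p) ∧
    ∃ a ∈ radialPairs m (1 / (20 * √5)) (outerRadius (m + 1)),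
    ∑ k, -hTerm μ (headVec fun i => X i k) (X (Fin.last m) k) a.1 a.2 ≤ p * (θ / 60 / 4)} with hb₃
  set bad₄ := {X : Fin (m + 1) → Fin p → ℝ | ∃ i k, (p : ℝ) < |X i k|} with hb₄
  set bad₅ := {X : Fin (m + 1) → Fin p → ℝ |
    √m * (4 * √(Real.log p / p)) < ‖gradg (m + 1) p μ (Matrix.of X) 0‖} with hb₅
  have hcover : (Set.univ : Set (Fin (m + 1) → Fin p → ℝ)) ⊆
      good ∪ (bad₁ ∪ (bad₂ ∪ (bad₃ ∪ (bad₄ ∪ bad₅)))) := by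
    intro X _
    by_contra hX
    simp only [Set.mem_union, not_or] at hX
    obtain ⟨hg, h1, h2, h3, h4, h5⟩ := hX
    simp only [hb₄, Set.mem_ofPred_eq, not_exists, not_lt] at h4
    simp only [hb₁, Set.mem_ofPred_eq, not_and, not_exists, not_le] at h1
    simp only [hb₂, Set.mem_ofPred_eq, not_and, not_exists, not_le] at h2
    simp only [hb₃, Set.mem_ofPred_eq, not_and, not_exists, not_le] at h3
    simp only [hb₅, Set.mem_ofPred_eq, not_lt] at h5
    exact hg (hgood X (h1 h4) (h2 h4) (h3 h4) h5)
  have hle : (1 : ℝ≥0∞) ≤ bgMatrix θ (m + 1) p good +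
      ENNReal.ofReal ((5 + gaussExpMoment) / (p : ℝ) ^ 6) := by
    have hsum : ENNReal.ofReal ((5 + gaussExpMoment) / (p : ℝ) ^ 6) =
        ENNReal.ofReal (1 / (p : ℝ) ^ 6) + (ENNReal.ofReal (1 / (p : ℝ) ^ 6) +
          (ENNReal.ofReal (1 / (p : ℝ) ^ 6) + (ENNReal.ofReal (gaussExpMoment / (p : ℝ) ^ 6) +
            ENNReal.ofReal (2 / (p : ℝ) ^ 6)))) := by
      rw [← ENNReal.ofReal_add (by positivity) (by positivity),
        ← ENNReal.ofReal_add (by positivity) (by positivity),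
        ← ENNReal.ofReal_add (by positivity) (by positivity),
        ← ENNReal.ofReal_add (by positivity) (by positivity)]
      congr 1
      ring
    rw [← hprob.measure_univ, hsum]
    refine (measure_mono hcover).trans ((measure_union_le _ _).trans (add_le_add le_rfl ?_))
    refine (measure_union_le _ _).trans (add_le_add h.measure_convex_bad_le ?_)
    refine (measure_union_le _ _).trans (add_le_add h.measure_gradient_bad_le ?_)
    refine (measure_union_le _ _).trans (add_le_add h.measure_curvature_bad_le ?_)
    exact (measure_union_le _ _).trans
      (add_le_add h.measure_entry_bad_le h.measure_norm_gradg_zero_bad_le)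
  rw [ENNReal.ofReal_sub _ (by positivity), ENNReal.ofReal_one]
  exact tsub_le_iff_right.2 hle

end Regime

/-- Theorem: high-dimensional landscape, orthogonal dictionary. -/
theorem statement0 :
    ∃ cstar C ca cb cc : ℝ, 0 < cstar ∧ 0 < C ∧ 0 < ca ∧ 0 < cb ∧ 0 < cc ∧
      ∀ (n p : ℕ) (θ μ : ℝ), 2 ≤ n → θ ∈ Set.Ioo (0 : ℝ) (1 / 2) → 0 < μ →
        μ < ca * min (θ / n) ((n : ℝ) ^ (-(5 : ℝ) / 4)) →
        C / (μ ^ 2 * θ ^ 2) * (n : ℝ) ^ 3 * Real.log ((n : ℝ) / (μ * θ)) ≤ (p : ℝ) →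
        ENNReal.ofReal (1 - cb / (p : ℝ) ^ 6) ≤
          bgMatrix θ n p
            {X | (∀ w : EuclideanSpace ℝ (Fin (n - 1)), ‖w‖ ≤ μ / (4 * Real.sqrt 2) →
                    ∀ v : EuclideanSpace ℝ (Fin (n - 1)),
                      cstar * θ / μ * ‖v‖ ^ 2 ≤ ⟪hessg n p μ (Matrix.of X) w v, v⟫) ∧
                 (∀ w : EuclideanSpace ℝ (Fin (n - 1)),
                    μ / (4 * Real.sqrt 2) ≤ ‖w‖ → ‖w‖ ≤ 1 / (20 * Real.sqrt 5) →
                      cstar * θ ≤ ⟪w, gradg n p μ (Matrix.of X) w⟫ / ‖w‖) ∧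
                 (∀ w : EuclideanSpace ℝ (Fin (n - 1)),
                    1 / (20 * Real.sqrt 5) ≤ ‖w‖ →
                    ‖w‖ ≤ Real.sqrt ((4 * (n : ℝ) - 1) / (4 * n)) →
                      ⟪hessg n p μ (Matrix.of X) w w, w⟫ / ‖w‖ ^ 2 ≤ -(cstar * θ)) ∧
                 (∃ wstar : EuclideanSpace ℝ (Fin (n - 1)),
                    wstar ∈ GammaSet n ∧
                    IsLocalMinOn (gfun n p μ (Matrix.of X)) (GammaSet n) wstar ∧
                    ‖wstar‖ ≤
                      min (cc * μ / θ * Real.sqrt ((n : ℝ) * Real.log p / p)) (μ / 16) ∧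
                    ∀ w' ∈ GammaSet n,
                      IsLocalMinOn (gfun n p μ (Matrix.of X)) (GammaSet n) w' → w' = wstar)} := by
  have hM := one_le_envConst
  have hG := one_le_gaussExpMoment
  refine ⟨1 / 240, (4 * (10 ^ 12 * envConst)) ^ 4, 1 / 64000, 5 + gaussExpMoment, 960,
    by norm_num, by positivity, by norm_num, by positivity, by norm_num, ?_⟩
  intro n p θ μ hn hθ hμ hμc hp
  obtain ⟨m, rfl⟩ : ∃ m, n = m + 1 := ⟨n - 1, by omega⟩
  have hm0 : (0 : ℝ) < m + 1 := by positivity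
  have hμθ : 64000 * (m + 1) * μ ≤ θ := by
    have h1 : μ < 1 / 64000 * (θ / ((m + 1 : ℕ) : ℝ)) :=
      hμc.trans_le (mul_le_mul_of_nonneg_left (min_le_left _ _) (by norm_num))
    rw [Nat.cast_add_one, ← mul_div_assoc, lt_div_iff₀ hm0] at h1
    linarith
  rw [Nat.cast_add_one] at hp
  have h : Regime m p θ μ := regime_of_le (by omega) hθ.1 hθ.2.le hμ hμθ hp
  refine h.ofReal_le_bgMatrix fun X h1 h2 h3 h4 => ?_
  obtain ⟨r1, r2, r3, w, hw, hmin, hnorm, huniq⟩ := h.landscape_of_sum_lt h1 h2 h3 h4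
  rw [← Nat.cast_add_one] at hnorm
  exact ⟨r1, r2, r3, w, hw, hmin, hnorm, fun w' hw' => huniq w' hw'⟩

end
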